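/- arXiv:2102.12035 — 2 statements merged into one kernel-verified Lean document; each statement's English description precedes it below -/
import Mathlib

section
/- Theorem 1 (Inner bound). Suppose there are finite sets 𝒯,𝒰₁,𝒰₂ and a pmf of the form p(x₁,x₂,z,t,u₁,u₂,y) = q(x₁,x₂,z) p(t) p(u₁|x₁,t) p(u₂|x₂,t) p(y|u₁,u₂,z,t) satisfying ∑_{u₁,u₂} p(x₁,x₂,z,u₁,u₂,y|t) = q(x₁,x₂,z,y) for every t, such that R₁ ≥ I(U₁;X₁|U₂,Z,T), R₂ ≥ I(U₂;X₂|U₁,Z,T), R₁+R₂ ≥ I(U₁,U₂;X₁,X₂|Z,T), R₁+R₀₁ ≥ I(U₁;X₁,X₂,Y|Z,T) − I(U₁;U₂|Z,T), R₂+R₀₂ ≥ I(U₂;X₁,X₂,Y|Z,T) − I(U₁;U₂|Z,T), R₁+R₂+R₀₁ ≥ I(U₁;X₁,X₂,Y|Z,T) + I(U₂;X₂|U₁,Z,T), R₁+R₂+R₀₂ ≥ I(U₂;X₁,X₂,Y|Z,T) + I(U₁;X₁|U₂,Z,T), and R₁+R₂+R₀₁+R₀₂ ≥ I(U₁,U₂;X₁,X₂,Y|Z,T).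 Then the rate tuple (R₁,R₂,R₀₁,R₀₂) lies in R_MAC-coord. -/
open Finset

/-- A probability mass function on a finite type. -/
def IsPMF {α : Type*} [Fintype α] (p : α → ℝ) : Prop :=
  (∀ a, 0 ≤ p a) ∧ ∑ a, p a = 1

/-- Marginal (pushforward) of a pmf `p` on `Ω` under the map `f`. -/
noncomputable def marg {Ω β : Type*} [Fintype Ω] [DecidableEq β]
    (p : Ω → ℝ) (f : Ω → β) (b : β) : ℝ :=
  ∑ ω : Ω, if f ω = b then p ω else 0

/-- Shannon entropy (in bits) of a pmf given as a function. -/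
noncomputable def entPMF {β : Type*} [Fintype β] (r : β → ℝ) : ℝ :=
  -∑ b : β, r b * Real.logb 2 (r b)

/-- Entropy (in bits) of the random variable `f` under the joint pmf `p`. -/
noncomputable def ent {Ω β : Type*} [Fintype Ω] [Fintype β] [DecidableEq β]
    (p : Ω → ℝ) (f : Ω → β) : ℝ :=
  entPMF (fun b => marg p f b)

/-- Conditional entropy `H(f | g)`. -/
noncomputable def condEnt {Ω β γ : Type*} [Fintype Ω] [Fintype β] [Fintype γ]
    [DecidableEq β] [DecidableEq γ] (p : Ω → ℝ) (f : Ω → β) (g : Ω → γ) : ℝ :=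
  ent p (fun ω => (f ω, g ω)) - ent p g

/-- Mutual information `I(f ; g)`. -/
noncomputable def mi {Ω β γ : Type*} [Fintype Ω] [Fintype β] [Fintype γ]
    [DecidableEq β] [DecidableEq γ] (p : Ω → ℝ) (f : Ω → β) (g : Ω → γ) : ℝ :=
  ent p f + ent p g - ent p (fun ω => (f ω, g ω))

/-- Conditional mutual information `I(f ; g | h)`. -/
noncomputable def cmi {Ω β γ δ : Type*} [Fintype Ω] [Fintype β] [Fintype γ] [Fintype δ]
    [DecidableEq β] [DecidableEq γ] [DecidableEq δ]
    (p : Ω → ℝ) (f : Ω → β) (g : Ω → γ) (h : Ω → δ) : ℝ :=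
  ent p (fun ω => (f ω, h ω)) + ent p (fun ω => (g ω, h ω))
    - ent p (fun ω => (f ω, g ω, h ω)) - ent p h

/-- Number of messages/shared-randomness values at rate `R` and blocklength `n`. -/
noncomputable def cnum (n : ℕ) (R : ℝ) : ℕ := Nat.ceil ((2 : ℝ) ^ ((n : ℝ) * R))

/-- A `(2^{nR01}, 2^{nR02}, 2^{nR1}, 2^{nR2}, n)` code: two randomized encoders and a
randomized decoder. -/
structure MACCode (X1 X2 Z Y : Type) [Fintype X1] [Fintype X2] [Fintype Z] [Fintype Y]
    (n : ℕ) (R1 R2 R01 R02 : ℝ) where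
  enc1 : Fin (cnum n R01) → (Fin n → X1) → Fin (cnum n R1) → ℝ
  enc2 : Fin (cnum n R02) → (Fin n → X2) → Fin (cnum n R2) → ℝ
  dec : Fin (cnum n R01) → Fin (cnum n R02) → Fin (cnum n R1) → Fin (cnum n R2) →
      (Fin n → Z) → (Fin n → Y) → ℝ
  enc1_pmf : ∀ s x, IsPMF (enc1 s x)
  enc2_pmf : ∀ s x, IsPMF (enc2 s x)
  dec_pmf : ∀ s1 s2 m1 m2 z, IsPMF (dec s1 s2 m1 m2 z)

/-- The `(X₁,X₂,Z)`-marginal of `q`. -/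
noncomputable def margXXZ {X1 X2 Z Y : Type} [Fintype Y] (q : X1 × X2 × Z × Y → ℝ) :
    X1 × X2 × Z → ℝ :=
  fun a => ∑ y : Y, q (a.1, a.2.1, a.2.2, y)

/-- The joint pmf on `(X₁ⁿ, X₂ⁿ, Zⁿ, Yⁿ)` induced by a code, with sources i.i.d. `q3`
and the shared randomness uniform and independent of everything else. -/
noncomputable def inducedPMF {X1 X2 Z Y : Type} [Fintype X1] [Fintype X2] [Fintype Z] [Fintype Y]
    (q3 : X1 × X2 × Z → ℝ) {n : ℕ} {R1 R2 R01 R02 : ℝ}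
    (C : MACCode X1 X2 Z Y n R1 R2 R01 R02) :
    ((Fin n → X1) × (Fin n → X2) × (Fin n → Z) × (Fin n → Y)) → ℝ :=
  fun w =>
    ∑ s1 : Fin (cnum n R01), ∑ s2 : Fin (cnum n R02),
      ∑ m1 : Fin (cnum n R1), ∑ m2 : Fin (cnum n R2),
        ((cnum n R01 : ℝ) * (cnum n R02 : ℝ))⁻¹ *
          (∏ i : Fin n, q3 (w.1 i, w.2.1 i, w.2.2.1 i)) *
          C.enc1 s1 w.1 m1 * C.enc2 s2 w.2.1 m2 *
          C.dec s1 s2 m1 m2 w.2.2.1 w.2.2.2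

/-- The `n`-fold i.i.d. product of `q` on sequences. -/
noncomputable def iidPMF {X1 X2 Z Y : Type} (q : X1 × X2 × Z × Y → ℝ) (n : ℕ) :
    ((Fin n → X1) × (Fin n → X2) × (Fin n → Z) × (Fin n → Y)) → ℝ :=
  fun w => ∏ i : Fin n, q (w.1 i, w.2.1 i, w.2.2.1 i, w.2.2.2 i)

/-- Total variation distance between two pmfs on a finite type. -/
noncomputable def tvDist {α : Type*} [Fintype α] (p q : α → ℝ) : ℝ :=
  (1 / 2 : ℝ) * ∑ a : α, |p a - q a|

/-- Achievability of a rate tuple `(R₁, R₂, R₀₁, R₀₂)` for the distribution `q`. -/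
def Achievable {X1 X2 Z Y : Type} [Fintype X1] [Fintype X2] [Fintype Z] [Fintype Y]
    (q : X1 × X2 × Z × Y → ℝ) (R1 R2 R01 R02 : ℝ) : Prop :=
  ∃ C : (n : ℕ) → MACCode X1 X2 Z Y n R1 R2 R01 R02,
    Filter.Tendsto (fun n => tvDist (inducedPMF (margXXZ q) (C n)) (iidPMF q n))
      Filter.atTop (nhds 0)

/-- The rate region `R_MAC-coord`: the closure of the set of achievable rate tuples. -/
def RMACcoord {X1 X2 Z Y : Type} [Fintype X1] [Fintype X2] [Fintype Z] [Fintype Y]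
    (q : X1 × X2 × Z × Y → ℝ) : Set (ℝ × ℝ × ℝ × ℝ) :=
  closure {r : ℝ × ℝ × ℝ × ℝ | Achievable q r.1 r.2.1 r.2.2.1 r.2.2.2}

section Proj

variable {X1 X2 Z T U1 U2 Y : Type*}

/-- Coordinate projections on the single-letter joint alphabet
`X₁ × X₂ × Z × T × U₁ × U₂ × Y`. -/
def vX1 : X1 × X2 × Z × T × U1 × U2 × Y → X1 := fun ω => ω.1
def vX2 : X1 × X2 × Z × T × U1 × U2 × Y → X2 := fun ω => ω.2.1
def vZ : X1 × X2 × Z × T × U1 × U2 × Y → Z := fun ω => ω.2.2.1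
def vT : X1 × X2 × Z × T × U1 × U2 × Y → T := fun ω => ω.2.2.2.1
def vU1 : X1 × X2 × Z × T × U1 × U2 × Y → U1 := fun ω => ω.2.2.2.2.1
def vU2 : X1 × X2 × Z × T × U1 × U2 × Y → U2 := fun ω => ω.2.2.2.2.2.1
def vY : X1 × X2 × Z × T × U1 × U2 × Y → Y := fun ω => ω.2.2.2.2.2.2

end Proj

/-!
Output statistics of random binning. Each auxiliary variable `Uᵢⁿ` is thrown into random bins, whose
index has three parts `(sᵢ, fᵢ, mᵢ)`: the shared randomness, an index that will be frozen, and the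
message. If `(sᵢ, fᵢ)` has rate below `H(Uᵢ|Xᵢ,T)`, it is nearly uniform given what encoder `i`
observes, so the encoder may draw `mᵢ` from its conditional law given `(sᵢ, fᵢ, Xᵢⁿ)`. If all the
indices together have rates in the Slepian–Wolf region given `(Z,T)`, the decoder recovers
`(U₁ⁿ,U₂ⁿ)` and draws `Yⁿ` from the target channel. If `(f₁, f₂)` has rates small enough compared to
the entropies given `(X₁,X₂,Z,T,Y)`, it is nearly independent of sources and output, so that fixing
good bin maps and good values of `f₁` and `f₂` leaves the joint law almost unchanged. Likewise `Tⁿ`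
can be fixed, because the target law is the same given every value of `T`. Eliminating the rates of
`f₁` and `f₂` yields the eight inequalities; the terminals reduce surplus shared randomness to a
nearly uniform bin index.
-/

/-! ### Expectations and probabilities -/

open Classical in
/-- The real-valued indicator of a proposition. It is classical, so that no decidability instance
appears in the statements below. -/
noncomputable def ind (p : Prop) : ℝ := if p then 1 else 0

section Ind

variable {p r : Prop}

lemma ind_of (h : p) : ind p = 1 := if_pos h

lemma ind_not (h : ¬p) : ind p = 0 := if_neg h

lemma ind_nonneg (p : Prop) : 0 ≤ ind p := by
  unfold ind; split_ifs <;> norm_num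

lemma ind_mono (h : p → r) : ind p ≤ ind r := by
  by_cases hp : p
  · rw [ind_of hp, ind_of (h hp)]
  · rw [ind_not hp]; exact ind_nonneg r

lemma ind_congr (h : p ↔ r) : ind p = ind r := by rw [propext h]

lemma ind_and (p r : Prop) : ind (p ∧ r) = ind p * ind r := by
  by_cases hp : p <;> by_cases hr : r <;> simp [ind, hp, hr]

lemma ind_mul_congr {a b : ℝ} (h : p → a = b) : ind p * a = ind p * b := by
  by_cases hp : p
  · rw [h hp]
  · rw [ind_not hp, zero_mul, zero_mul]

lemma ind_or_le (p r : Prop) : ind (p ∨ r) ≤ ind p + ind r := by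
  by_cases hp : p <;> by_cases hr : r <;> simp [ind, hp, hr]

lemma ind_exists_le {ι : Type*} [Fintype ι] (s : ι → Prop) : ind (∃ i, s i) ≤ ∑ i, ind (s i) := by
  by_cases h : ∃ i, s i
  · obtain ⟨i, hi⟩ := h
    rw [ind_of ⟨i, hi⟩, ← ind_of hi]
    exact single_le_sum (f := fun i => ind (s i)) (fun _ _ => ind_nonneg _) (mem_univ i)
  · rw [ind_not h]
    exact sum_nonneg fun _ _ => ind_nonneg _

lemma ind_forall {ι : Type*} [Fintype ι] (s : ι → Prop) : ind (∀ i, s i) = ∏ i, ind (s i) := by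
  by_cases h : ∀ i, s i
  · rw [ind_of h, prod_eq_one fun i _ => ind_of (h i)]
  · obtain ⟨i, hi⟩ := not_forall.mp h
    rw [ind_not h, prod_eq_zero (mem_univ i) (ind_not hi)]

lemma sum_ind_eq_mul {K : Type*} [Fintype K] (a : K) (F : K → ℝ) :
    ∑ k, ind (a = k) * F k = F a := by
  classical simp [ind]

lemma sum_ind_eq {K : Type*} [Fintype K] (a : K) : ∑ k, ind (a = k) = 1 := by
  simpa using sum_ind_eq_mul a fun _ => 1

end Ind

/-- The expectation of `F` when the outcome has the weights `P`. -/
noncomputable def avg {Ω : Type*} [Fintype Ω] (P F : Ω → ℝ) : ℝ := ∑ ω, P ω * F ω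

/-- The probability of the event `E` when the outcome has the weights `P`. -/
noncomputable def prob {Ω : Type*} [Fintype Ω] (P : Ω → ℝ) (E : Ω → Prop) : ℝ :=
  avg P fun ω => ind (E ω)

/-- The uniform law on `K`. -/
noncomputable def unif (K : Type*) [Fintype K] : K → ℝ := fun _ => (Fintype.card K : ℝ)⁻¹

section Avg

variable {Ω Ω' : Type*} [Fintype Ω] [Fintype Ω'] {P : Ω → ℝ} {Q : Ω' → ℝ}

lemma avg_add (P F G : Ω → ℝ) : avg P (fun ω => F ω + G ω) = avg P F + avg P G := by
  simp only [avg, mul_add, sum_add_distrib]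

lemma avg_sub (P F G : Ω → ℝ) : avg P (fun ω => F ω - G ω) = avg P F - avg P G := by
  simp only [avg, mul_sub, sum_sub_distrib]

lemma avg_const_mul (P : Ω → ℝ) (c : ℝ) (F : Ω → ℝ) :
    avg P (fun ω => c * F ω) = c * avg P F := by
  simp only [avg, mul_sum, mul_left_comm]

lemma avg_mul_const (P : Ω → ℝ) (c : ℝ) (F : Ω → ℝ) :
    avg P (fun ω => F ω * c) = avg P F * c := by
  simp only [avg, sum_mul, mul_assoc]

lemma avg_sum {ι : Type*} [Fintype ι] (P : Ω → ℝ) (F : ι → Ω → ℝ) :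
    avg P (fun ω => ∑ i, F i ω) = ∑ i, avg P (F i) := by
  simp only [avg, mul_sum]
  exact sum_comm

lemma avg_comm (P : Ω → ℝ) (Q : Ω' → ℝ) (F : Ω → Ω' → ℝ) :
    avg P (fun a => avg Q (F a)) = avg Q fun b => avg P fun a => F a b := by
  simp only [avg, mul_sum]
  rw [sum_comm]
  simp only [mul_left_comm]

lemma avg_avg_avg_comm {Ω'' : Type*} [Fintype Ω''] (P : Ω → ℝ) (Q : Ω' → ℝ) (R : Ω'' → ℝ)
    (F : Ω → Ω' → Ω'' → ℝ) :
    avg P (fun a => avg Q fun b => avg R (F a b)) =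
      avg R fun c => avg P fun a => avg Q fun b => F a b c := by
  rw [avg_comm R]
  exact congrArg (avg P) (funext fun a => avg_comm Q R _)

lemma sq_avg (P F : Ω → ℝ) : avg P F ^ 2 = avg P fun a => avg P fun b => F a * F b := by
  simp only [avg_const_mul, avg_mul_const, sq]

lemma avg_prod (P : Ω → ℝ) (Q : Ω' → ℝ) (F : Ω × Ω' → ℝ) :
    avg (fun x => P x.1 * Q x.2) F = avg P fun a => avg Q fun b => F (a, b) := by
  simp only [avg, Fintype.sum_prod_type, mul_sum, mul_assoc]

lemma avg_mixture (P : Ω → ℝ) (κ : Ω → Ω' → ℝ) (F : Ω' → ℝ) :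
    avg (fun b => avg P fun a => κ a b) F = avg P fun a => avg (κ a) F := by
  simp only [avg, sum_mul, mul_sum, mul_assoc]
  exact sum_comm

lemma avg_mono (hP : ∀ ω, 0 ≤ P ω) {F G : Ω → ℝ} (h : ∀ ω, 0 < P ω → F ω ≤ G ω) :
    avg P F ≤ avg P G := by
  refine sum_le_sum fun ω _ => ?_
  rcases (hP ω).eq_or_lt with h0 | hω
  · simp [← h0]
  · exact mul_le_mul_of_nonneg_left (h ω hω) hω.le

lemma avg_nonneg (hP : ∀ ω, 0 ≤ P ω) {F : Ω → ℝ} (h : ∀ ω, 0 ≤ F ω) : 0 ≤ avg P F :=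
  sum_nonneg fun ω _ => mul_nonneg (hP ω) (h ω)

lemma abs_avg_le (hP : ∀ ω, 0 ≤ P ω) (F : Ω → ℝ) : |avg P F| ≤ avg P fun ω => |F ω| := by
  refine (abs_sum_le_sum_abs _ _).trans_eq (sum_congr rfl fun ω _ => ?_)
  rw [abs_mul, abs_of_nonneg (hP ω)]

lemma avg_comp_equiv (e : Ω' ≃ Ω) (P F : Ω → ℝ) : avg (P ∘ e) (F ∘ e) = avg P F :=
  e.sum_comp fun ω => P ω * F ω

lemma IsPMF.avg_const (hP : IsPMF P) (c : ℝ) : avg P (fun _ => c) = c := by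
  rw [avg, ← sum_mul, hP.2, one_mul]

lemma IsPMF.abs_avg_le_one (hP : IsPMF P) {F : Ω → ℝ} (hF : ∀ ω, |F ω| ≤ 1) : |avg P F| ≤ 1 :=
  (abs_avg_le hP.1 F).trans <| (avg_mono hP.1 fun ω _ => hF ω).trans_eq (hP.avg_const 1)

lemma IsPMF.exists_le_of_avg_le (hP : IsPMF P) {F : Ω → ℝ} {c : ℝ} (h : avg P F ≤ c) :
    ∃ ω, F ω ≤ c := by
  by_contra! hc
  obtain ⟨ω₀, -, hω₀⟩ : ∃ ω ∈ univ, P ω ≠ 0 :=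
    exists_ne_zero_of_sum_ne_zero (by rw [hP.2]; exact one_ne_zero)
  have : avg P (fun _ => c) < avg P F :=
    sum_lt_sum (fun ω _ => mul_le_mul_of_nonneg_left (hc ω).le (hP.1 ω))
      ⟨ω₀, mem_univ _, mul_lt_mul_of_pos_left (hc ω₀) ((hP.1 ω₀).lt_of_ne' hω₀)⟩
  rw [hP.avg_const] at this
  exact this.not_ge h

lemma IsPMF.sq_avg_le (hP : IsPMF P) (F : Ω → ℝ) : avg P F ^ 2 ≤ avg P fun ω => F ω ^ 2 := by
  have h : 0 ≤ avg P fun ω => (F ω - avg P F) ^ 2 := avg_nonneg hP.1 fun _ => sq_nonneg _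
  have e : ∀ ω, (F ω - avg P F) ^ 2 = F ω ^ 2 - 2 * avg P F * F ω + avg P F ^ 2 := fun ω => by
    ring
  simp only [e, avg_add, avg_sub, avg_const_mul, hP.avg_const] at h
  linarith

lemma IsPMF.avg_abs_le_sqrt (hP : IsPMF P) (F : Ω → ℝ) :
    avg P (fun ω => |F ω|) ≤ √(avg P fun ω => F ω ^ 2) := by
  refine Real.le_sqrt_of_sq_le ((hP.sq_avg_le _).trans_eq ?_)
  simp only [sq_abs]

lemma IsPMF.prod (hP : IsPMF P) (hQ : IsPMF Q) : IsPMF fun x : Ω × Ω' => P x.1 * Q x.2 := by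
  refine ⟨fun x => mul_nonneg (hP.1 _) (hQ.1 _), ?_⟩
  simp only [Fintype.sum_prod_type, ← mul_sum, hQ.2, mul_one, hP.2]

lemma avg_pi_prod {ι α : Type*} [Fintype ι] [DecidableEq ι] [Fintype α] (P F : ι → α → ℝ) :
    avg (fun x : ι → α => ∏ i, P i (x i)) (fun x => ∏ i, F i (x i)) = ∏ i, avg (P i) (F i) := by
  simp only [avg, ← prod_mul_distrib, Fintype.prod_sum]

lemma IsPMF.pi {ι α : Type*} [Fintype ι] [DecidableEq ι] [Fintype α] {P : ι → α → ℝ}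
    (hP : ∀ i, IsPMF (P i)) : IsPMF fun x : ι → α => ∏ i, P i (x i) := by
  refine ⟨fun x => prod_nonneg fun i _ => (hP i).1 _, ?_⟩
  rw [← Fintype.prod_sum, prod_eq_one fun i _ => (hP i).2]

lemma isPMF_unif (K : Type*) [Fintype K] [Nonempty K] : IsPMF (unif K) := by
  refine ⟨fun _ => by unfold unif; positivity, ?_⟩
  simp [unif]

lemma avg_unif_ind_eq {K : Type*} [Fintype K] (k : K) :
    avg (unif K) (fun x => ind (x = k)) = (Fintype.card K : ℝ)⁻¹ := by
  classical simp [avg, unif, ind]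

lemma avg_unif_prod (K L : Type*) [Fintype K] [Fintype L] (F : K × L → ℝ) :
    avg (unif (K × L)) F = avg (unif K) fun k => avg (unif L) fun l => F (k, l) := by
  have h : unif (K × L) = fun x => unif K x.1 * unif L x.2 := funext fun _ => by
    simp only [unif, Fintype.card_prod, Nat.cast_mul, mul_inv]
  rw [h, avg_prod]

lemma avg_unif_comp_fst (K L : Type*) [Fintype K] [Fintype L] [Nonempty L] (F : K → ℝ) :
    avg (unif (K × L)) (fun x => F x.1) = avg (unif K) F := by
  simp only [avg_unif_prod, (isPMF_unif L).avg_const]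

lemma avg_unif_comp_snd (K L : Type*) [Fintype K] [Fintype L] [Nonempty K] (F : L → ℝ) :
    avg (unif (K × L)) (fun x => F x.2) = avg (unif L) F := by
  simp only [avg_unif_prod, (isPMF_unif K).avg_const]

lemma IsPMF.nonempty (hP : IsPMF P) : Nonempty Ω :=
  not_isEmpty_iff.mp fun _ => by simpa using hP.2

end Avg

section Prob

variable {Ω β γ : Type*} [Fintype Ω] {P : Ω → ℝ}

lemma prob_nonneg (hP : ∀ ω, 0 ≤ P ω) (E : Ω → Prop) : 0 ≤ prob P E :=
  avg_nonneg hP fun _ => ind_nonneg _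

lemma prob_mono (hP : ∀ ω, 0 ≤ P ω) {E E' : Ω → Prop} (h : ∀ ω, 0 < P ω → E ω → E' ω) :
    prob P E ≤ prob P E' :=
  avg_mono hP fun ω hω => ind_mono (h ω hω)

lemma prob_congr {E E' : Ω → Prop} (h : ∀ ω, E ω ↔ E' ω) : prob P E = prob P E' := by
  rw [funext fun ω => propext (h ω)]

lemma prob_or_le (hP : ∀ ω, 0 ≤ P ω) (E E' : Ω → Prop) :
    prob P (fun ω => E ω ∨ E' ω) ≤ prob P E + prob P E' :=
  (avg_mono hP fun _ _ => ind_or_le _ _).trans_eq (avg_add _ _ _)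

lemma le_prob (hP : ∀ ω, 0 ≤ P ω) {E : Ω → Prop} {ω : Ω} (h : E ω) : P ω ≤ prob P E :=
  calc P ω = P ω * ind (E ω) := by rw [ind_of h, mul_one]
    _ ≤ prob P E := single_le_sum (f := fun ω => P ω * ind (E ω))
        (fun ω _ => mul_nonneg (hP ω) (ind_nonneg _)) (mem_univ ω)

/-- The law of the random variable `f`. Unlike `marg`, it does not need decidable equality. -/
noncomputable def lawOf (P : Ω → ℝ) (f : Ω → β) : β → ℝ := fun b => prob P (f · = b)

lemma marg_eq_lawOf [DecidableEq β] (P : Ω → ℝ) (f : Ω → β) : marg P f = lawOf P f := by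
  refine funext fun b => sum_congr rfl fun ω _ => ?_
  by_cases h : f ω = b <;> simp [ind, h]

lemma avg_lawOf [Fintype β] (P : Ω → ℝ) (f : Ω → β) (F : β → ℝ) :
    avg (lawOf P f) F = avg P fun ω => F (f ω) := by
  simp only [avg, lawOf, prob, sum_mul]
  rw [sum_comm]
  simp only [mul_assoc, ← mul_sum, sum_ind_eq_mul]

lemma isPMF_lawOf [Fintype β] (hP : IsPMF P) (f : Ω → β) : IsPMF (lawOf P f) := by
  refine ⟨fun b => prob_nonneg hP.1 _, ?_⟩
  simpa [avg, hP.2] using avg_lawOf P f fun _ => 1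

lemma sum_prob_eq_and [Fintype β] (P : Ω → ℝ) (f : Ω → β) (E : Ω → Prop) :
    ∑ b, prob P (fun ω => f ω = b ∧ E ω) = prob P E := by
  simp only [prob, ← avg_sum, ind_and, ← sum_mul, sum_ind_eq, one_mul]

/-- The conditional probability that `f` takes the value `b` given that `g` takes the value `c`. It
is `0` when the latter event has probability `0`. -/
noncomputable def condProb (P : Ω → ℝ) (f : Ω → β) (g : Ω → γ) (b : β) (c : γ) : ℝ :=
  prob P (fun ω => f ω = b ∧ g ω = c) / prob P (g · = c)

variable {f : Ω → β} {g : Ω → γ}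

lemma condProb_mul_prob (hP : ∀ ω, 0 ≤ P ω) (f : Ω → β) (g : Ω → γ) (b : β) (c : γ) :
    condProb P f g b c * prob P (g · = c) = prob P fun ω => f ω = b ∧ g ω = c := by
  refine div_mul_cancel_of_imp fun h => le_antisymm ?_ (prob_nonneg hP _)
  exact (prob_mono hP fun _ _ h => h.2).trans_eq h

lemma condProb_nonneg (hP : ∀ ω, 0 ≤ P ω) (f : Ω → β) (g : Ω → γ) (b : β) (c : γ) :
    0 ≤ condProb P f g b c :=
  div_nonneg (prob_nonneg hP _) (prob_nonneg hP _)

lemma condProb_le_one (hP : ∀ ω, 0 ≤ P ω) (f : Ω → β) (g : Ω → γ) (b : β) (c : γ) :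
    condProb P f g b c ≤ 1 :=
  div_le_one_of_le₀ (prob_mono hP fun _ _ h => h.2) (prob_nonneg hP _)

lemma condProb_pos (hP : ∀ ω, 0 ≤ P ω) (f : Ω → β) (g : Ω → γ) {ω : Ω} (hω : 0 < P ω) :
    0 < condProb P f g (f ω) (g ω) :=
  div_pos (hω.trans_le (le_prob hP ⟨rfl, rfl⟩)) (hω.trans_le (le_prob hP rfl))

lemma sum_condProb_le_one [Fintype β] (P : Ω → ℝ) (f : Ω → β) (g : Ω → γ) (c : γ) :
    ∑ b, condProb P f g b c ≤ 1 := by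
  simp only [condProb, ← sum_div]
  rw [sum_prob_eq_and]
  exact div_self_le_one _

lemma avg_eq_sum_prob [Fintype β] [Fintype γ] (P : Ω → ℝ) (f : Ω → β) (g : Ω → γ)
    (F : β → γ → ℝ) :
    avg P (fun ω => F (f ω) (g ω)) = ∑ b, ∑ c, prob P (fun ω => f ω = b ∧ g ω = c) * F b c := by
  simp only [prob, ← avg_mul_const, ← avg_sum, ind_and, mul_assoc, ← mul_sum, sum_ind_eq_mul]

/-- Dividing by `p(f | g)` under the expectation replaces the law of `f` by counting. -/
lemma avg_div_condProb_le [Fintype β] [Finite γ] (hP : ∀ ω, 0 ≤ P ω) (f : Ω → β) (g : Ω → γ)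
    {F : β → γ → ℝ} (hF : ∀ b c, 0 ≤ F b c) :
    avg P (fun ω => F (f ω) (g ω) / condProb P f g (f ω) (g ω)) ≤
      avg P fun ω => ∑ b, F b (g ω) := by
  cases nonempty_fintype γ
  rw [avg_eq_sum_prob P f g fun b c => F b c / condProb P f g b c, avg_sum]
  refine sum_le_sum fun b _ => ?_
  have h : avg P (fun ω => F b (g ω)) = ∑ c, prob P (g · = c) * F b c := by
    simp only [prob, ← avg_mul_const, ← avg_sum, sum_ind_eq_mul]
  rw [h]
  refine sum_le_sum fun c _ => ?_
  rw [← condProb_mul_prob hP, mul_comm (condProb P f g b c), mul_assoc]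
  refine mul_le_mul_of_nonneg_left ?_ (prob_nonneg hP _)
  rw [mul_div_left_comm]
  exact mul_le_of_le_one_right (hF b c) (div_self_le_one _)

end Prob

/-! ### Total variation distance -/

section TVDist

variable {α β : Type*} [Fintype α] [Fintype β]

lemma tvDist_nonneg (p r : α → ℝ) : 0 ≤ tvDist p r :=
  mul_nonneg (by norm_num) (sum_nonneg fun _ _ => abs_nonneg _)

lemma tvDist_comm (p r : α → ℝ) : tvDist p r = tvDist r p := by
  simp only [tvDist, abs_sub_comm]

lemma tvDist_triangle (p r s : α → ℝ) : tvDist p s ≤ tvDist p r + tvDist r s := by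
  rw [tvDist, tvDist, tvDist, ← mul_add, ← sum_add_distrib]
  gcongr
  exact abs_sub_le _ _ _

lemma tvDist_comp_equiv (e : β ≃ α) (p r : α → ℝ) : tvDist (p ∘ e) (r ∘ e) = tvDist p r := by
  rw [tvDist, tvDist, ← e.sum_comp fun a => |p a - r a|]
  rfl

lemma abs_avg_sub_avg_le (p r : α → ℝ) {F : α → ℝ} (hF : ∀ a, |F a| ≤ 1) :
    |avg p F - avg r F| ≤ 2 * tvDist p r := by
  have h : 2 * tvDist p r = ∑ a, |p a - r a| := by rw [tvDist]; ring
  rw [h, avg, avg, ← sum_sub_distrib]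
  refine (abs_sum_le_sum_abs _ _).trans (sum_le_sum fun a _ => ?_)
  rw [← sub_mul, abs_mul]
  exact mul_le_of_le_one_right (abs_nonneg _) (hF a)

lemma avg_avg_sub_avg_avg_le {p p' : α → ℝ} {r r' : β → ℝ} (hp' : IsPMF p') (hr : IsPMF r)
    {F : α → β → ℝ} (hF : ∀ a b, |F a b| ≤ 1) :
    avg p (fun a => avg r (F a)) - avg p' (fun a => avg r' (F a)) ≤
      2 * tvDist p p' + 2 * tvDist r r' := by
  have hfst : avg p (fun a => avg r (F a)) - avg p' (fun a => avg r (F a)) ≤ 2 * tvDist p p' :=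
    (le_abs_self _).trans (abs_avg_sub_avg_le p p' fun a => hr.abs_avg_le_one (hF a))
  have hsnd : avg p' (fun a => avg r (F a) - avg r' (F a)) ≤ 2 * tvDist r r' :=
    (avg_mono hp'.1 fun a _ => (le_abs_self _).trans
      (abs_avg_sub_avg_le r r' (hF a))).trans_eq (hp'.avg_const _)
  rw [avg_sub] at hsnd
  linarith

lemma exists_avg_sub_avg_eq (p r : α → ℝ) :
    ∃ F : α → ℝ, (∀ a, |F a| ≤ 1) ∧ avg p F - avg r F = 2 * tvDist p r := by
  refine ⟨fun a => SignType.sign (p a - r a), fun a => ?_, ?_⟩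
  · rcases lt_trichotomy (p a - r a) 0 with hlt | heq | hgt
    · simp [sign_neg hlt]
    · simp [heq]
    · simp [sign_pos hgt]
  · rw [avg, avg, ← sum_sub_distrib, tvDist]
    simp only [← sub_mul, self_mul_sign]
    ring

lemma tvDist_le_one_sub_sum {p r m : α → ℝ} (hp : IsPMF p) (hr : IsPMF r) (hmp : ∀ a, m a ≤ p a)
    (hmr : ∀ a, m a ≤ r a) : tvDist p r ≤ 1 - ∑ a, m a := by
  have habs : ∑ a, |p a - r a| ≤ ∑ a, ((p a - m a) + (r a - m a)) :=
    sum_le_sum fun a _ => abs_le.mpr ⟨by linarith [hmp a], by linarith [hmr a]⟩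
  rw [sum_add_distrib, sum_sub_distrib, sum_sub_distrib, hp.2, hr.2] at habs
  rw [tvDist]
  linarith

lemma exists_tvDist_lawOf_unif_le (N K : Type*) [Fintype N] [Fintype K] [Nonempty N] [Nonempty K] :
    ∃ σ : N → K, tvDist (lawOf (unif N) σ) (unif K) ≤
      ((Fintype.card K : ℝ) - 1) / Fintype.card N := by
  have hN : (0 : ℝ) < Fintype.card N := Nat.cast_pos.mpr Fintype.card_pos
  set d := Fintype.card N / Fintype.card K
  obtain ⟨e⟩ : Nonempty (Fin d × K ↪ N) := Function.Embedding.nonempty_of_card_le <| by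
    rw [Fintype.card_prod, Fintype.card_fin]
    exact Nat.div_mul_le_self _ _
  set σ : N → K := Function.extend e Prod.snd fun _ => Classical.arbitrary K
  have hlaw : ∀ k, d / Fintype.card N ≤ lawOf (unif N) σ k := fun k => by
    have hcount : (d : ℝ) ≤ ∑ s, ind (σ s = k) :=
      calc (d : ℝ) = ∑ x : Fin d × K, ind (x.2 = k) := by
            classical
            rw [Fintype.sum_prod_type]
            simp [ind]
        _ = ∑ s ∈ univ.map e, ind (σ s = k) := by
            simp only [sum_map, σ, e.injective.extend_apply]
        _ ≤ ∑ s, ind (σ s = k) :=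
            sum_le_sum_of_subset_of_nonneg (subset_univ _) fun _ _ _ => ind_nonneg _
    simp only [lawOf, prob, avg, unif, ← mul_sum, div_eq_inv_mul]
    gcongr
  have hrem : (Fintype.card N : ℝ) + 1 ≤ d * Fintype.card K + Fintype.card K := by
    exact_mod_cast Nat.lt_div_mul_add Fintype.card_pos
  refine ⟨σ, (tvDist_le_one_sub_sum (isPMF_lawOf (isPMF_unif N) σ) (isPMF_unif K) hlaw
    fun k => ?_).trans ?_⟩
  · rw [unif, div_le_iff₀ hN, ← div_eq_inv_mul]
    exact Nat.cast_div_le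
  · rw [sum_const, nsmul_eq_mul, card_univ, le_div_iff₀ hN, sub_mul, mul_assoc,
      div_mul_cancel₀ _ hN.ne']
    linarith

lemma tvDist_prod_left {q : α → ℝ} (hq : ∀ a, 0 ≤ q a) (p r : α → β → ℝ) :
    tvDist (fun x : α × β => q x.1 * p x.1 x.2) (fun x => q x.1 * r x.1 x.2) =
      avg q fun a => tvDist (p a) (r a) := by
  simp only [tvDist, avg, Fintype.sum_prod_type, mul_sum, ← mul_sub, abs_mul, abs_of_nonneg (hq _),
    mul_left_comm (q _)]

lemma tvDist_lawOf_pair_prod {Ω U : Type*} [Fintype Ω] [Fintype U] {P : Ω → ℝ}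
    (hP : ∀ ω, 0 ≤ P ω) {x : Ω → α} {u : Ω → U} {κ : α → U → ℝ}
    (hκ : ∀ F : α → U → ℝ, avg P (fun ω => F (x ω) (u ω)) = avg P fun ω => avg (κ (x ω)) (F (x ω)))
    (f : U → β) (π : β → ℝ) :
    tvDist (lawOf P fun ω => (x ω, f (u ω))) (fun v => lawOf P x v.1 * π v.2) =
      avg P fun ω => tvDist (lawOf (κ (x ω)) f) π := by
  have hpair : lawOf P (fun ω => (x ω, f (u ω))) =
      fun v => lawOf P x v.1 * lawOf (κ v.1) f v.2 := funext fun v => by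
    calc lawOf P (fun ω => (x ω, f (u ω))) v
        = avg P fun ω => ind (x ω = v.1) * ind (f (u ω) = v.2) :=
          congrArg (avg P) (funext fun ω => (ind_congr Prod.ext_iff).trans (ind_and _ _))
      _ = avg P fun ω => ind (x ω = v.1) * lawOf (κ (x ω)) f v.2 := by
          rw [hκ fun a b => ind (a = v.1) * ind (f b = v.2)]
          simp only [avg_const_mul, lawOf, prob]
      _ = avg P fun ω => ind (x ω = v.1) * lawOf (κ v.1) f v.2 :=
          congrArg (avg P) (funext fun ω => ind_mul_congr fun hω => by rw [hω])
      _ = lawOf P x v.1 * lawOf (κ v.1) f v.2 := avg_mul_const _ _ _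
  rw [hpair, tvDist_prod_left (q := lawOf P x) (fun a => prob_nonneg hP _)
    (fun a => lawOf (κ a) f) fun _ => π,
    avg_lawOf]

end TVDist

/-! ### Entropy -/

section Entropy

variable {Ω β β' γ δ : Type*} [Fintype Ω] [Fintype β] [Fintype β'] [Fintype γ] [Fintype δ]
  [DecidableEq β] [DecidableEq β'] [DecidableEq γ] [DecidableEq δ] {P : Ω → ℝ}

lemma ent_eq (P : Ω → ℝ) (f : Ω → β) :
    ent P f = -avg P fun ω => Real.logb 2 (prob P (f · = f ω)) := by
  rw [← avg_lawOf P f fun b => Real.logb 2 (prob P (f · = b))]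
  simp only [ent, entPMF, avg, marg_eq_lawOf]
  rfl

lemma ent_congr {f : Ω → β} {g : Ω → γ} (h : ∀ ω ω', f ω = f ω' ↔ g ω = g ω') :
    ent P f = ent P g := by
  simp only [ent_eq, h]

lemma condEnt_eq (hP : ∀ ω, 0 ≤ P ω) (f : Ω → β) (g : Ω → γ) :
    condEnt P f g = -avg P fun ω => Real.logb 2 (condProb P f g (f ω) (g ω)) := by
  have h : avg P (fun ω => Real.logb 2 (condProb P f g (f ω) (g ω))) =
      avg P fun ω => Real.logb 2 (prob P fun ω' => (f ω', g ω') = (f ω, g ω)) -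
        Real.logb 2 (prob P (g · = g ω)) := by
    refine sum_congr rfl fun ω _ => ?_
    rcases (hP ω).eq_or_lt with h0 | hω
    · simp [← h0]
    have hfg : 0 < prob P fun ω' => f ω' = f ω ∧ g ω' = g ω :=
      hω.trans_le (le_prob hP ⟨rfl, rfl⟩)
    have hg : 0 < prob P (g · = g ω) := hω.trans_le (le_prob hP rfl)
    simp only [condProb, Prod.mk.injEq]
    rw [Real.logb_div hfg.ne' hg.ne']
  rw [h, avg_sub, condEnt, ent_eq, ent_eq]
  ring

lemma condEnt_nonneg (hP : ∀ ω, 0 ≤ P ω) (f : Ω → β) (g : Ω → γ) : 0 ≤ condEnt P f g := by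
  rw [condEnt_eq hP, neg_nonneg]
  refine sum_nonpos fun ω _ => mul_nonpos_of_nonneg_of_nonpos (hP ω) ?_
  exact Real.logb_nonpos one_lt_two (condProb_nonneg hP _ _ _ _) (condProb_le_one hP _ _ _ _)

lemma IsPMF.condEnt_le_condEnt_comp (hP : IsPMF P) (f : Ω → β) (g : Ω → γ) (φ : γ → δ) :
    condEnt P f g ≤ condEnt P f fun ω => φ (g ω) := by
  set r : Ω → ℝ := fun ω => condProb P f (fun ω => φ (g ω)) (f ω) (φ (g ω))
  set s : Ω → ℝ := fun ω => condProb P f g (f ω) (g ω)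
  have hlog : avg P (fun ω => Real.log (r ω) - Real.log (s ω)) ≤ avg P fun ω => r ω / s ω - 1 := by
    refine avg_mono hP.1 fun ω hω => ?_
    have hr : 0 < r ω := condProb_pos hP.1 f (fun ω => φ (g ω)) hω
    have hs : 0 < s ω := condProb_pos hP.1 f g hω
    rw [← Real.log_div hr.ne' hs.ne']
    exact Real.log_le_sub_one_of_pos (div_pos hr hs)
  have hratio : avg P (fun ω => r ω / s ω) ≤ 1 :=
    calc _ ≤ avg P (fun ω => ∑ b, condProb P f (fun ω => φ (g ω)) b (φ (g ω))) :=
          avg_div_condProb_le hP.1 f g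
            (F := fun b c => condProb P f (fun ω => φ (g ω)) b (φ c))
            fun _ _ => condProb_nonneg hP.1 _ _ _ _
      _ ≤ avg P (fun _ => 1) := avg_mono hP.1 fun _ _ => sum_condProb_le_one _ _ _ _
      _ = 1 := hP.avg_const 1
  rw [condEnt_eq hP.1, condEnt_eq hP.1, neg_le_neg_iff]
  simp only [Real.logb, div_eq_mul_inv, avg_mul_const]
  refine mul_le_mul_of_nonneg_right ?_ (inv_nonneg.mpr (Real.log_nonneg one_le_two))
  rw [avg_sub, avg_sub, hP.avg_const] at hlog
  linarith

lemma condEnt_prod (P : Ω → ℝ) (f : Ω → β) (f' : Ω → β') (g : Ω → γ) :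
    condEnt P (fun ω => (f ω, f' ω)) g =
      condEnt P f (fun ω => (f' ω, g ω)) + condEnt P f' g := by
  have h : ent P (fun ω => ((f ω, f' ω), g ω)) = ent P fun ω => (f ω, f' ω, g ω) :=
    ent_congr fun _ _ => by simp only [Prod.mk.injEq, and_assoc]
  simp only [condEnt, h]
  ring

lemma condEnt_prod' (P : Ω → ℝ) (f : Ω → β) (f' : Ω → β') (g : Ω → γ) :
    condEnt P (fun ω => (f ω, f' ω)) g =
      condEnt P f' (fun ω => (f ω, g ω)) + condEnt P f g := by
  have h : ent P (fun ω => ((f ω, f' ω), g ω)) = ent P fun ω => (f' ω, f ω, g ω) :=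
    ent_congr fun _ _ => by simp only [Prod.mk.injEq, and_left_comm, and_assoc]
  simp only [condEnt, h]
  ring

lemma IsPMF.condEnt_prod_le (hP : IsPMF P) (f : Ω → β) (f' : Ω → β') (g : Ω → γ) :
    condEnt P (fun ω => (f ω, f' ω)) g ≤ condEnt P f g + condEnt P f' g := by
  rw [condEnt_prod]
  exact add_le_add_left (hP.condEnt_le_condEnt_comp f (fun ω => (f' ω, g ω)) Prod.snd) _

lemma cmi_eq_condEnt_sub (P : Ω → ℝ) (f : Ω → β) (g : Ω → γ) (h : Ω → δ) :
    cmi P f g h = condEnt P f h - condEnt P f fun ω => (g ω, h ω) := by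
  simp only [cmi, condEnt]
  ring

lemma cmi_comm (P : Ω → ℝ) (f : Ω → β) (g : Ω → γ) (h : Ω → δ) : cmi P f g h = cmi P g f h := by
  have : ent P (fun ω => (f ω, g ω, h ω)) = ent P fun ω => (g ω, f ω, h ω) :=
    ent_congr fun _ _ => by simp only [Prod.mk.injEq, and_left_comm]
  simp only [cmi, this]
  ring

end Entropy

/-! ### The weak law of large numbers -/

/-- The law of `n` independent outcomes with law `P`. -/
def iid {Ω : Type*} (P : Ω → ℝ) (n : ℕ) : (Fin n → Ω) → ℝ := fun ω => ∏ i, P (ω i)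

section Iid

variable {Ω β γ : Type*} [Fintype Ω] {P : Ω → ℝ}

lemma isPMF_iid (hP : IsPMF P) (n : ℕ) : IsPMF (iid P n) := IsPMF.pi fun _ => hP

lemma avg_iid_prod [Fintype β] (P : Ω → ℝ) (Q : β → ℝ) (n : ℕ) (F : (Fin n → Ω × β) → ℝ) :
    avg (iid (fun x => P x.1 * Q x.2) n) F =
      avg (iid P n) fun a => avg (iid Q n) fun b => F fun i => (a i, b i) := by
  rw [← avg_comp_equiv (Equiv.arrowProdEquivProdArrow (Fin n) (fun _ => Ω) fun _ => β).symm,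
    ← avg_prod (iid P n) (iid Q n) fun x => F fun i => (x.1 i, x.2 i)]
  simp only [iid, ← prod_mul_distrib]
  rfl

lemma avg_iid_succ (P : Ω → ℝ) (n : ℕ) (F : (Fin (n + 1) → Ω) → ℝ) :
    avg (iid P (n + 1)) F = avg P fun a => avg (iid P n) fun ω => F (Fin.cons a ω) := by
  rw [← avg_prod P (iid P n) fun x => F (Fin.cons x.1 x.2),
    ← avg_comp_equiv (Fin.consEquiv fun _ => Ω)]
  congr 1
  funext x
  simp [iid, Fin.prod_univ_succ]

lemma prob_iid_forall (P : Ω → ℝ) {n : ℕ} (E : Fin n → Ω → Prop) :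
    prob (iid P n) (fun ω => ∀ i, E i (ω i)) = ∏ i, prob P (E i) := by
  simp only [prob, ind_forall]
  exact avg_pi_prod (fun _ => P) fun i ω => ind (E i ω)

lemma IsPMF.avg_iid_sum_sq (hP : IsPMF P) {g : Ω → ℝ} (hg : avg P g = 0) (n : ℕ) :
    avg (iid P n) (fun ω => (∑ i, g (ω i)) ^ 2) = n * avg P fun a => g a ^ 2 := by
  have hsum : ∀ n, avg (iid P n) (fun ω => ∑ i, g (ω i)) = 0 := fun n => by
    induction n with
    | zero => simp [avg]
    | succ n ih =>
      simp only [avg_iid_succ, Fin.sum_univ_succ, Fin.cons_zero, Fin.cons_succ, avg_add, ih,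
        (isPMF_iid hP n).avg_const, hg, hP.avg_const, add_zero]
  induction n with
  | zero => simp [avg]
  | succ n ih =>
    simp only [avg_iid_succ, Fin.sum_univ_succ, Fin.cons_zero, Fin.cons_succ, add_sq, avg_add, ih,
      avg_const_mul, hsum, (isPMF_iid hP n).avg_const, hP.avg_const, mul_zero]
    push_cast
    ring

lemma IsPMF.prob_iid_le_abs_sum_le (hP : IsPMF P) {g : Ω → ℝ} (hg : avg P g = 0) {n : ℕ}
    (hn : 0 < n) {δ : ℝ} (hδ : 0 < δ) :
    prob (iid P n) (fun ω => n * δ ≤ |∑ i, g (ω i)|) ≤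
      (avg P fun a => g a ^ 2) / δ ^ 2 * (n : ℝ)⁻¹ := by
  have hpos : 0 < n * δ := by positivity
  have hmarkov : ∀ s : ℝ, ind (n * δ ≤ |s|) ≤ ((n * δ) ^ 2)⁻¹ * s ^ 2 := fun s => by
    by_cases hs : n * δ ≤ |s|
    · rw [ind_of hs, inv_mul_eq_div, one_le_div (by positivity), ← sq_abs s]
      exact pow_le_pow_left₀ hpos.le hs 2
    · rw [ind_not hs]
      positivity
  calc _ ≤ avg (iid P n) fun ω => ((n * δ) ^ 2)⁻¹ * (∑ i, g (ω i)) ^ 2 :=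
        avg_mono (isPMF_iid hP n).1 fun _ _ => hmarkov _
    _ = _ := by
        rw [avg_const_mul, hP.avg_iid_sum_sq hg]
        field_simp

lemma IsPMF.tendsto_prob_iid_abs_sum_sub (hP : IsPMF P) (g : Ω → ℝ) {δ : ℝ} (hδ : 0 < δ) :
    Filter.Tendsto (fun n : ℕ => prob (iid P n) fun ω => n * δ ≤ |∑ i, g (ω i) - n * avg P g|)
      Filter.atTop (nhds 0) := by
  have hg : avg P (fun a => g a - avg P g) = 0 := by rw [avg_sub, hP.avg_const, sub_self]
  have hlim := (tendsto_inv_atTop_nhds_zero_nat (𝕜 := ℝ)).const_mul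
    ((avg P fun a => (g a - avg P g) ^ 2) / δ ^ 2)
  rw [mul_zero] at hlim
  refine squeeze_zero' (.of_forall fun n => prob_nonneg (isPMF_iid hP n).1 _) ?_ hlim
  filter_upwards [Filter.eventually_gt_atTop 0] with n hn
  simpa using hP.prob_iid_le_abs_sum_le hg hn hδ

lemma condProb_iid {n : ℕ} {B C : Type*} {F : (Fin n → Ω) → B} {G : (Fin n → Ω) → C}
    {f : Ω → β} {g : Ω → γ} (hF : ∀ ω ω', F ω = F ω' ↔ ∀ i, f (ω i) = f (ω' i))
    (hG : ∀ ω ω', G ω = G ω' ↔ ∀ i, g (ω i) = g (ω' i)) (P : Ω → ℝ) (ω : Fin n → Ω) :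
    condProb (iid P n) F G (F ω) (G ω) = ∏ i, condProb P f g (f (ω i)) (g (ω i)) := by
  simp only [condProb, hF, hG, ← forall_and, prod_div_distrib]
  rw [prob_iid_forall P fun i ω' => f ω' = f (ω i) ∧ g ω' = g (ω i),
    prob_iid_forall P fun i ω' => g ω' = g (ω i)]

variable [Fintype β] [Fintype γ] [DecidableEq β] [DecidableEq γ]

/-- The sequence `ω` is conditionally typical: up to factors `2 ^ (± n δ)`, the conditional
probability of the `f`-values of `ω` given its `g`-values is `2 ^ (-n H(f | g))`. -/
def Typical (P : Ω → ℝ) (f : Ω → β) (g : Ω → γ) (δ : ℝ) {n : ℕ} (ω : Fin n → Ω) : Prop :=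
  (2 : ℝ) ^ (-(n * (condEnt P f g + δ))) ≤ ∏ i, condProb P f g (f (ω i)) (g (ω i)) ∧
    ∏ i, condProb P f g (f (ω i)) (g (ω i)) ≤ (2 : ℝ) ^ (-(n * (condEnt P f g - δ)))

lemma IsPMF.tendsto_prob_iid_not_typical (hP : IsPMF P) (f : Ω → β) (g : Ω → γ) {δ : ℝ}
    (hδ : 0 < δ) :
    Filter.Tendsto (fun n => prob (iid P n) fun ω => ¬Typical P f g δ ω) Filter.atTop (nhds 0) := by
  set h : Ω → ℝ := fun ω => -Real.logb 2 (condProb P f g (f ω) (g ω)) with h_def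
  have hH : condEnt P f g = avg P h := by
    simp only [condEnt_eq hP.1, h_def, avg, mul_neg, sum_neg_distrib]
  refine squeeze_zero (fun n => prob_nonneg (isPMF_iid hP n).1 _)
    (fun n => prob_mono (isPMF_iid hP n).1 fun ω hω htyp => ?_)
    (hP.tendsto_prob_iid_abs_sum_sub h hδ)
  have hpos : ∀ i, 0 < condProb P f g (f (ω i)) (g (ω i)) := fun i =>
    condProb_pos hP.1 f g ((hP.1 _).lt_of_ne' fun h0 => hω.ne' (prod_eq_zero (mem_univ i) h0))
  have hprod : ∏ i, condProb P f g (f (ω i)) (g (ω i)) = 2 ^ (-∑ i, h (ω i)) := by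
    rw [h_def, sum_neg_distrib, neg_neg, ← Real.logb_prod _ _ fun i _ => (hpos i).ne',
      Real.rpow_logb two_pos one_lt_two.ne' (prod_pos fun i _ => hpos i)]
  rw [Typical, hprod, Real.rpow_le_rpow_left_iff one_lt_two,
    Real.rpow_le_rpow_left_iff one_lt_two, hH] at htyp
  by_contra! habs
  rw [abs_lt] at habs
  exact htyp ⟨by linarith, by linarith⟩

end Iid

/-! ### Random binning -/

/-- The random map `h`, with seed of law `μ`, is pairwise uniform: its values at any two distinct
points are independent and uniform on `K`. Both requirements are stated through expectations of
test functions. -/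
structure PairUnif {Φ A K : Type*} [Fintype Φ] [Fintype K] (μ : Φ → ℝ) (h : Φ → A → K) : Prop where
  pmf : IsPMF μ
  avg_apply : ∀ (a : A) (F : K → ℝ), avg μ (fun φ => F (h φ a)) = avg (unif K) F
  avg_apply₂ : ∀ ⦃a a' : A⦄, a ≠ a' → ∀ F : K → K → ℝ,
    avg μ (fun φ => F (h φ a) (h φ a')) = avg (unif K) fun k => avg (unif K) (F k)

section PairUnif

variable {Φ A K K' : Type*} [Fintype Φ] [Fintype K] [Fintype K'] {μ : Φ → ℝ} {h : Φ → A → K}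

lemma pairUnif_pi (A K : Type*) [Fintype A] [DecidableEq A] [Fintype K] [Nonempty K] :
    PairUnif (fun φ : A → K => ∏ a, unif K (φ a)) fun φ => φ := by
  have hmul : ∀ ⦃a a' : A⦄, a ≠ a' → ∀ F G : K → ℝ,
      avg (fun φ : A → K => ∏ a, unif K (φ a)) (fun φ => F (φ a) * G (φ a')) =
        avg (unif K) F * avg (unif K) G := fun a a' ha F G => by
    have hprod : ∀ φ : A → K, F (φ a) * G (φ a') =
        ∏ b, if b = a then F (φ b) else if b = a' then G (φ b) else 1 := fun φ => by
      rw [Fintype.prod_eq_mul a a' ha fun b hb => by rw [if_neg hb.1, if_neg hb.2],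
        if_pos rfl, if_neg ha.symm, if_pos rfl]
    simp only [hprod]
    rw [avg_pi_prod (fun _ => unif K) fun b x => if b = a then F x else if b = a' then G x else 1,
      Fintype.prod_eq_mul a a' ha fun b hb => by
        simp only [if_neg hb.1, if_neg hb.2, (isPMF_unif K).avg_const]]
    simp only [if_pos, if_neg ha.symm]
  refine ⟨IsPMF.pi fun _ => isPMF_unif K, fun a F => ?_, fun a a' ha F => ?_⟩
  · have hprod : ∀ φ : A → K, F (φ a) = ∏ b, if b = a then F (φ b) else 1 := fun φ => by
      rw [prod_ite_eq' univ a fun b => F (φ b), if_pos (mem_univ a)]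
    simp only [hprod]
    rw [avg_pi_prod (fun _ => unif K) fun b x => if b = a then F x else 1,
      Fintype.prod_eq_single a fun b hb => by simp only [if_neg hb, (isPMF_unif K).avg_const]]
    simp only [if_pos]
  · calc _ = avg (fun φ : A → K => ∏ a, unif K (φ a)) fun φ => ∑ k, ind (φ a = k) * F k (φ a') := by
          simp only [sum_ind_eq_mul]
      _ = ∑ k, avg (unif K) (fun x => ind (x = k)) * avg (unif K) (F k) := by
          rw [avg_sum]
          exact sum_congr rfl fun k _ => hmul ha (fun x => ind (x = k)) (F k)
      _ = _ := by
          simp only [avg_unif_ind_eq]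
          rfl

namespace PairUnif

lemma comp (hh : PairUnif μ h) {π : K → K'}
    (hπ : ∀ F : K' → ℝ, avg (unif K) (fun k => F (π k)) = avg (unif K') F) :
    PairUnif μ fun φ a => π (h φ a) := by
  refine ⟨hh.pmf, fun a F => (hh.avg_apply a fun k => F (π k)).trans (hπ F), fun a a' ha F => ?_⟩
  rw [hh.avg_apply₂ ha fun k k' => F (π k) (π k')]
  simp only [hπ]
  exact hπ fun k => avg (unif K') (F k)

lemma avg_ind_eq (hh : PairUnif μ h) (a : A) (k : K) :
    avg μ (fun φ => ind (h φ a = k)) = (Fintype.card K : ℝ)⁻¹ := by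
  rw [hh.avg_apply a fun x => ind (x = k), avg_unif_ind_eq]

lemma avg_ind_collision [Nonempty K] (hh : PairUnif μ h) {a a' : A} (ha : a ≠ a') :
    avg μ (fun φ => ind (h φ a = h φ a')) = (Fintype.card K : ℝ)⁻¹ := by
  rw [hh.avg_apply₂ ha fun k k' => ind (k = k'), avg_comm]
  simp only [avg_unif_ind_eq, (isPMF_unif K).avg_const]

lemma avg_ind_mul_ind [Nonempty K] (hh : PairUnif μ h) (a a' : A) (k : K) :
    avg μ (fun φ => ind (h φ a = k) * ind (h φ a' = k)) =
      (Fintype.card K : ℝ)⁻¹ ^ 2 * (1 + (Fintype.card K - 1) * ind (a = a')) := by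
  have hK : (Fintype.card K : ℝ) ≠ 0 := Nat.cast_ne_zero.mpr Fintype.card_ne_zero
  by_cases ha : a = a'
  · subst ha
    simp only [← ind_and, and_self, hh.avg_ind_eq, ind_of]
    field_simp
    ring
  · rw [hh.avg_apply₂ ha fun x y => ind (x = k) * ind (y = k), ind_not ha]
    simp only [avg_const_mul, avg_mul_const, avg_unif_ind_eq]
    ring

lemma avg_ind_ne_and_le [Nonempty K] (hh : PairUnif μ h) (a a' : A) :
    avg μ (fun φ => ind (a ≠ a' ∧ h φ a = h φ a')) ≤ (Fintype.card K : ℝ)⁻¹ := by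
  by_cases ha : a = a'
  · simp only [ha, ne_eq, not_true_eq_false, false_and, ind_not not_false, hh.pmf.avg_const]
    positivity
  · exact (avg_mono hh.pmf.1 fun φ _ => ind_mono And.right).trans_eq (hh.avg_ind_collision ha)

end PairUnif

end PairUnif

section Binning

variable {Ω A B K L Φ Ψ : Type*} [Fintype Ω] [Fintype K] [Fintype L] [Fintype Φ] [Fintype Ψ]
  {μ : Φ → ℝ} {ν : Ψ → ℝ} {h : Φ → A → K} {g : Ψ → B → L}

/-- Up to normalization, the variance of the mass of a bin when two sources are binned into
`K` and `L` bins and `γ₁₂`, `γ₁`, `γ₂` bound the collision probabilities of the pair and of each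
source. -/
def binVariance (K L : Type*) [Fintype K] [Fintype L] (γ₁₂ γ₁ γ₂ : ℝ) : ℝ :=
  (Fintype.card K - 1) * (Fintype.card L - 1) * γ₁₂ + (Fintype.card K - 1) * γ₁ +
    (Fintype.card L - 1) * γ₂

variable [Nonempty K] [Nonempty L]

lemma avg_avg_centered_mul (hh : PairUnif μ h) (hg : PairUnif ν g) (a a' : A) (b b' : B)
    (k : K) (l : L) :
    avg μ (fun φ => avg ν fun ψ =>
      (ind ((h φ a, g ψ b) = (k, l)) - (Fintype.card (K × L) : ℝ)⁻¹) *
        (ind ((h φ a', g ψ b') = (k, l)) - (Fintype.card (K × L) : ℝ)⁻¹)) =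
      (Fintype.card (K × L) : ℝ)⁻¹ ^ 2 *
        ((Fintype.card K - 1) * (Fintype.card L - 1) * ind (a = a' ∧ b = b') +
          (Fintype.card K - 1) * ind (a = a') + (Fintype.card L - 1) * ind (b = b')) := by
  set c := (Fintype.card (K × L) : ℝ)⁻¹ with hc
  have hexp : ∀ φ ψ, (ind ((h φ a, g ψ b) = (k, l)) - c) * (ind ((h φ a', g ψ b') = (k, l)) - c) =
      ind (h φ a = k) * ind (h φ a' = k) * (ind (g ψ b = l) * ind (g ψ b' = l)) -
        c * ind (h φ a = k) * ind (g ψ b = l) - c * ind (h φ a' = k) * ind (g ψ b' = l) + c ^ 2 :=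
    fun φ ψ => by simp only [Prod.mk.injEq, ind_and]; ring
  simp only [hexp, avg_add, avg_sub, avg_const_mul, avg_mul_const, hg.avg_ind_mul_ind,
    hg.avg_ind_eq, hg.pmf.avg_const, hh.avg_ind_mul_ind, hh.avg_ind_eq, hh.pmf.avg_const, ind_and]
  rw [hc, Fintype.card_prod, Nat.cast_mul, mul_inv]
  ring

lemma avg_avg_sq_centered_le (hh : PairUnif μ h) (hg : PairUnif ν g) {p : Ω → ℝ}
    (hp : ∀ ω, 0 ≤ p ω) (a : Ω → A) (b : Ω → B) {s γ₁₂ γ₁ γ₂ : ℝ} (hs : ∑ ω, p ω ≤ s)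
    (h₁₂ : ∀ ω, 0 < p ω → prob p (fun ω' => a ω = a ω' ∧ b ω = b ω') ≤ γ₁₂ * s)
    (h₁ : ∀ ω, 0 < p ω → prob p (fun ω' => a ω = a ω') ≤ γ₁ * s)
    (h₂ : ∀ ω, 0 < p ω → prob p (fun ω' => b ω = b ω') ≤ γ₂ * s)
    (hγ : 0 ≤ binVariance K L γ₁₂ γ₁ γ₂) (k : K) (l : L) :
    avg μ (fun φ => avg ν fun ψ => (avg p fun ω =>
      ind ((h φ (a ω), g ψ (b ω)) = (k, l)) - (Fintype.card (K × L) : ℝ)⁻¹) ^ 2) ≤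
      (Fintype.card (K × L) : ℝ)⁻¹ ^ 2 * (s ^ 2 * binVariance K L γ₁₂ γ₁ γ₂) := by
  have hK : 0 ≤ (Fintype.card K : ℝ) - 1 := sub_nonneg.mpr (mod_cast Fintype.card_pos)
  have hL : 0 ≤ (Fintype.card L : ℝ) - 1 := sub_nonneg.mpr (mod_cast Fintype.card_pos)
  have hs0 : 0 ≤ s := (sum_nonneg fun ω _ => hp ω).trans hs
  have hswap : ∀ G : Φ → Ψ → Ω → Ω → ℝ,
      avg μ (fun φ => avg ν fun ψ => avg p fun ω => avg p fun ω' => G φ ψ ω ω') =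
        avg p fun ω => avg p fun ω' => avg μ fun φ => avg ν fun ψ => G φ ψ ω ω' := fun G => by
    rw [avg_avg_avg_comm]
    exact congrArg (avg p) (funext fun ω => avg_avg_avg_comm μ ν p _)
  simp only [sq_avg]
  rw [hswap]
  simp only [avg_avg_centered_mul hh hg, avg_const_mul, avg_add]
  refine mul_le_mul_of_nonneg_left ?_ (sq_nonneg _)
  calc _ ≤ avg p fun _ => s * binVariance K L γ₁₂ γ₁ γ₂ := by
        simp only [← avg_const_mul, ← avg_add]
        refine avg_mono hp fun ω hω => ?_
        simp only [avg_const_mul, avg_add]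
        have e₁₂ := mul_le_mul_of_nonneg_left (h₁₂ ω hω) (mul_nonneg hK hL)
        have e₁ := mul_le_mul_of_nonneg_left (h₁ ω hω) hK
        have e₂ := mul_le_mul_of_nonneg_left (h₂ ω hω) hL
        simp only [prob] at e₁₂ e₁ e₂
        rw [binVariance]
        linarith
    _ = (∑ ω, p ω) * (s * binVariance K L γ₁₂ γ₁ γ₂) := by rw [avg, sum_mul]
    _ ≤ s ^ 2 * binVariance K L γ₁₂ γ₁ γ₂ := by
        rw [sq, mul_assoc]
        exact mul_le_mul_of_nonneg_right hs (mul_nonneg hs0 hγ)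

lemma avg_avg_sum_abs_centered_le (hh : PairUnif μ h) (hg : PairUnif ν g) {p : Ω → ℝ}
    (hp : ∀ ω, 0 ≤ p ω) (a : Ω → A) (b : Ω → B) {s γ₁₂ γ₁ γ₂ : ℝ} (hs : ∑ ω, p ω ≤ s)
    (h₁₂ : ∀ ω, 0 < p ω → prob p (fun ω' => a ω = a ω' ∧ b ω = b ω') ≤ γ₁₂ * s)
    (h₁ : ∀ ω, 0 < p ω → prob p (fun ω' => a ω = a ω') ≤ γ₁ * s)
    (h₂ : ∀ ω, 0 < p ω → prob p (fun ω' => b ω = b ω') ≤ γ₂ * s)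
    (hγ : 0 ≤ binVariance K L γ₁₂ γ₁ γ₂) :
    avg μ (fun φ => avg ν fun ψ => ∑ j, |avg p fun ω =>
      ind ((h φ (a ω), g ψ (b ω)) = j) - (Fintype.card (K × L) : ℝ)⁻¹|) ≤
      s * √(binVariance K L γ₁₂ γ₁ γ₂) := by
  have hs0 : 0 ≤ s := (sum_nonneg fun ω _ => hp ω).trans hs
  have hcard : (Fintype.card (K × L) : ℝ) ≠ 0 := Nat.cast_ne_zero.mpr Fintype.card_ne_zero
  have hbin : ∀ j : K × L, avg μ (fun φ => avg ν fun ψ => |avg p fun ω =>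
      ind ((h φ (a ω), g ψ (b ω)) = j) - (Fintype.card (K × L) : ℝ)⁻¹|) ≤
      (Fintype.card (K × L) : ℝ)⁻¹ * (s * √(binVariance K L γ₁₂ γ₁ γ₂)) := fun j => by
    rw [← avg_prod μ ν fun x => |avg p fun ω =>
      ind ((h x.1 (a ω), g x.2 (b ω)) = j) - (Fintype.card (K × L) : ℝ)⁻¹|]
    refine ((hh.pmf.prod hg.pmf).avg_abs_le_sqrt _).trans ?_
    rw [avg_prod]
    refine (Real.sqrt_le_sqrt
      (avg_avg_sq_centered_le hh hg hp a b hs h₁₂ h₁ h₂ hγ j.1 j.2)).trans_eq ?_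
    rw [Real.sqrt_mul (sq_nonneg _), Real.sqrt_mul (sq_nonneg _), Real.sqrt_sq hs0,
      Real.sqrt_sq (by positivity)]
  simp only [avg_sum]
  refine (sum_le_sum fun j _ => hbin j).trans_eq ?_
  rw [sum_const, card_univ, nsmul_eq_mul, mul_inv_cancel_left₀ hcard]

end Binning

section Resolvability

variable {Ω A B C J K L Φ Ψ : Type*} [Fintype Ω] [Fintype J] [Nonempty J]
  {P : Ω → ℝ}

lemma tvDist_lawOf_prod_unif_le [Fintype C] (hP : ∀ ω, 0 ≤ P ω) (w : Ω → C) (f : Ω → J)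
    (good : Ω → Prop) :
    tvDist (lawOf P fun ω => (w ω, f ω)) (fun x => lawOf P w x.1 * unif J x.2) ≤
      prob P (fun ω => ¬good ω) + 1 / 2 * ∑ c, ∑ j,
        |avg (fun ω => P ω * ind (w ω = c ∧ good ω))
          fun ω => ind (f ω = j) - (Fintype.card J : ℝ)⁻¹| := by
  have hdiff : ∀ c j, |lawOf P (fun ω => (w ω, f ω)) (c, j) - lawOf P w c * unif J j| ≤
      |avg (fun ω => P ω * ind (w ω = c ∧ good ω))
        fun ω => ind (f ω = j) - (Fintype.card J : ℝ)⁻¹| +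
      avg P fun ω => ind (w ω = c) * (ind (¬good ω) *
        (ind (f ω = j) + (Fintype.card J : ℝ)⁻¹)) := fun c j => by
    have hsplit : lawOf P (fun ω => (w ω, f ω)) (c, j) - lawOf P w c * unif J j =
        avg (fun ω => P ω * ind (w ω = c ∧ good ω))
          (fun ω => ind (f ω = j) - (Fintype.card J : ℝ)⁻¹) +
        avg P fun ω => ind (w ω = c) * (ind (¬good ω) *
          (ind (f ω = j) - (Fintype.card J : ℝ)⁻¹)) := by
      simp only [lawOf, prob, unif, avg, sum_mul, ← sum_sub_distrib, ← sum_add_distrib]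
      refine sum_congr rfl fun ω _ => ?_
      by_cases hω : good ω <;> simp [Prod.mk.injEq, ind_and, ind_of, ind_not, hω] <;> ring
    rw [hsplit]
    refine (abs_add_le _ _).trans (add_le_add le_rfl ((abs_avg_le hP _).trans ?_))
    refine avg_mono hP fun ω _ => ?_
    rw [abs_mul, abs_mul, abs_of_nonneg (ind_nonneg _), abs_of_nonneg (ind_nonneg _)]
    refine mul_le_mul_of_nonneg_left (mul_le_mul_of_nonneg_left ?_ (ind_nonneg _)) (ind_nonneg _)
    refine (abs_sub _ _).trans_eq ?_
    rw [abs_of_nonneg (ind_nonneg _), abs_of_nonneg (by positivity)]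
  have htail : ∑ c, ∑ j, avg P (fun ω => ind (w ω = c) * (ind (¬good ω) *
      (ind (f ω = j) + (Fintype.card J : ℝ)⁻¹))) = 2 * prob P fun ω => ¬good ω := by
    have hJ : ∑ _j : J, (Fintype.card J : ℝ)⁻¹ = 1 := (isPMF_unif J).2
    simp only [← avg_sum, ← mul_sum, sum_add_distrib, sum_ind_eq, hJ, sum_ind_eq_mul]
    rw [avg_mul_const, prob]
    ring
  rw [tvDist, Fintype.sum_prod_type]
  have hsum := sum_le_sum fun c (_ : c ∈ univ) => sum_le_sum fun j (_ : j ∈ univ) => hdiff c j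
  simp only [sum_add_distrib, htail] at hsum
  linarith

variable [Fintype K] [Nonempty K] [Fintype L] [Nonempty L] [Fintype Φ] [Fintype Ψ]
  {μ : Φ → ℝ} {ν : Ψ → ℝ} {h : Φ → A → K} {g : Ψ → B → L}

lemma binVariance_self (K L : Type*) [Fintype K] [Fintype L] (γ : ℝ) :
    binVariance K L γ γ γ = (Fintype.card (K × L) - 1) * γ := by
  rw [binVariance, Fintype.card_prod]
  push_cast
  ring

lemma binVariance_nonneg {γ₁₂ γ₁ γ₂ : ℝ} (h₁₂ : 0 ≤ γ₁₂) (h₁ : 0 ≤ γ₁) (h₂ : 0 ≤ γ₂) :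
    0 ≤ binVariance K L γ₁₂ γ₁ γ₂ := by
  have hK : 0 ≤ (Fintype.card K : ℝ) - 1 := sub_nonneg.mpr (mod_cast Fintype.card_pos)
  have hL : 0 ≤ (Fintype.card L : ℝ) - 1 := sub_nonneg.mpr (mod_cast Fintype.card_pos)
  unfold binVariance
  positivity

/-- The outcome `ω` is spread when the conditional probabilities given `w` of the values of the two
sources `a` and `b` at `ω`, jointly and separately, are not too large. -/
def Spread (P : Ω → ℝ) (a : Ω → A) (b : Ω → B) (w : Ω → C) (γ₁₂ γ₁ γ₂ : ℝ) (ω : Ω) : Prop :=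
  condProb P (fun ω => (a ω, b ω)) w (a ω, b ω) (w ω) ≤ γ₁₂ ∧
    condProb P a w (a ω) (w ω) ≤ γ₁ ∧ condProb P b w (b ω) (w ω) ≤ γ₂

lemma avg_avg_sum_abs_centered_spread_le (hP : ∀ ω, 0 ≤ P ω) (hh : PairUnif μ h)
    (hg : PairUnif ν g) (a : Ω → A) (b : Ω → B) (w : Ω → C) {γ₁₂ γ₁ γ₂ : ℝ}
    (h₁₂ : 0 ≤ γ₁₂) (h₁ : 0 ≤ γ₁) (h₂ : 0 ≤ γ₂) (c : C) :
    avg μ (fun φ => avg ν fun ψ => ∑ j,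
      |avg (fun ω => P ω * ind (w ω = c ∧ Spread P a b w γ₁₂ γ₁ γ₂ ω)) fun ω =>
        ind ((h φ (a ω), g ψ (b ω)) = j) - (Fintype.card (K × L) : ℝ)⁻¹|) ≤
      prob P (w · = c) * √(binVariance K L γ₁₂ γ₁ γ₂) := by
  set p : Ω → ℝ := fun ω => P ω * ind (w ω = c ∧ Spread P a b w γ₁₂ γ₁ γ₂ ω) with hp
  have hspread : ∀ ω, 0 < p ω → w ω = c ∧ Spread P a b w γ₁₂ γ₁ γ₂ ω := fun ω hω => by
    by_contra hn
    rw [hp] at hω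
    simp only [ind_not hn, mul_zero, lt_irrefl] at hω
  have hprob : ∀ E, prob p E ≤ prob P fun ω => E ω ∧ w ω = c := fun E => by
    refine sum_le_sum fun ω _ => ?_
    rw [mul_assoc, ← ind_and]
    exact mul_le_mul_of_nonneg_left (ind_mono fun hω => ⟨hω.2, hω.1.1⟩) (hP ω)
  refine avg_avg_sum_abs_centered_le hh hg (fun ω => mul_nonneg (hP ω) (ind_nonneg _)) a b ?_
    (fun ω hω => ?_) (fun ω hω => ?_) (fun ω hω => ?_) (binVariance_nonneg h₁₂ h₁ h₂)
  · exact sum_le_sum fun ω _ => mul_le_mul_of_nonneg_left (ind_mono And.left) (hP ω)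
  all_goals
    obtain ⟨rfl, hω₁₂, hω₁, hω₂⟩ := hspread ω hω
    refine (hprob _).trans ((le_of_eq ?_).trans
      (mul_le_mul_of_nonneg_right (by assumption) (prob_nonneg hP _)))
    rw [condProb_mul_prob hP]
  · exact prob_congr fun ω' => by rw [Prod.mk.injEq, eq_comm, eq_comm (a := b ω)]
  · exact prob_congr fun ω' => by rw [eq_comm]
  · exact prob_congr fun ω' => by rw [eq_comm]

lemma avg_avg_tvDist_bins_le [Fintype C] (hP : IsPMF P) (hh : PairUnif μ h) (hg : PairUnif ν g)
    (a : Ω → A) (b : Ω → B) (w : Ω → C) {γ₁₂ γ₁ γ₂ : ℝ}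
    (h₁₂ : 0 ≤ γ₁₂) (h₁ : 0 ≤ γ₁) (h₂ : 0 ≤ γ₂) :
    avg μ (fun φ => avg ν fun ψ =>
      tvDist (lawOf P fun ω => (w ω, (h φ (a ω), g ψ (b ω))))
        fun x => lawOf P w x.1 * unif (K × L) x.2) ≤
      prob P (fun ω => ¬Spread P a b w γ₁₂ γ₁ γ₂ ω) +
        1 / 2 * √(binVariance K L γ₁₂ γ₁ γ₂) := by
  set spread := Spread P a b w γ₁₂ γ₁ γ₂
  calc _ ≤ avg μ (fun φ => avg ν fun ψ => prob P (fun ω => ¬spread ω) + 1 / 2 * ∑ c, ∑ j,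
        |avg (fun ω => P ω * ind (w ω = c ∧ spread ω)) fun ω =>
          ind ((h φ (a ω), g ψ (b ω)) = j) - (Fintype.card (K × L) : ℝ)⁻¹|) :=
        avg_mono hh.pmf.1 fun φ _ => avg_mono hg.pmf.1 fun ψ _ =>
          tvDist_lawOf_prod_unif_le hP.1 w _ spread
    _ = prob P (fun ω => ¬spread ω) + 1 / 2 * ∑ c, avg μ (fun φ => avg ν fun ψ => ∑ j,
        |avg (fun ω => P ω * ind (w ω = c ∧ spread ω)) fun ω =>
          ind ((h φ (a ω), g ψ (b ω)) = j) - (Fintype.card (K × L) : ℝ)⁻¹|) := by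
        simp only [avg_add, avg_const_mul, hg.pmf.avg_const, hh.pmf.avg_const, avg_sum]
    _ ≤ prob P (fun ω => ¬spread ω) + 1 / 2 * ∑ c, lawOf P w c *
        √(binVariance K L γ₁₂ γ₁ γ₂) := by
        gcongr with c
        exact avg_avg_sum_abs_centered_spread_le hP.1 hh hg a b w h₁₂ h₁ h₂ c
    _ = _ := by rw [← sum_mul, (isPMF_lawOf hP w).2, one_mul]

lemma avg_tvDist_bin_le [Fintype C] (hP : IsPMF P) (hh : PairUnif μ h) (a : Ω → A) (w : Ω → C)
    {γ : ℝ} (hγ : 0 ≤ γ) :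
    avg μ (fun φ => tvDist (lawOf P fun ω => (w ω, h φ (a ω)))
      fun x => lawOf P w x.1 * unif K x.2) ≤
      prob P (fun ω => ¬condProb P a w (a ω) (w ω) ≤ γ) +
        1 / 2 * √((Fintype.card K - 1) * γ) := by
  have hunit : PairUnif (unif Unit) fun _ (b : Unit) => b :=
    ⟨isPMF_unif Unit, fun _ _ => rfl,
      fun _ _ hne => (hne rfl).elim⟩
  have hbins := avg_avg_tvDist_bins_le hP hh hunit a (fun _ => ()) w hγ hγ zero_le_one
  have hreindex : ∀ φ, tvDist (lawOf P fun ω => (w ω, (h φ (a ω), ())))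
      (fun x => lawOf P w x.1 * unif (K × Unit) x.2) =
      tvDist (lawOf P fun ω => (w ω, h φ (a ω))) fun x => lawOf P w x.1 * unif K x.2 := fun φ => by
    rw [← tvDist_comp_equiv ((Equiv.refl C).prodCongr (Equiv.prodPUnit K).symm)]
    congr 1 <;> funext x
    · exact prob_congr fun ω => by simp [Prod.ext_iff]
    · simp [unif]
  simp only [hreindex, (isPMF_unif Unit).avg_const] at hbins
  refine hbins.trans (add_le_add (prob_mono hP.1 fun ω _ hne hle => hne ⟨?_, hle, ?_⟩) ?_)
  · simpa [condProb] using hle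
  · exact condProb_le_one hP.1 _ _ _ _
  · simp [binVariance]

end Resolvability

section Decoding

variable {Ω A B C K L Φ Ψ : Type*} [Fintype Ω] [Fintype Φ] [Fintype Ψ]
  {P : Ω → ℝ} {μ : Φ → ℝ} {ν : Ψ → ℝ} {h : Φ → A → K} {g : Ψ → B → L}

/-- The binning decoder: some pair that lies in the given bins and is plausible given the side
information. -/
noncomputable def decode {A B C K L : Type*} [Nonempty (A × B)] (plausible : A → B → C → Prop)
    (h : A → K) (g : B → L) (k : K) (l : L) (c : C) : A × B :=
  Classical.epsilon fun x => h x.1 = k ∧ g x.2 = l ∧ plausible x.1 x.2 c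

lemma ind_decode_ne_le [Fintype A] [Fintype B] [Nonempty (A × B)] (plausible : A → B → C → Prop)
    (h : A → K) (g : B → L) (a : A) (b : B) (c : C) :
    ind (decode plausible h g (h a) (g b) c ≠ (a, b)) ≤
      ind (¬plausible a b c) + ∑ a', ind (a ≠ a' ∧ h a = h a') * ind (plausible a' b c) +
        ∑ b', ind (b ≠ b' ∧ g b = g b') * ind (plausible a b' c) +
        ∑ a', ∑ b', ind (a ≠ a' ∧ h a = h a') * (ind (b ≠ b' ∧ g b = g b') *
          ind (plausible a' b' c)) := by
  have hcases : decode plausible h g (h a) (g b) c ≠ (a, b) →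
      ((¬plausible a b c ∨ ∃ a', (a ≠ a' ∧ h a = h a') ∧ plausible a' b c) ∨
        ∃ b', (b ≠ b' ∧ g b = g b') ∧ plausible a b' c) ∨
        ∃ a' b', (a ≠ a' ∧ h a = h a') ∧ (b ≠ b' ∧ g b = g b') ∧ plausible a' b' c := fun hne => by
    by_cases hab : plausible a b c
    swap
    · exact .inl (.inl (.inl hab))
    have hspec : h (decode plausible h g (h a) (g b) c).1 = h a ∧
        g (decode plausible h g (h a) (g b) c).2 = g b ∧
        plausible (decode plausible h g (h a) (g b) c).1 (decode plausible h g (h a) (g b) c).2 c :=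
      Classical.epsilon_spec (p := fun x : A × B => h x.1 = h a ∧ g x.2 = g b ∧ plausible x.1 x.2 c)
        ⟨(a, b), rfl, rfl, hab⟩
    generalize decode plausible h g (h a) (g b) c = x at hne hspec
    obtain ⟨a', b'⟩ := x
    grind
  simp only [← ind_and]
  refine (ind_mono hcases).trans ((ind_or_le _ _).trans (add_le_add ((ind_or_le _ _).trans
    (add_le_add ((ind_or_le _ _).trans (add_le_add le_rfl (ind_exists_le _)))
      (ind_exists_le _))) ?_))
  exact (ind_exists_le _).trans (sum_le_sum fun a' _ => ind_exists_le _)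

lemma sum_ind_le_condProb_le [Fintype A] {γ : Type*} (hP : ∀ ω, 0 ≤ P ω) (f : Ω → A)
    (w : Ω → γ) (c : γ) {κ : ℝ} (hκ : 0 < κ) : ∑ a, ind (κ ≤ condProb P f w a c) ≤ κ⁻¹ := by
  rw [← one_div, le_div_iff₀ hκ, sum_mul]
  refine (sum_le_sum fun a _ => ?_).trans (sum_condProb_le_one P f w c)
  by_cases ha : κ ≤ condProb P f w a c
  · rwa [ind_of ha, one_mul]
  · rw [ind_not ha, zero_mul]
    exact condProb_nonneg hP _ _ _ _

/-- The plausibility test of the Slepian–Wolf decoder: the conditional probabilities of each source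
given the other one and the side information, and of both given the side information, are not too
small. -/
def Plausible (P : Ω → ℝ) (f₁ : Ω → A) (f₂ : Ω → B) (w : Ω → C) (κ₁ κ₂ κ₁₂ : ℝ)
    (a : A) (b : B) (c : C) : Prop :=
  κ₁ ≤ condProb P f₁ (fun ω => (f₂ ω, w ω)) a (b, c) ∧
    κ₂ ≤ condProb P f₂ (fun ω => (f₁ ω, w ω)) b (a, c) ∧
    κ₁₂ ≤ condProb P (fun ω => (f₁ ω, f₂ ω)) w (a, b) c

variable [Fintype K] [Nonempty K] [Fintype L] [Nonempty L] [Nonempty (A × B)]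
  [Finite A] [Finite B]

lemma avg_avg_ind_decode_ne_le (hP : ∀ ω, 0 ≤ P ω) (hh : PairUnif μ h) (hg : PairUnif ν g)
    (f₁ : Ω → A) (f₂ : Ω → B) (w : Ω → C) {κ₁ κ₂ κ₁₂ : ℝ} (h₁ : 0 < κ₁) (h₂ : 0 < κ₂)
    (h₁₂ : 0 < κ₁₂) (a : A) (b : B) (c : C) :
    avg μ (fun φ => avg ν fun ψ =>
      ind (decode (Plausible P f₁ f₂ w κ₁ κ₂ κ₁₂) (h φ) (g ψ) (h φ a) (g ψ b) c ≠ (a, b))) ≤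
      ind (¬Plausible P f₁ f₂ w κ₁ κ₂ κ₁₂ a b c) + (Fintype.card K : ℝ)⁻¹ * κ₁⁻¹ +
        (Fintype.card L : ℝ)⁻¹ * κ₂⁻¹ +
        (Fintype.card K : ℝ)⁻¹ * ((Fintype.card L : ℝ)⁻¹ * κ₁₂⁻¹) := by
  cases nonempty_fintype A
  cases nonempty_fintype B
  have hK := hh.avg_ind_ne_and_le a
  have hL := hg.avg_ind_ne_and_le b
  refine (avg_mono hh.pmf.1 fun φ _ => avg_mono hg.pmf.1 fun ψ _ =>
    ind_decode_ne_le (Plausible P f₁ f₂ w κ₁ κ₂ κ₁₂) (h φ) (g ψ) a b c).trans ?_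
  simp only [avg_add, avg_sum, avg_const_mul, avg_mul_const, hg.pmf.avg_const, hh.pmf.avg_const]
  refine add_le_add (add_le_add (add_le_add le_rfl ?_) ?_) ?_
  · refine (sum_le_sum fun a' _ => mul_le_mul (hK a') (ind_mono And.left) (ind_nonneg _)
      (by positivity)).trans ?_
    rw [← mul_sum]
    gcongr
    exact sum_ind_le_condProb_le hP _ _ _ h₁
  · refine (sum_le_sum fun b' _ => mul_le_mul (hL b') (ind_mono fun h => h.2.1) (ind_nonneg _)
      (by positivity)).trans ?_
    rw [← mul_sum]
    gcongr
    exact sum_ind_le_condProb_le hP _ _ _ h₂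
  · refine (sum_le_sum fun a' _ => sum_le_sum fun b' _ => mul_le_mul (hK a')
      (mul_le_mul (hL b') (ind_mono fun h => h.2.2) (ind_nonneg _) (by positivity))
      (mul_nonneg (avg_nonneg hg.pmf.1 fun _ => ind_nonneg _) (ind_nonneg _))
      (by positivity)).trans ?_
    simp only [← mul_sum]
    rw [← Fintype.sum_prod_type' fun a' b' =>
      ind (κ₁₂ ≤ condProb P (fun ω => (f₁ ω, f₂ ω)) w (a', b') c)]
    gcongr
    exact sum_ind_le_condProb_le hP _ _ _ h₁₂

lemma avg_avg_prob_decode_ne_le (hP : IsPMF P) (hh : PairUnif μ h) (hg : PairUnif ν g)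
    (a : Ω → A) (b : Ω → B) (w : Ω → C) {κ₁ κ₂ κ₁₂ : ℝ} (h₁ : 0 < κ₁) (h₂ : 0 < κ₂)
    (h₁₂ : 0 < κ₁₂) :
    avg μ (fun φ => avg ν fun ψ => prob P fun ω =>
      decode (Plausible P a b w κ₁ κ₂ κ₁₂) (h φ) (g ψ) (h φ (a ω)) (g ψ (b ω)) (w ω) ≠
        (a ω, b ω)) ≤
      prob P (fun ω => ¬Plausible P a b w κ₁ κ₂ κ₁₂ (a ω) (b ω) (w ω)) +
        (Fintype.card K : ℝ)⁻¹ * κ₁⁻¹ + (Fintype.card L : ℝ)⁻¹ * κ₂⁻¹ +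
        (Fintype.card K : ℝ)⁻¹ * ((Fintype.card L : ℝ)⁻¹ * κ₁₂⁻¹) := by
  simp only [prob]
  rw [avg_avg_avg_comm]
  refine (avg_mono hP.1 fun ω _ => avg_avg_ind_decode_ne_le hP.1 hh hg a b w h₁ h₂ h₁₂
    (a ω) (b ω) (w ω)).trans_eq ?_
  simp only [avg_add, hP.avg_const]

end Decoding

/-! ### One-shot coding -/

/-- A code with finite alphabets: two randomized encoders, each with its own shared randomness, and
a randomized decoder that sees both shared randomness variables, both messages and the side
information. -/
structure Code (S₁ S₂ M₁ M₂ X₁ X₂ Z Y : Type*) [Fintype M₁] [Fintype M₂] [Fintype Y] where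
  enc₁ : S₁ → X₁ → M₁ → ℝ
  enc₂ : S₂ → X₂ → M₂ → ℝ
  dec : S₁ → S₂ → M₁ → M₂ → Z → Y → ℝ
  enc₁_pmf : ∀ s x, IsPMF (enc₁ s x)
  enc₂_pmf : ∀ s x, IsPMF (enc₂ s x)
  dec_pmf : ∀ s₁ s₂ m₁ m₂ z, IsPMF (dec s₁ s₂ m₁ m₂ z)

/-- The channel from the sources to the output of a code whose shared randomness variables are
independent with laws `π₁` and `π₂`. -/
noncomputable def Code.channel {S₁ S₂ M₁ M₂ X₁ X₂ Z Y : Type*} [Fintype S₁] [Fintype S₂]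
    [Fintype M₁] [Fintype M₂] [Fintype Y] (C : Code S₁ S₂ M₁ M₂ X₁ X₂ Z Y)
    (π₁ : S₁ → ℝ) (π₂ : S₂ → ℝ) (x₁ : X₁) (x₂ : X₂) (z : Z) (y : Y) : ℝ :=
  avg π₁ fun s₁ => avg π₂ fun s₂ => avg (C.enc₁ s₁ x₁) fun m₁ => avg (C.enc₂ s₂ x₂) fun m₂ =>
    C.dec s₁ s₂ m₁ m₂ z y

lemma Code.avg_channel {S₁ S₂ M₁ M₂ X₁ X₂ Z Y : Type*} [Fintype S₁] [Fintype S₂]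
    [Fintype M₁] [Fintype M₂] [Fintype Y] (C : Code S₁ S₂ M₁ M₂ X₁ X₂ Z Y)
    (π₁ : S₁ → ℝ) (π₂ : S₂ → ℝ) (x₁ : X₁) (x₂ : X₂) (z : Z) (F : Y → ℝ) :
    avg (C.channel π₁ π₂ x₁ x₂ z) F = avg π₁ fun s₁ => avg π₂ fun s₂ =>
      avg (C.enc₁ s₁ x₁) fun m₁ => avg (C.enc₂ s₂ x₂) fun m₂ => avg (C.dec s₁ s₂ m₁ m₂ z) F := by
  unfold Code.channel
  rw [avg_mixture]
  simp only [avg_mixture]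

lemma Code.tvDist_channel_le {S₁ S₂ M₁ M₂ X₁ X₂ Z Y : Type*} [Fintype S₁] [Fintype S₂]
    [Fintype M₁] [Fintype M₂] [Fintype Y] (C : Code S₁ S₂ M₁ M₂ X₁ X₂ Z Y)
    {π₁ π₁' : S₁ → ℝ} {π₂ π₂' : S₂ → ℝ} (h₁ : IsPMF π₁') (h₂ : IsPMF π₂) (x₁ : X₁) (x₂ : X₂)
    (z : Z) :
    tvDist (C.channel π₁ π₂ x₁ x₂ z) (C.channel π₁' π₂' x₁ x₂ z) ≤
      tvDist π₁ π₁' + tvDist π₂ π₂' := by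
  obtain ⟨F, hF, hFeq⟩ := exists_avg_sub_avg_eq (C.channel π₁ π₂ x₁ x₂ z)
    (C.channel π₁' π₂' x₁ x₂ z)
  rw [C.avg_channel, C.avg_channel] at hFeq
  have hle := avg_avg_sub_avg_avg_le (p := π₁) (r' := π₂') h₁ h₂ (F := fun s₁ s₂ =>
    avg (C.enc₁ s₁ x₁) fun m₁ => avg (C.enc₂ s₂ x₂) fun m₂ => avg (C.dec s₁ s₂ m₁ m₂ z) F)
    fun s₁ s₂ => (C.enc₁_pmf s₁ x₁).abs_avg_le_one fun m₁ =>
      (C.enc₂_pmf s₂ x₂).abs_avg_le_one fun m₂ => (C.dec_pmf s₁ s₂ m₁ m₂ z).abs_avg_le_one hF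
  linarith

/-- The code that applies `C` to functions `σ₁`, `σ₂` of its shared randomness variables. -/
def Code.comap {S₁ S₂ S₁' S₂' M₁ M₂ X₁ X₂ Z Y : Type*} [Fintype M₁] [Fintype M₂] [Fintype Y]
    (C : Code S₁ S₂ M₁ M₂ X₁ X₂ Z Y) (σ₁ : S₁' → S₁) (σ₂ : S₂' → S₂) :
    Code S₁' S₂' M₁ M₂ X₁ X₂ Z Y where
  enc₁ s := C.enc₁ (σ₁ s)
  enc₂ s := C.enc₂ (σ₂ s)
  dec s₁ s₂ := C.dec (σ₁ s₁) (σ₂ s₂)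
  enc₁_pmf _ := C.enc₁_pmf _
  enc₂_pmf _ := C.enc₂_pmf _
  dec_pmf _ _ := C.dec_pmf _ _

lemma Code.channel_comap {S₁ S₂ S₁' S₂' M₁ M₂ X₁ X₂ Z Y : Type*} [Fintype S₁] [Fintype S₂]
    [Fintype S₁'] [Fintype S₂'] [Fintype M₁] [Fintype M₂] [Fintype Y]
    (C : Code S₁ S₂ M₁ M₂ X₁ X₂ Z Y) (σ₁ : S₁' → S₁) (σ₂ : S₂' → S₂) (π₁ : S₁' → ℝ)
    (π₂ : S₂' → ℝ) :
    (C.comap σ₁ σ₂).channel π₁ π₂ = C.channel (lawOf π₁ σ₁) (lawOf π₂ σ₂) := by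
  funext x₁ x₂ z y
  simp only [Code.channel, avg_lawOf]
  rfl

section BinCond

variable {U I M : Type*} [Fintype U] [Fintype M] {κ : U → ℝ}

open Classical in
/-- The conditional law of the second bin index of `U ∼ κ` given the first one; the uniform law if
the conditioning event has probability `0`. -/
noncomputable def binCond (κ : U → ℝ) (h : U → I × M) (i : I) : M → ℝ :=
  if prob κ (fun u => (h u).1 = i) = 0 then unif M
  else fun m => condProb κ (fun u => (h u).2) (fun u => (h u).1) m i

lemma isPMF_binCond [Nonempty M] (hκ : ∀ u, 0 ≤ κ u) (h : U → I × M) (i : I) :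
    IsPMF (binCond κ h i) := by
  unfold binCond
  split_ifs with hi
  · exact isPMF_unif M
  · refine ⟨fun m => condProb_nonneg hκ _ _ _ _, ?_⟩
    simp only [condProb, ← sum_div]
    rw [sum_prob_eq_and, div_self hi]

lemma prob_mul_binCond (hκ : ∀ u, 0 ≤ κ u) (h : U → I × M) (i : I) (m : M) :
    prob κ (fun u => (h u).1 = i) * binCond κ h i m =
      prob κ fun u => (h u).2 = m ∧ (h u).1 = i := by
  rw [← condProb_mul_prob hκ, mul_comm, binCond]
  split_ifs with hi
  · rw [hi, mul_zero, mul_zero]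
  · rfl

lemma avg_lawOf_avg_binCond [Fintype I] (hκ : ∀ u, 0 ≤ κ u) (h : U → I × M) (F : I → M → ℝ) :
    avg (lawOf κ fun u => (h u).1) (fun i => avg (binCond κ h i) (F i)) =
      avg κ fun u => F (h u).1 (h u).2 := by
  rw [avg_eq_sum_prob κ (fun u => (h u).2) (fun u => (h u).1) fun m i => F i m, sum_comm]
  simp only [← prob_mul_binCond hκ, mul_assoc, ← mul_sum]
  rfl

end BinCond

/-- A joint law of sources, auxiliary variables and output in which `u₁ — x₁ — src`,
`u₂ — x₂ — (src, u₁)` and `y — (u₁, u₂, z) — src` are Markov chains, with kernels `k₁`, `k₂`, `kY`.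
The observations `x₁`, `x₂`, `z` of the terminals are functions of the source `src`; the random
variables live on the sample space `Ω`. -/
structure TestLaw (Ω Ξ X₁ X₂ Z U₁ U₂ Y : Type*) [Fintype Ω] [Fintype U₁] [Fintype U₂]
    [Fintype Y] where
  law : Ω → ℝ
  law_pmf : IsPMF law
  src : Ω → Ξ
  u₁ : Ω → U₁
  u₂ : Ω → U₂
  y : Ω → Y
  x₁ : Ξ → X₁
  x₂ : Ξ → X₂
  z : Ξ → Z
  k₁ : X₁ → U₁ → ℝ
  k₂ : X₂ → U₂ → ℝ
  kY : U₁ → U₂ → Z → Y → ℝ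
  k₁_pmf : ∀ x, IsPMF (k₁ x)
  k₂_pmf : ∀ x, IsPMF (k₂ x)
  kY_pmf : ∀ a b c, IsPMF (kY a b c)
  prob_eq : ∀ ξ a b c, prob law (fun ω => src ω = ξ ∧ u₁ ω = a ∧ u₂ ω = b ∧ y ω = c) =
    prob law (src · = ξ) * k₁ (x₁ ξ) a * k₂ (x₂ ξ) b * kY a b (z ξ) c

namespace TestLaw

variable {Ω Ξ X₁ X₂ Z U₁ U₂ Y : Type*} [Fintype Ω] [Fintype U₁] [Fintype U₂]
  [Fintype Y] (N : TestLaw Ω Ξ X₁ X₂ Z U₁ U₂ Y)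

/-- The conditional law of the output given the sources. -/
noncomputable def channel (ξ : Ξ) (y : Y) : ℝ :=
  avg (N.k₁ (N.x₁ ξ)) fun a => avg (N.k₂ (N.x₂ ξ)) fun b => N.kY a b (N.z ξ) y

/-- The expected total variation distance between the output of a code with uniform shared
randomness and the target output, given the sources. -/
noncomputable def simError [Fintype Ξ] {S₁ S₂ M₁ M₂ : Type*} [Fintype S₁] [Fintype S₂] [Fintype M₁]
    [Fintype M₂] (C : Code S₁ S₂ M₁ M₂ X₁ X₂ Z Y) : ℝ :=
  avg (lawOf N.law N.src) fun ξ =>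
    tvDist (C.channel (unif S₁) (unif S₂) (N.x₁ ξ) (N.x₂ ξ) (N.z ξ)) (N.channel ξ)

lemma simError_nonneg [Fintype Ξ] {S₁ S₂ M₁ M₂ : Type*} [Fintype S₁] [Fintype S₂] [Fintype M₁]
    [Fintype M₂] (C : Code S₁ S₂ M₁ M₂ X₁ X₂ Z Y) : 0 ≤ N.simError C :=
  avg_nonneg (isPMF_lawOf N.law_pmf N.src).1 fun _ => tvDist_nonneg _ _

lemma simError_comap_le [Fintype Ξ] {S₁ S₂ S₁' S₂' M₁ M₂ : Type*} [Fintype S₁] [Nonempty S₁]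
    [Fintype S₂] [Fintype S₁'] [Fintype S₂'] [Nonempty S₂'] [Fintype M₁] [Fintype M₂]
    (C : Code S₁ S₂ M₁ M₂ X₁ X₂ Z Y) (σ₁ : S₁' → S₁) (σ₂ : S₂' → S₂) :
    N.simError (C.comap σ₁ σ₂) ≤ N.simError C +
      (tvDist (lawOf (unif S₁') σ₁) (unif S₁) + tvDist (lawOf (unif S₂') σ₂) (unif S₂)) := by
  have hsrc := isPMF_lawOf N.law_pmf N.src
  rw [simError, simError, ← hsrc.avg_const (tvDist (lawOf (unif S₁') σ₁) (unif S₁) +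
    tvDist (lawOf (unif S₂') σ₂) (unif S₂)), ← avg_add]
  refine avg_mono hsrc.1 fun ξ _ => ?_
  rw [C.channel_comap, add_comm]
  exact (tvDist_triangle _ _ _).trans <| add_le_add_left
    (C.tvDist_channel_le (isPMF_unif S₁) (isPMF_lawOf (isPMF_unif S₂') σ₂) _ _ _) _

lemma avg_law [Fintype Ξ] (F : Ξ → U₁ → U₂ → Y → ℝ) :
    avg N.law (fun ω => F (N.src ω) (N.u₁ ω) (N.u₂ ω) (N.y ω)) =
      avg (lawOf N.law N.src) fun ξ => avg (N.k₁ (N.x₁ ξ)) fun a => avg (N.k₂ (N.x₂ ξ)) fun b =>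
        avg (N.kY a b (N.z ξ)) (F ξ a b) := by
  have hjoint := avg_lawOf N.law (fun ω => (N.src ω, N.u₁ ω, N.u₂ ω, N.y ω)) fun v =>
    F v.1 v.2.1 v.2.2.1 v.2.2.2
  rw [← hjoint]
  simp only [avg, Fintype.sum_prod_type, lawOf, Prod.mk.injEq, N.prob_eq, mul_sum, mul_assoc]

lemma avg_channel (ξ : Ξ) (F : Y → ℝ) :
    avg (N.channel ξ) F = avg (N.k₁ (N.x₁ ξ)) fun a => avg (N.k₂ (N.x₂ ξ)) fun b =>
      avg (N.kY a b (N.z ξ)) F := by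
  unfold channel
  rw [avg_mixture]
  simp only [avg_mixture]

lemma avg_tvDist_lawOf_k₁ [Fintype Ξ] [Fintype X₁] {K : Type*} [Fintype K] (h : U₁ → K)
    (π : K → ℝ) :
    avg (lawOf N.law N.src) (fun ξ => tvDist (lawOf (N.k₁ (N.x₁ ξ)) h) π) =
      tvDist (lawOf N.law fun ω => (N.x₁ (N.src ω), h (N.u₁ ω)))
        fun v => lawOf N.law (fun ω => N.x₁ (N.src ω)) v.1 * π v.2 := by
  rw [avg_lawOf]
  refine (tvDist_lawOf_pair_prod N.law_pmf.1 (fun F => ?_) h π).symm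
  rw [N.avg_law fun ξ a _ _ => F (N.x₁ ξ) a, avg_lawOf]
  simp only [(N.k₂_pmf _).avg_const, (N.kY_pmf _ _ _).avg_const]

lemma avg_tvDist_lawOf_k₂ [Fintype Ξ] [Fintype X₂] {K : Type*} [Fintype K] (g : U₂ → K)
    (π : K → ℝ) :
    avg (lawOf N.law N.src) (fun ξ => tvDist (lawOf (N.k₂ (N.x₂ ξ)) g) π) =
      tvDist (lawOf N.law fun ω => (N.x₂ (N.src ω), g (N.u₂ ω)))
        fun v => lawOf N.law (fun ω => N.x₂ (N.src ω)) v.1 * π v.2 := by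
  rw [avg_lawOf]
  refine (tvDist_lawOf_pair_prod N.law_pmf.1 (fun F => ?_) g π).symm
  rw [N.avg_law fun ξ _ b _ => F (N.x₂ ξ) b, avg_lawOf]
  simp only [(N.k₁_pmf _).avg_const, (N.kY_pmf _ _ _).avg_const]

lemma avg_kY_estimate_le [Fintype Ξ] (E : Ξ → U₁ → U₂ → U₁ × U₂) {H : Ξ → U₁ → U₂ → Y → ℝ}
    (hH : ∀ ξ a b y, |H ξ a b y| ≤ 1) :
    avg (lawOf N.law N.src) (fun ξ => avg (N.k₁ (N.x₁ ξ)) fun a => avg (N.k₂ (N.x₂ ξ)) fun b =>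
      avg (N.kY (E ξ a b).1 (E ξ a b).2 (N.z ξ)) (H ξ a b)) ≤
      avg N.law (fun ω => H (N.src ω) (N.u₁ ω) (N.u₂ ω) (N.y ω)) +
        2 * prob N.law fun ω => E (N.src ω) (N.u₁ ω) (N.u₂ ω) ≠ (N.u₁ ω, N.u₂ ω) := by
  have hpt : ∀ ξ a b, avg (N.kY (E ξ a b).1 (E ξ a b).2 (N.z ξ)) (H ξ a b) ≤
      avg (N.kY a b (N.z ξ)) fun y => H ξ a b y + 2 * ind (E ξ a b ≠ (a, b)) := fun ξ a b => by
    rw [avg_add, (N.kY_pmf _ _ _).avg_const]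
    by_cases hE : E ξ a b = (a, b)
    · rw [hE, ind_not (not_not_intro rfl), mul_zero, add_zero]
    · have hl := abs_le.mp ((N.kY_pmf (E ξ a b).1 (E ξ a b).2 (N.z ξ)).abs_avg_le_one (hH ξ a b))
      have hr := abs_le.mp ((N.kY_pmf a b (N.z ξ)).abs_avg_le_one (hH ξ a b))
      rw [ind_of hE]
      linarith [hl.2, hr.1]
  rw [prob, ← avg_const_mul, ← avg_add,
    N.avg_law fun ξ a b y => H ξ a b y + 2 * ind (E ξ a b ≠ (a, b))]
  exact avg_mono (isPMF_lawOf N.law_pmf _).1 fun ξ _ => avg_mono (N.k₁_pmf _).1 fun a _ =>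
    avg_mono (N.k₂_pmf _).1 fun b _ => hpt ξ a b

section BinCode

variable {S₁ S₂ F₁ F₂ M₁ M₂ : Type*} [Fintype M₁] [Nonempty M₁] [Fintype M₂] [Nonempty M₂]
  (h : U₁ → (S₁ × F₁) × M₁) (g : U₂ → (S₂ × F₂) × M₂)
  (D : (S₁ × F₁) × M₁ → (S₂ × F₂) × M₂ → Z → U₁ × U₂)

/-- The code obtained from binnings `h` and `g` of the auxiliary alphabets and a decoder `D` of bin
indices. The first index of a bin is shared randomness, the second one is frozen to the value `f`,
and the third one is the message. -/
noncomputable def binCode (f₁ : F₁) (f₂ : F₂) : Code S₁ S₂ M₁ M₂ X₁ X₂ Z Y where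
  enc₁ s x := binCond (N.k₁ x) h (s, f₁)
  enc₂ s x := binCond (N.k₂ x) g (s, f₂)
  dec s₁ s₂ m₁ m₂ z := N.kY (D ((s₁, f₁), m₁) ((s₂, f₂), m₂) z).1
    (D ((s₁, f₁), m₁) ((s₂, f₂), m₂) z).2 z
  enc₁_pmf _ x := isPMF_binCond (N.k₁_pmf x).1 h _
  enc₂_pmf _ x := isPMF_binCond (N.k₂_pmf x).1 g _
  dec_pmf _ _ _ _ z := N.kY_pmf _ _ z

variable [Fintype S₁] [Fintype S₂] [Nonempty S₂] [Fintype F₁] [Fintype F₂] [Nonempty F₂]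

lemma avg_avg_binCode_channel_le {G : F₁ → F₂ → Y → ℝ} (hG : ∀ f₁ f₂ y, |G f₁ f₂ y| ≤ 1) (ξ : Ξ) :
    avg (unif F₁) (fun f₁ => avg (unif F₂) fun f₂ =>
      avg ((N.binCode h g D f₁ f₂).channel (unif S₁) (unif S₂) (N.x₁ ξ) (N.x₂ ξ) (N.z ξ))
        (G f₁ f₂)) ≤
      avg (N.k₁ (N.x₁ ξ)) (fun a => avg (N.k₂ (N.x₂ ξ)) fun b =>
        avg (N.kY (D (h a) (g b) (N.z ξ)).1 (D (h a) (g b) (N.z ξ)).2 (N.z ξ))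
          (G (h a).1.2 (g b).1.2)) +
        2 * tvDist (lawOf (N.k₁ (N.x₁ ξ)) fun a => (h a).1) (unif (S₁ × F₁)) +
        2 * tvDist (lawOf (N.k₂ (N.x₂ ξ)) fun b => (g b).1) (unif (S₂ × F₂)) := by
  set W : S₁ × F₁ → S₂ × F₂ → ℝ := fun i j =>
    avg (binCond (N.k₁ (N.x₁ ξ)) h i) fun m₁ => avg (binCond (N.k₂ (N.x₂ ξ)) g j) fun m₂ =>
      avg (N.kY (D (i, m₁) (j, m₂) (N.z ξ)).1 (D (i, m₁) (j, m₂) (N.z ξ)).2 (N.z ξ)) (G i.2 j.2)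
  have hW : ∀ i j, |W i j| ≤ 1 := fun i j =>
    (isPMF_binCond (N.k₁_pmf _).1 h i).abs_avg_le_one fun m₁ =>
      (isPMF_binCond (N.k₂_pmf _).1 g j).abs_avg_le_one fun m₂ =>
        (N.kY_pmf _ _ _).abs_avg_le_one (hG _ _)
  have hcode : avg (unif F₁) (fun f₁ => avg (unif F₂) fun f₂ =>
      avg ((N.binCode h g D f₁ f₂).channel (unif S₁) (unif S₂) (N.x₁ ξ) (N.x₂ ξ) (N.z ξ))
        (G f₁ f₂)) = avg (unif (S₁ × F₁)) fun i => avg (unif (S₂ × F₂)) fun j => W i j := by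
    simp only [Code.avg_channel, avg_unif_prod]
    rw [avg_avg_avg_comm]
    refine congrArg (avg _) (funext fun s₁ => congrArg (avg _) (funext fun f₁ => ?_))
    rw [avg_comm]
    rfl
  have hbins : avg (lawOf (N.k₁ (N.x₁ ξ)) fun a => (h a).1) (fun i =>
      avg (lawOf (N.k₂ (N.x₂ ξ)) fun b => (g b).1) fun j => W i j) =
      avg (N.k₁ (N.x₁ ξ)) fun a => avg (N.k₂ (N.x₂ ξ)) fun b =>
        avg (N.kY (D (h a) (g b) (N.z ξ)).1 (D (h a) (g b) (N.z ξ)).2 (N.z ξ))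
          (G (h a).1.2 (g b).1.2) := by
    simp only [W, avg_comm (lawOf (N.k₂ _) _), avg_lawOf_avg_binCond (N.k₂_pmf _).1,
      avg_lawOf_avg_binCond (N.k₁_pmf _).1]
  have hreplace := avg_avg_sub_avg_avg_le (p := unif (S₁ × F₁))
    (isPMF_lawOf (N.k₁_pmf (N.x₁ ξ)) fun a => (h a).1)
    (isPMF_unif (S₂ × F₂)) (r' := lawOf (N.k₂ (N.x₂ ξ)) fun b => (g b).1) hW
  rw [hcode, ← hbins, tvDist_comm _ (unif (S₁ × F₁)), tvDist_comm _ (unif (S₂ × F₂))]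
  linarith

lemma avg_avg_simError_binCode_le [Fintype Ξ] [Fintype X₁] [Fintype X₂] [Nonempty F₁] :
    avg (unif F₁) (fun f₁ => avg (unif F₂) fun f₂ => N.simError (N.binCode h g D f₁ f₂)) ≤
      tvDist (lawOf N.law fun ω => (N.x₁ (N.src ω), (h (N.u₁ ω)).1))
          (fun v => lawOf N.law (fun ω => N.x₁ (N.src ω)) v.1 * unif (S₁ × F₁) v.2) +
        tvDist (lawOf N.law fun ω => (N.x₂ (N.src ω), (g (N.u₂ ω)).1))
          (fun v => lawOf N.law (fun ω => N.x₂ (N.src ω)) v.1 * unif (S₂ × F₂) v.2) +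
        prob N.law (fun ω =>
          D (h (N.u₁ ω)) (g (N.u₂ ω)) (N.z (N.src ω)) ≠ (N.u₁ ω, N.u₂ ω)) +
        tvDist (lawOf N.law fun ω =>
            ((N.src ω, N.y ω), ((h (N.u₁ ω)).1.2, (g (N.u₂ ω)).1.2)))
          fun v => lawOf N.law (fun ω => (N.src ω, N.y ω)) v.1 * unif (F₁ × F₂) v.2 := by
  choose G hG hGeq using fun f₁ f₂ ξ => exists_avg_sub_avg_eq
    ((N.binCode h g D f₁ f₂).channel (unif S₁) (unif S₂) (N.x₁ ξ) (N.x₂ ξ) (N.z ξ)) (N.channel ξ)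
  have hcode := avg_mono (isPMF_lawOf N.law_pmf N.src).1 fun ξ _ =>
    N.avg_avg_binCode_channel_le h g D (G := fun f₁ f₂ => G f₁ f₂ ξ) (fun f₁ f₂ => hG f₁ f₂ ξ) ξ
  have hdecode := N.avg_kY_estimate_le (fun ξ a b => D (h a) (g b) (N.z ξ))
    (H := fun ξ a b => G (h a).1.2 (g b).1.2 ξ) fun ξ a b => hG _ _ ξ
  have hfreeze := (abs_le.mp <| abs_avg_sub_avg_le
    (lawOf N.law fun ω => ((N.src ω, N.y ω), ((h (N.u₁ ω)).1.2, (g (N.u₂ ω)).1.2)))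
    (fun v => lawOf N.law (fun ω => (N.src ω, N.y ω)) v.1 * unif (F₁ × F₂) v.2)
    (F := fun v => G v.2.1 v.2.2 v.1.1 v.1.2) fun v => hG _ _ _ _).2
  have htarget : avg N.law (fun ω => avg (unif F₁) fun f₁ => avg (unif F₂) fun f₂ =>
      G f₁ f₂ (N.src ω) (N.y ω)) = avg (unif F₁) fun f₁ => avg (unif F₂) fun f₂ =>
        avg (lawOf N.law N.src) fun ξ => avg (N.channel ξ) (G f₁ f₂ ξ) := by
    rw [avg_comm]
    refine congrArg (avg _) (funext fun f₁ => ?_)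
    rw [avg_comm]
    refine congrArg (avg _) (funext fun f₂ => ?_)
    rw [N.avg_law fun ξ _ _ y => G f₁ f₂ ξ y]
    simp only [N.avg_channel]
  have hsim : 2 * avg (unif F₁) (fun f₁ => avg (unif F₂) fun f₂ =>
      N.simError (N.binCode h g D f₁ f₂)) =
      avg (lawOf N.law N.src) (fun ξ => avg (unif F₁) fun f₁ => avg (unif F₂) fun f₂ =>
        avg ((N.binCode h g D f₁ f₂).channel (unif S₁) (unif S₂) (N.x₁ ξ) (N.x₂ ξ) (N.z ξ))
          (G f₁ f₂ ξ)) -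
      avg (unif F₁) fun f₁ => avg (unif F₂) fun f₂ =>
        avg (lawOf N.law N.src) fun ξ => avg (N.channel ξ) (G f₁ f₂ ξ) := by
    rw [← avg_avg_avg_comm]
    simp only [simError, ← avg_const_mul, ← hGeq, avg_sub]
  simp only [avg_add, avg_const_mul, avg_tvDist_lawOf_k₁, avg_tvDist_lawOf_k₂] at hcode
  rw [avg_lawOf, avg_prod, avg_lawOf] at hfreeze
  simp only [avg_unif_prod, htarget] at hfreeze
  linarith

end BinCode

section ExistsCode

variable [Fintype Ξ] [Finite X₁] [Finite X₂] (S₁ S₂ F₁ F₂ M₁ M₂ : Type*)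
  [Fintype S₁] [Nonempty S₁] [Fintype S₂] [Nonempty S₂] [Fintype F₁] [Nonempty F₁]
  [Fintype F₂] [Nonempty F₂] [Fintype M₁] [Nonempty M₁] [Fintype M₂] [Nonempty M₂]

lemma exists_code {β₁ β₂ γ₁₂ γ₁ γ₂ κ₁ κ₂ κ₁₂ : ℝ} (hβ₁ : 0 ≤ β₁) (hβ₂ : 0 ≤ β₂) (hγ₁₂ : 0 ≤ γ₁₂)
    (hγ₁ : 0 ≤ γ₁) (hγ₂ : 0 ≤ γ₂) (hκ₁ : 0 < κ₁) (hκ₂ : 0 < κ₂) (hκ₁₂ : 0 < κ₁₂) :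
    ∃ C : Code S₁ S₂ M₁ M₂ X₁ X₂ Z Y, N.simError C ≤
      (prob N.law (fun ω => ¬condProb N.law N.u₁ (fun ω => N.x₁ (N.src ω)) (N.u₁ ω)
          (N.x₁ (N.src ω)) ≤ β₁) + 1 / 2 * √((Fintype.card (S₁ × F₁) - 1) * β₁)) +
        (prob N.law (fun ω => ¬condProb N.law N.u₂ (fun ω => N.x₂ (N.src ω)) (N.u₂ ω)
          (N.x₂ (N.src ω)) ≤ β₂) + 1 / 2 * √((Fintype.card (S₂ × F₂) - 1) * β₂)) +
        (prob N.law (fun ω => ¬Plausible N.law N.u₁ N.u₂ (fun ω => N.z (N.src ω)) κ₁ κ₂ κ₁₂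
          (N.u₁ ω) (N.u₂ ω) (N.z (N.src ω))) +
          (Fintype.card ((S₁ × F₁) × M₁) : ℝ)⁻¹ * κ₁⁻¹ +
          (Fintype.card ((S₂ × F₂) × M₂) : ℝ)⁻¹ * κ₂⁻¹ +
          (Fintype.card ((S₁ × F₁) × M₁) : ℝ)⁻¹ *
            ((Fintype.card ((S₂ × F₂) × M₂) : ℝ)⁻¹ * κ₁₂⁻¹)) +
        (prob N.law (fun ω => ¬Spread N.law N.u₁ N.u₂ (fun ω => (N.src ω, N.y ω)) γ₁₂ γ₁ γ₂ ω) +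
          1 / 2 * √(binVariance F₁ F₂ γ₁₂ γ₁ γ₂)) := by
  classical
  cases nonempty_fintype X₁
  cases nonempty_fintype X₂
  obtain ⟨ω₀⟩ := N.law_pmf.nonempty
  have : Nonempty (U₁ × U₂) := ⟨(N.u₁ ω₀, N.u₂ ω₀)⟩
  have hh := pairUnif_pi U₁ ((S₁ × F₁) × M₁)
  have hg := pairUnif_pi U₂ ((S₂ × F₂) × M₂)
  have hh_enc := hh.comp (avg_unif_comp_fst (S₁ × F₁) M₁)
  have hg_enc := hg.comp (avg_unif_comp_fst (S₂ × F₂) M₂)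
  have hh_frozen := hh_enc.comp (avg_unif_comp_snd S₁ F₁)
  have hg_frozen := hg_enc.comp (avg_unif_comp_snd S₂ F₂)
  have henc₁ := avg_tvDist_bin_le N.law_pmf hh_enc N.u₁ (fun ω => N.x₁ (N.src ω)) hβ₁
  have henc₂ := avg_tvDist_bin_le N.law_pmf hg_enc N.u₂ (fun ω => N.x₂ (N.src ω)) hβ₂
  have hdec := avg_avg_prob_decode_ne_le N.law_pmf hh hg N.u₁ N.u₂ (fun ω => N.z (N.src ω))
    hκ₁ hκ₂ hκ₁₂
  have hfrozen := avg_avg_tvDist_bins_le N.law_pmf hh_frozen hg_frozen N.u₁ N.u₂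
    (fun ω => (N.src ω, N.y ω)) hγ₁₂ hγ₁ hγ₂
  set D := decode (Plausible N.law N.u₁ N.u₂ (fun ω => N.z (N.src ω)) κ₁ κ₂ κ₁₂)
  have hsim := avg_mono hh.pmf.1 fun φ _ => avg_mono hg.pmf.1 fun ψ _ =>
    N.avg_avg_simError_binCode_le φ ψ (D φ ψ)
  simp only [avg_add, hh.pmf.avg_const, hg.pmf.avg_const] at hsim
  obtain ⟨φ, hφ⟩ := hh.pmf.exists_le_of_avg_le <| hsim.trans <|
    add_le_add (add_le_add (add_le_add henc₁ henc₂) hdec) hfrozen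
  obtain ⟨ψ, hψ⟩ := hg.pmf.exists_le_of_avg_le hφ
  obtain ⟨f₁, hf₁⟩ := (isPMF_unif F₁).exists_le_of_avg_le hψ
  obtain ⟨f₂, hf₂⟩ := (isPMF_unif F₂).exists_le_of_avg_le hf₁
  exact ⟨_, hf₂⟩

end ExistsCode

end TestLaw

/-! ### Block coding -/

lemma cnum_pos (n : ℕ) (r : ℝ) : 0 < cnum n r := Nat.ceil_pos.mpr (by positivity)

instance (n : ℕ) (r : ℝ) : Nonempty (Fin (cnum n r)) := ⟨⟨0, cnum_pos n r⟩⟩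

lemma le_cnum (n : ℕ) (r : ℝ) : (2 : ℝ) ^ (n * r) ≤ cnum n r := Nat.le_ceil _

lemma cnum_sub_one_le (n : ℕ) (r : ℝ) : (cnum n r : ℝ) - 1 ≤ 2 ^ (n * r) :=
  sub_le_iff_le_add.mpr (Nat.ceil_lt_add_one (by positivity)).le

lemma tendsto_two_rpow_neg_mul {δ : ℝ} (hδ : 0 < δ) :
    Filter.Tendsto (fun n : ℕ => (2 : ℝ) ^ (-(n * δ))) Filter.atTop (nhds 0) :=
  (tendsto_rpow_atBot_of_base_gt_one 2 one_lt_two).comp <|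
    Filter.tendsto_neg_atTop_atBot.comp (tendsto_natCast_atTop_atTop.atTop_mul_const hδ)

lemma binVariance_cnum_le {r₁ r₂ h₁₂ h₁ h₂ δ : ℝ} (n : ℕ) (hr₁₂ : r₁ + r₂ + 2 * δ ≤ h₁₂)
    (hr₁ : r₁ + 2 * δ ≤ h₁) (hr₂ : r₂ + 2 * δ ≤ h₂) :
    binVariance (Fin (cnum n r₁)) (Fin (cnum n r₂)) (2 ^ (-(n * (h₁₂ - δ))))
      (2 ^ (-(n * (h₁ - δ)))) (2 ^ (-(n * (h₂ - δ)))) ≤ 3 * 2 ^ (-(n * δ)) := by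
  have hterm : ∀ {r h : ℝ}, r + 2 * δ ≤ h →
      (2 : ℝ) ^ (n * r) * 2 ^ (-(n * (h - δ))) ≤ 2 ^ (-(n * δ)) := fun {r h} hr => by
    rw [← Real.rpow_add two_pos, Real.rpow_le_rpow_left_iff one_lt_two]
    nlinarith [mul_le_mul_of_nonneg_left hr n.cast_nonneg]
  have hone : ∀ r, 0 ≤ (cnum n r : ℝ) - 1 := fun r => sub_nonneg.mpr (mod_cast cnum_pos n r)
  have hprod : ((cnum n r₁ : ℝ) - 1) * (cnum n r₂ - 1) ≤ 2 ^ (n * (r₁ + r₂)) := by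
    rw [mul_add, Real.rpow_add two_pos]
    exact mul_le_mul (cnum_sub_one_le n r₁) (cnum_sub_one_le n r₂) (hone r₂) (by positivity)
  rw [binVariance, Fintype.card_fin, Fintype.card_fin]
  calc _ ≤ (2 : ℝ) ^ (n * (r₁ + r₂)) * 2 ^ (-(n * (h₁₂ - δ))) +
        2 ^ (n * r₁) * 2 ^ (-(n * (h₁ - δ))) + 2 ^ (n * r₂) * 2 ^ (-(n * (h₂ - δ))) := by
        gcongr <;> exact cnum_sub_one_le n _
    _ ≤ _ := by linarith [hterm hr₁₂, hterm hr₁, hterm hr₂]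

lemma inv_mul_inv_two_rpow_le {N r h δ : ℝ} {n : ℕ} (hN : (2 : ℝ) ^ (n * r) ≤ N)
    (hr : h + 2 * δ ≤ r) : N⁻¹ * ((2 : ℝ) ^ (-(n * (h + δ))))⁻¹ ≤ 2 ^ (-(n * δ)) := by
  rw [Real.rpow_neg two_pos.le, inv_inv]
  calc _ ≤ ((2 : ℝ) ^ (n * r))⁻¹ * 2 ^ (n * (h + δ)) := by gcongr
    _ ≤ _ := by
      rw [← Real.rpow_neg two_pos.le, ← Real.rpow_add two_pos,
        Real.rpow_le_rpow_left_iff one_lt_two]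
      nlinarith [mul_le_mul_of_nonneg_left hr n.cast_nonneg]

lemma two_rpow_mul_add_le {n : ℕ} {r r' x y : ℝ} (hx : (2 : ℝ) ^ (n * r) ≤ x)
    (hy : (2 : ℝ) ^ (n * r') ≤ y) : (2 : ℝ) ^ (n * (r + r')) ≤ x * y := by
  rw [mul_add, Real.rpow_add two_pos]
  exact mul_le_mul hx hy (by positivity) (hx.trans' (by positivity))

lemma two_rpow_le_card_bins (n : ℕ) (s f m : ℝ) : (2 : ℝ) ^ (n * (s + f + m)) ≤
    Fintype.card ((Fin (cnum n s) × Fin (cnum n f)) × Fin (cnum n m)) := by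
  simp only [Fintype.card_prod, Fintype.card_fin, Nat.cast_mul]
  exact two_rpow_mul_add_le (two_rpow_mul_add_le (le_cnum n s) (le_cnum n f)) (le_cnum n m)

/-- The conditional entropies that govern random binning of `U₁` and `U₂`: given the observation of
an encoder, given what the decoder knows, and given all sources and the output. -/
structure Entropies where
  enc₁ : ℝ
  enc₂ : ℝ
  dec₁ : ℝ
  dec₂ : ℝ
  dec₁₂ : ℝ
  out₁ : ℝ
  out₂ : ℝ
  out₁₂ : ℝ

/-- Rates, with slack `δ`, at which binning works: terminal `i` uses shared randomness of rate `sᵢ`,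
a frozen index of rate `fᵢ` and a message of rate `mᵢ`. The shared and frozen indices have to be
nearly uniform given the encoder's observation, all indices have to determine the auxiliary
variables at the decoder, and the frozen indices have to be nearly independent of the output. -/
structure Entropies.BinRates (H : Entropies) (δ s₁ f₁ m₁ s₂ f₂ m₂ : ℝ) : Prop where
  enc₁ : s₁ + f₁ + 2 * δ ≤ H.enc₁
  enc₁_shared : s₁ + 2 * δ ≤ H.enc₁
  enc₁_frozen : f₁ + 2 * δ ≤ H.enc₁
  enc₂ : s₂ + f₂ + 2 * δ ≤ H.enc₂
  enc₂_shared : s₂ + 2 * δ ≤ H.enc₂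
  enc₂_frozen : f₂ + 2 * δ ≤ H.enc₂
  dec₁ : H.dec₁ + 2 * δ ≤ s₁ + f₁ + m₁
  dec₂ : H.dec₂ + 2 * δ ≤ s₂ + f₂ + m₂
  dec₁₂ : H.dec₁₂ + 2 * δ ≤ s₁ + f₁ + m₁ + (s₂ + f₂ + m₂)
  out₁ : f₁ + 2 * δ ≤ H.out₁
  out₂ : f₂ + 2 * δ ≤ H.out₂
  out₁₂ : f₁ + f₂ + 2 * δ ≤ H.out₁₂

namespace TestLaw

variable {Ω Ξ X₁ X₂ Z U₁ U₂ Y : Type*} [Fintype Ω] [Fintype U₁] [Fintype U₂] [Fintype Y]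

/-- The law of `n` independent copies. -/
noncomputable def pow (N : TestLaw Ω Ξ X₁ X₂ Z U₁ U₂ Y) (n : ℕ) : TestLaw (Fin n → Ω) (Fin n → Ξ)
    (Fin n → X₁) (Fin n → X₂) (Fin n → Z) (Fin n → U₁) (Fin n → U₂) (Fin n → Y) where
  law := iid N.law n
  law_pmf := isPMF_iid N.law_pmf n
  src ω i := N.src (ω i)
  u₁ ω i := N.u₁ (ω i)
  u₂ ω i := N.u₂ (ω i)
  y ω i := N.y (ω i)
  x₁ ξ i := N.x₁ (ξ i)
  x₂ ξ i := N.x₂ (ξ i)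
  z ξ i := N.z (ξ i)
  k₁ x a := ∏ i, N.k₁ (x i) (a i)
  k₂ x b := ∏ i, N.k₂ (x i) (b i)
  kY a b z y := ∏ i, N.kY (a i) (b i) (z i) (y i)
  k₁_pmf x := IsPMF.pi fun i => N.k₁_pmf (x i)
  k₂_pmf x := IsPMF.pi fun i => N.k₂_pmf (x i)
  kY_pmf a b z := IsPMF.pi fun i => N.kY_pmf (a i) (b i) (z i)
  prob_eq ξ a b c := by
    simp only [funext_iff, ← forall_and]
    rw [prob_iid_forall N.law fun i ω =>
        N.src ω = ξ i ∧ N.u₁ ω = a i ∧ N.u₂ ω = b i ∧ N.y ω = c i,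
      prob_iid_forall N.law fun i ω => N.src ω = ξ i]
    simp only [N.prob_eq, prod_mul_distrib]

lemma lawOf_pow_src (N : TestLaw Ω Ξ X₁ X₂ Z U₁ U₂ Y) (n : ℕ) :
    lawOf (N.pow n).law (N.pow n).src = iid (lawOf N.law N.src) n := by
  funext ξ
  simp only [lawOf, pow, funext_iff]
  exact prob_iid_forall N.law fun i ω => N.src ω = ξ i

lemma channel_pow (N : TestLaw Ω Ξ X₁ X₂ Z U₁ U₂ Y) (n : ℕ) (ξ : Fin n → Ξ) (y : Fin n → Y) :
    (N.pow n).channel ξ y = ∏ i, N.channel (ξ i) (y i) := by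
  simp only [channel, pow]
  rw [← avg_pi_prod fun i a => N.k₁ (N.x₁ (ξ i)) a]
  refine congrArg (avg _) (funext fun a => ?_)
  rw [← avg_pi_prod fun i b => N.k₂ (N.x₂ (ξ i)) b]

variable [Fintype Ξ] [Fintype X₁] [Fintype X₂] [Fintype Z] [DecidableEq Ξ] [DecidableEq X₁]
  [DecidableEq X₂] [DecidableEq Z] [DecidableEq U₁] [DecidableEq U₂] [DecidableEq Y]
  (N : TestLaw Ω Ξ X₁ X₂ Z U₁ U₂ Y)

/-- The entropies that govern random binning for the law `N`. -/
noncomputable def entropies : Entropies where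
  enc₁ := condEnt N.law N.u₁ fun ω => N.x₁ (N.src ω)
  enc₂ := condEnt N.law N.u₂ fun ω => N.x₂ (N.src ω)
  dec₁ := condEnt N.law N.u₁ fun ω => (N.u₂ ω, N.z (N.src ω))
  dec₂ := condEnt N.law N.u₂ fun ω => (N.u₁ ω, N.z (N.src ω))
  dec₁₂ := condEnt N.law (fun ω => (N.u₁ ω, N.u₂ ω)) fun ω => N.z (N.src ω)
  out₁ := condEnt N.law N.u₁ fun ω => (N.src ω, N.y ω)
  out₂ := condEnt N.law N.u₂ fun ω => (N.src ω, N.y ω)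
  out₁₂ := condEnt N.law (fun ω => (N.u₁ ω, N.u₂ ω)) fun ω => (N.src ω, N.y ω)

/-- Conditional typicality of a sequence with respect to all entries of `N.entropies`. -/
structure JointlyTypical (δ : ℝ) {n : ℕ} (ω : Fin n → Ω) : Prop where
  enc₁ : Typical N.law N.u₁ (fun ω => N.x₁ (N.src ω)) δ ω
  enc₂ : Typical N.law N.u₂ (fun ω => N.x₂ (N.src ω)) δ ω
  dec₁ : Typical N.law N.u₁ (fun ω => (N.u₂ ω, N.z (N.src ω))) δ ω
  dec₂ : Typical N.law N.u₂ (fun ω => (N.u₁ ω, N.z (N.src ω))) δ ω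
  dec₁₂ : Typical N.law (fun ω => (N.u₁ ω, N.u₂ ω)) (fun ω => N.z (N.src ω)) δ ω
  out₁ : Typical N.law N.u₁ (fun ω => (N.src ω, N.y ω)) δ ω
  out₂ : Typical N.law N.u₂ (fun ω => (N.src ω, N.y ω)) δ ω
  out₁₂ : Typical N.law (fun ω => (N.u₁ ω, N.u₂ ω)) (fun ω => (N.src ω, N.y ω)) δ ω

lemma tendsto_prob_not_jointlyTypical {δ : ℝ} (hδ : 0 < δ) :
    Filter.Tendsto (fun n => prob (iid N.law n) fun ω => ¬N.JointlyTypical δ ω) Filter.atTop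
      (nhds 0) := by
  have hand : ∀ {E E' : ∀ n, (Fin n → Ω) → Prop},
      Filter.Tendsto (fun n => prob (iid N.law n) fun ω => ¬E n ω) Filter.atTop (nhds 0) →
      Filter.Tendsto (fun n => prob (iid N.law n) fun ω => ¬E' n ω) Filter.atTop (nhds 0) →
      Filter.Tendsto (fun n => prob (iid N.law n) fun ω => ¬(E n ω ∧ E' n ω)) Filter.atTop
        (nhds 0) := fun hE hE' => by
    refine squeeze_zero (fun n => prob_nonneg (isPMF_iid N.law_pmf n).1 _) (fun n => ?_)
      (add_zero (0 : ℝ) ▸ hE.add hE')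
    simp only [not_and_or]
    exact prob_or_le (isPMF_iid N.law_pmf n).1 _ _
  have htyp := hand (N.law_pmf.tendsto_prob_iid_not_typical N.u₁ (fun ω => N.x₁ (N.src ω)) hδ) <|
    hand (N.law_pmf.tendsto_prob_iid_not_typical N.u₂ (fun ω => N.x₂ (N.src ω)) hδ) <|
    hand (N.law_pmf.tendsto_prob_iid_not_typical N.u₁ (fun ω => (N.u₂ ω, N.z (N.src ω))) hδ) <|
    hand (N.law_pmf.tendsto_prob_iid_not_typical N.u₂ (fun ω => (N.u₁ ω, N.z (N.src ω))) hδ) <|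
    hand (N.law_pmf.tendsto_prob_iid_not_typical (fun ω => (N.u₁ ω, N.u₂ ω))
      (fun ω => N.z (N.src ω)) hδ) <|
    hand (N.law_pmf.tendsto_prob_iid_not_typical N.u₁ (fun ω => (N.src ω, N.y ω)) hδ) <|
    hand (N.law_pmf.tendsto_prob_iid_not_typical N.u₂ (fun ω => (N.src ω, N.y ω)) hδ) <|
    N.law_pmf.tendsto_prob_iid_not_typical (fun ω => (N.u₁ ω, N.u₂ ω))
      (fun ω => (N.src ω, N.y ω)) hδ
  refine squeeze_zero (fun n => prob_nonneg (isPMF_iid N.law_pmf n).1 _)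
    (fun n => prob_mono (isPMF_iid N.law_pmf n).1 fun ω _ => mt fun h => ?_) htyp
  obtain ⟨enc₁, enc₂, dec₁, dec₂, dec₁₂, out₁, out₂, out₁₂⟩ := h
  exact ⟨enc₁, enc₂, dec₁, dec₂, dec₁₂, out₁, out₂, out₁₂⟩

variable {N} in
lemma JointlyTypical.condProb_u₁_le {δ : ℝ} {n : ℕ} {ω : Fin n → Ω} (h : N.JointlyTypical δ ω) :
    condProb (N.pow n).law (N.pow n).u₁ (fun ω => (N.pow n).x₁ ((N.pow n).src ω)) ((N.pow n).u₁ ω)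
      ((N.pow n).x₁ ((N.pow n).src ω)) ≤ 2 ^ (-(n * (N.entropies.enc₁ - δ))) :=
  (condProb_iid (fun _ _ => funext_iff) (fun _ _ => funext_iff) _ _).trans_le h.enc₁.2

variable {N} in
lemma JointlyTypical.condProb_u₂_le {δ : ℝ} {n : ℕ} {ω : Fin n → Ω} (h : N.JointlyTypical δ ω) :
    condProb (N.pow n).law (N.pow n).u₂ (fun ω => (N.pow n).x₂ ((N.pow n).src ω)) ((N.pow n).u₂ ω)
      ((N.pow n).x₂ ((N.pow n).src ω)) ≤ 2 ^ (-(n * (N.entropies.enc₂ - δ))) :=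
  (condProb_iid (fun _ _ => funext_iff) (fun _ _ => funext_iff) _ _).trans_le h.enc₂.2

variable {N} in
lemma JointlyTypical.plausible {δ : ℝ} {n : ℕ} {ω : Fin n → Ω} (h : N.JointlyTypical δ ω) :
    Plausible (N.pow n).law (N.pow n).u₁ (N.pow n).u₂ (fun ω => (N.pow n).z ((N.pow n).src ω))
      (2 ^ (-(n * (N.entropies.dec₁ + δ)))) (2 ^ (-(n * (N.entropies.dec₂ + δ))))
      (2 ^ (-(n * (N.entropies.dec₁₂ + δ)))) ((N.pow n).u₁ ω) ((N.pow n).u₂ ω)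
      ((N.pow n).z ((N.pow n).src ω)) := by
  refine ⟨h.dec₁.1.trans_eq (condProb_iid (fun _ _ => ?_) (fun _ _ => ?_) _ _).symm,
    h.dec₂.1.trans_eq (condProb_iid (fun _ _ => ?_) (fun _ _ => ?_) _ _).symm,
    h.dec₁₂.1.trans_eq (condProb_iid (fun _ _ => ?_) (fun _ _ => ?_) _ _).symm⟩
  all_goals simp only [pow, Prod.mk.injEq, funext_iff, forall_and]

variable {N} in
lemma JointlyTypical.spread {δ : ℝ} {n : ℕ} {ω : Fin n → Ω} (h : N.JointlyTypical δ ω) :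
    Spread (N.pow n).law (N.pow n).u₁ (N.pow n).u₂ (fun ω => ((N.pow n).src ω, (N.pow n).y ω))
      (2 ^ (-(n * (N.entropies.out₁₂ - δ)))) (2 ^ (-(n * (N.entropies.out₁ - δ))))
      (2 ^ (-(n * (N.entropies.out₂ - δ)))) ω := by
  refine ⟨(condProb_iid (fun _ _ => ?_) (fun _ _ => ?_) _ _).trans_le h.out₁₂.2,
    (condProb_iid (fun _ _ => ?_) (fun _ _ => ?_) _ _).trans_le h.out₁.2,
    (condProb_iid (fun _ _ => ?_) (fun _ _ => ?_) _ _).trans_le h.out₂.2⟩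
  all_goals simp only [pow, Prod.mk.injEq, funext_iff, forall_and]

lemma exists_code_pow {δ s₁ f₁ m₁ s₂ f₂ m₂ : ℝ} (hr : N.entropies.BinRates δ s₁ f₁ m₁ s₂ f₂ m₂)
    (n : ℕ) :
    ∃ C : Code (Fin (cnum n s₁)) (Fin (cnum n s₂)) (Fin (cnum n m₁)) (Fin (cnum n m₂))
      (Fin n → X₁) (Fin n → X₂) (Fin n → Z) (Fin n → Y),
      (N.pow n).simError C ≤ 4 * prob (iid N.law n) (fun ω => ¬N.JointlyTypical δ ω) +
        3 / 2 * √(3 * 2 ^ (-(n * δ))) + 3 * 2 ^ (-(n * δ)) := by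
  have hpos : ∀ a : ℝ, 0 < (2 : ℝ) ^ a := fun a => Real.rpow_pos_of_pos two_pos a
  obtain ⟨C, hC⟩ := (N.pow n).exists_code (Fin (cnum n s₁)) (Fin (cnum n s₂)) (Fin (cnum n f₁))
    (Fin (cnum n f₂)) (Fin (cnum n m₁)) (Fin (cnum n m₂))
    (hpos (-(n * (N.entropies.enc₁ - δ)))).le (hpos (-(n * (N.entropies.enc₂ - δ)))).le
    (hpos (-(n * (N.entropies.out₁₂ - δ)))).le (hpos (-(n * (N.entropies.out₁ - δ)))).le
    (hpos (-(n * (N.entropies.out₂ - δ)))).le (hpos (-(n * (N.entropies.dec₁ + δ))))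
    (hpos (-(n * (N.entropies.dec₂ + δ)))) (hpos (-(n * (N.entropies.dec₁₂ + δ))))
  have hprob : ∀ {E : (Fin n → Ω) → Prop}, (∀ ω, N.JointlyTypical δ ω → E ω) →
      prob (N.pow n).law (fun ω => ¬E ω) ≤
        prob (iid N.law n) fun ω => ¬N.JointlyTypical δ ω := fun h =>
    prob_mono (isPMF_iid N.law_pmf n).1 fun ω _ => mt (h ω)
  have hvar₁ := Real.sqrt_le_sqrt (binVariance_cnum_le n hr.enc₁ hr.enc₁_shared hr.enc₁_frozen)
  have hvar₂ := Real.sqrt_le_sqrt (binVariance_cnum_le n hr.enc₂ hr.enc₂_shared hr.enc₂_frozen)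
  have hvar₁₂ := Real.sqrt_le_sqrt (binVariance_cnum_le n hr.out₁₂ hr.out₁ hr.out₂)
  rw [binVariance_self] at hvar₁ hvar₂
  have hcard₁ := two_rpow_le_card_bins n s₁ f₁ m₁
  have hcard₂ := two_rpow_le_card_bins n s₂ f₂ m₂
  have hdec₁ := inv_mul_inv_two_rpow_le hcard₁ hr.dec₁
  have hdec₂ := inv_mul_inv_two_rpow_le hcard₂ hr.dec₂
  have hdec₁₂ := inv_mul_inv_two_rpow_le (two_rpow_mul_add_le hcard₁ hcard₂) hr.dec₁₂
  rw [mul_inv, mul_assoc] at hdec₁₂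
  refine ⟨C, hC.trans ?_⟩
  linarith [hprob fun _ h => h.condProb_u₁_le, hprob fun _ h => h.condProb_u₂_le,
    hprob fun _ h => h.plausible, hprob fun _ h => h.spread]

lemma exists_tendsto_simError_pow {δ s₁ f₁ m₁ s₂ f₂ m₂ : ℝ} (hδ : 0 < δ)
    (hr : N.entropies.BinRates δ s₁ f₁ m₁ s₂ f₂ m₂) :
    ∃ C : ∀ n, Code (Fin (cnum n s₁)) (Fin (cnum n s₂)) (Fin (cnum n m₁)) (Fin (cnum n m₂))
      (Fin n → X₁) (Fin n → X₂) (Fin n → Z) (Fin n → Y),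
      Filter.Tendsto (fun n => (N.pow n).simError (C n)) Filter.atTop (nhds 0) := by
  choose C hC using N.exists_code_pow hr
  refine ⟨C, squeeze_zero (fun n => (N.pow n).simError_nonneg (C n)) hC ?_⟩
  have hexp := (tendsto_two_rpow_neg_mul hδ).const_mul 3
  simpa using (((N.tendsto_prob_not_jointlyTypical hδ).const_mul 4).add
    (hexp.sqrt.const_mul (3 / 2))).add hexp

end TestLaw

/-! ### Rate splitting -/

lemma exists_tvDist_lawOf_unif_cnum_le (n : ℕ) (s R : ℝ) :
    ∃ σ : Fin (cnum n R) → Fin (cnum n s),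
      tvDist (lawOf (unif (Fin (cnum n R))) σ) (unif (Fin (cnum n s))) ≤
        2 ^ (-(n * (R - s))) := by
  obtain ⟨σ, hσ⟩ := exists_tvDist_lawOf_unif_le (Fin (cnum n R)) (Fin (cnum n s))
  refine ⟨σ, hσ.trans ?_⟩
  rw [Fintype.card_fin, Fintype.card_fin]
  calc _ ≤ (2 : ℝ) ^ (n * s) / 2 ^ (n * R) :=
        div_le_div₀ (by positivity) (cnum_sub_one_le n s) (by positivity) (le_cnum n R)
    _ = _ := by rw [← Real.rpow_sub two_pos]; ring_nf

lemma TestLaw.exists_tendsto_simError_pow_of_lt {Ω Ξ X₁ X₂ Z U₁ U₂ Y : Type*} [Fintype Ω]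
    [Fintype U₁] [Fintype U₂] [Fintype Y] [Fintype Ξ] [Fintype X₁] [Fintype X₂] [Fintype Z]
    [DecidableEq Ξ] [DecidableEq X₁] [DecidableEq X₂] [DecidableEq Z] [DecidableEq U₁]
    [DecidableEq U₂] [DecidableEq Y] (N : TestLaw Ω Ξ X₁ X₂ Z U₁ U₂ Y)
    {δ s₁ f₁ m₁ s₂ f₂ m₂ r₁ r₂ : ℝ} (hδ : 0 < δ)
    (hr : N.entropies.BinRates δ s₁ f₁ m₁ s₂ f₂ m₂) (h₁ : s₁ < r₁) (h₂ : s₂ < r₂) :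
    ∃ C : ∀ n, Code (Fin (cnum n r₁)) (Fin (cnum n r₂)) (Fin (cnum n m₁)) (Fin (cnum n m₂))
      (Fin n → X₁) (Fin n → X₂) (Fin n → Z) (Fin n → Y),
      Filter.Tendsto (fun n => (N.pow n).simError (C n)) Filter.atTop (nhds 0) := by
  obtain ⟨C, hC⟩ := N.exists_tendsto_simError_pow hδ hr
  choose σ₁ hσ₁ using fun n => exists_tvDist_lawOf_unif_cnum_le n s₁ r₁
  choose σ₂ hσ₂ using fun n => exists_tvDist_lawOf_unif_cnum_le n s₂ r₂
  refine ⟨fun n => (C n).comap (σ₁ n) (σ₂ n), squeeze_zero (fun n => (N.pow n).simError_nonneg _)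
    (fun n => ((N.pow n).simError_comap_le (C n) (σ₁ n) (σ₂ n)).trans <|
      add_le_add_right (add_le_add (hσ₁ n) (hσ₂ n)) _) ?_⟩
  simpa using hC.add ((tendsto_two_rpow_neg_mul (sub_pos.mpr h₁)).add
    (tendsto_two_rpow_neg_mul (sub_pos.mpr h₂)))

namespace Entropies

/-- The inequalities between the entropies on which the elimination of the bin rates relies. -/
structure ShannonIneqs (H : Entropies) : Prop where
  out₁_le_enc₁ : H.out₁ ≤ H.enc₁
  out₂_le_enc₂ : H.out₂ ≤ H.enc₂
  out₁_le_out₁₂ : H.out₁ ≤ H.out₁₂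
  out₂_le_out₁₂ : H.out₂ ≤ H.out₁₂
  out₁₂_le : H.out₁₂ ≤ H.out₁ + H.out₂
  le_dec₁₂ : H.dec₁ + H.dec₂ ≤ H.dec₁₂

/-- The eight rate inequalities of the inner bound, with every mutual information written as a
difference of entropies. -/
structure RateBounds (H : Entropies) (R₁ R₂ R₀₁ R₀₂ : ℝ) : Prop where
  message₁ : H.dec₁ - H.enc₁ ≤ R₁
  message₂ : H.dec₂ - H.enc₂ ≤ R₂
  messages : H.dec₁₂ - H.enc₁ - H.enc₂ ≤ R₁ + R₂
  total₁ : H.dec₁ - H.out₁ ≤ R₁ + R₀₁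
  total₂ : H.dec₂ - H.out₂ ≤ R₂ + R₀₂
  messages_shared₁ : H.dec₁₂ - H.out₁ - H.enc₂ ≤ R₁ + R₂ + R₀₁
  messages_shared₂ : H.dec₁₂ - H.out₂ - H.enc₁ ≤ R₁ + R₂ + R₀₂
  total : H.dec₁₂ - H.out₁₂ ≤ R₁ + R₂ + R₀₁ + R₀₂

end Entropies

lemma exists_mem_Icc_add_mem_Icc {l₁ l₂ l b₁ b₂ b : ℝ} (h₁ : l₁ ≤ b₁) (h₂ : l₂ ≤ b₂) (h : l ≤ b)
    (hl : l₁ + l₂ ≤ b) (hb : l ≤ b₁ + b₂) :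
    ∃ f₁ ∈ Set.Icc l₁ b₁, ∃ f₂ ∈ Set.Icc l₂ b₂, f₁ + f₂ ∈ Set.Icc l b := by
  have hf₁ : min b₁ (b - l₂) + l₂ ≤ b := by linarith [min_le_right b₁ (b - l₂)]
  refine ⟨min b₁ (b - l₂), ⟨le_min h₁ (by linarith), min_le_left _ _⟩,
    min b₂ (b - min b₁ (b - l₂)), ⟨le_min h₂ (by linarith), min_le_left _ _⟩, ?_,
    by linarith [min_le_right b₂ (b - min b₁ (b - l₂))]⟩
  rcases min_choice b₁ (b - l₂) with h' | h' <;>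
    rcases min_choice b₂ (b - min b₁ (b - l₂)) with h'' | h'' <;> linarith

/-- Fourier–Motzkin elimination of the rates of the frozen indices, and of the part `sᵢ` of the
shared randomness that is used. -/
lemma Entropies.RateBounds.exists_binRates {H : Entropies} {R₁ R₂ R₀₁ R₀₂ ε : ℝ}
    (hR : H.RateBounds R₁ R₂ R₀₁ R₀₂) (hH : H.ShannonIneqs) (hε : 0 < ε) :
    ∃ δ > 0, ∃ s₁ < R₀₁ + ε, ∃ s₂ < R₀₂ + ε, ∃ f₁ f₂,
      H.BinRates δ s₁ f₁ (R₁ + ε) s₂ f₂ (R₂ + ε) := by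
  obtain ⟨δ, rfl⟩ : ∃ δ, ε = 100 * δ := ⟨ε / 100, by ring⟩
  obtain ⟨henc₁, henc₂, hle₁, hle₂, hout, hdec⟩ := hH
  obtain ⟨hm₁, hm₂, hm, ht₁, ht₂, hms₁, hms₂, ht⟩ := hR
  have hmin : ∀ a b : ℝ, ∃ s, s ≤ a ∧ s ≤ b ∧ (s = a ∨ s = b) := fun a b =>
    ⟨min a b, min_le_left a b, min_le_right a b, min_choice a b⟩
  obtain ⟨s₁, hs₁r, hs₁e, hs₁⟩ := hmin (R₀₁ + 99 * δ) (H.enc₁ - 2 * δ)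
  obtain ⟨s₂, hs₂r, hs₂e, hs₂⟩ := hmin (R₀₂ + 99 * δ) (H.enc₂ - 2 * δ)
  obtain ⟨b₁, hb₁o, hb₁e, hb₁⟩ := hmin (H.out₁ - 2 * δ) (H.enc₁ - 2 * δ - s₁)
  obtain ⟨b₂, hb₂o, hb₂e, hb₂⟩ := hmin (H.out₂ - 2 * δ) (H.enc₂ - 2 * δ - s₂)
  have hl₁ : H.dec₁ + 2 * δ - (R₁ + 100 * δ) - s₁ ≤ b₁ := by
    rcases hs₁ with h | h <;> rcases hb₁ with h' | h' <;> linarith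
  have hl₂ : H.dec₂ + 2 * δ - (R₂ + 100 * δ) - s₂ ≤ b₂ := by
    rcases hs₂ with h | h <;> rcases hb₂ with h' | h' <;> linarith
  have hl : H.dec₁₂ + 2 * δ - (R₁ + 100 * δ) - s₁ - (R₂ + 100 * δ) - s₂ ≤ H.out₁₂ - 2 * δ := by
    rcases hs₁ with h | h <;> rcases hs₂ with h' | h' <;> linarith
  have hl₁₂ : H.dec₁ + 2 * δ - (R₁ + 100 * δ) - s₁ + (H.dec₂ + 2 * δ - (R₂ + 100 * δ) - s₂) ≤
      H.out₁₂ - 2 * δ := by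
    rcases hs₁ with h | h <;> rcases hs₂ with h' | h' <;> linarith
  have hlb : H.dec₁₂ + 2 * δ - (R₁ + 100 * δ) - s₁ - (R₂ + 100 * δ) - s₂ ≤ b₁ + b₂ := by
    rcases hs₁ with h | h <;> rcases hs₂ with h' | h' <;> rcases hb₁ with k | k <;>
      rcases hb₂ with k' | k' <;> linarith
  obtain ⟨f₁, ⟨hf₁, hf₁b⟩, f₂, ⟨hf₂, hf₂b⟩, hf, hfb⟩ :=
    exists_mem_Icc_add_mem_Icc hl₁ hl₂ hl hl₁₂ hlb
  refine ⟨δ, by linarith, s₁, by linarith, s₂, by linarith, f₁, f₂, ?_⟩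
  constructor <;> linarith

lemma TestLaw.shannonIneqs_entropies {Ω Ξ X₁ X₂ Z U₁ U₂ Y : Type*} [Fintype Ω]
    [Fintype U₁] [Fintype U₂] [Fintype Y] [Fintype Ξ] [Fintype X₁] [Fintype X₂] [Fintype Z]
    [DecidableEq Ξ] [DecidableEq X₁] [DecidableEq X₂] [DecidableEq Z] [DecidableEq U₁]
    [DecidableEq U₂] [DecidableEq Y] (N : TestLaw Ω Ξ X₁ X₂ Z U₁ U₂ Y) :
    N.entropies.ShannonIneqs where
  out₁_le_enc₁ := N.law_pmf.condEnt_le_condEnt_comp N.u₁ (fun ω => (N.src ω, N.y ω))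
    fun w => N.x₁ w.1
  out₂_le_enc₂ := N.law_pmf.condEnt_le_condEnt_comp N.u₂ (fun ω => (N.src ω, N.y ω))
    fun w => N.x₂ w.1
  out₁_le_out₁₂ := (le_add_of_nonneg_left (condEnt_nonneg N.law_pmf.1 _ _)).trans_eq
    (condEnt_prod' N.law N.u₁ N.u₂ _).symm
  out₂_le_out₁₂ := (le_add_of_nonneg_left (condEnt_nonneg N.law_pmf.1 _ _)).trans_eq
    (condEnt_prod N.law N.u₁ N.u₂ _).symm
  out₁₂_le := N.law_pmf.condEnt_prod_le N.u₁ N.u₂ _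
  le_dec₁₂ := by
    have h := N.law_pmf.condEnt_le_condEnt_comp N.u₂ (fun ω => (N.u₁ ω, N.z (N.src ω))) Prod.snd
    exact (add_le_add_right h _).trans_eq (condEnt_prod N.law N.u₁ N.u₂ _).symm

/-! ### The multiple-access problem -/

section MACLaw

variable {X1 X2 Z T U1 U2 Y : Type*} [Fintype X1] [Fintype X2] [Fintype Z] [Fintype T]
  [Fintype U1] [Fintype U2] [Fintype Y] {qs : X1 × X2 × Z → ℝ} {pT : T → ℝ}
  {pU1c : X1 → T → U1 → ℝ} {pU2c : X2 → T → U2 → ℝ} {pYc : U1 → U2 → Z → T → Y → ℝ}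

/-- The joint law `q(x₁,x₂,z) p(t) p(u₁|x₁,t) p(u₂|x₂,t) p(y|u₁,u₂,z,t)`. -/
def macLaw (qs : X1 × X2 × Z → ℝ) (pT : T → ℝ) (pU1c : X1 → T → U1 → ℝ) (pU2c : X2 → T → U2 → ℝ)
    (pYc : U1 → U2 → Z → T → Y → ℝ) : X1 × X2 × Z × T × U1 × U2 × Y → ℝ
  | (x1, x2, z, t, u1, u2, y) =>
    qs (x1, x2, z) * pT t * pU1c x1 t u1 * pU2c x2 t u2 * pYc u1 u2 z t y

lemma isPMF_macLaw (hqs : IsPMF qs) (hpT : IsPMF pT) (hpU1 : ∀ x1 t, IsPMF (pU1c x1 t))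
    (hpU2 : ∀ x2 t, IsPMF (pU2c x2 t)) (hpY : ∀ u1 u2 z t, IsPMF (pYc u1 u2 z t)) :
    IsPMF (macLaw qs pT pU1c pU2c pYc) := by
  refine ⟨fun ⟨x1, x2, z, t, u1, u2, y⟩ => ?_, ?_⟩
  · exact mul_nonneg (mul_nonneg (mul_nonneg (mul_nonneg (hqs.1 _) (hpT.1 _))
      ((hpU1 x1 t).1 _)) ((hpU2 x2 t).1 _)) ((hpY u1 u2 z t).1 _)
  · have hsum := hqs.2
    simp only [Fintype.sum_prod_type] at hsum
    simp only [Fintype.sum_prod_type, macLaw, ← mul_sum, (hpY _ _ _ _).2, (hpU1 _ _).2,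
      (hpU2 _ _).2, hpT.2, mul_one, hsum]

lemma prob_macLaw_eq_and (t : T) (x1 : X1) (x2 : X2) (z : Z) (u1 : U1) (u2 : U2) (y : Y) :
    prob (macLaw qs pT pU1c pU2c pYc) (fun ω => (vT ω, vX1 ω, vX2 ω, vZ ω) = (t, x1, x2, z) ∧
      vU1 ω = u1 ∧ vU2 ω = u2 ∧ vY ω = y) =
      pT t * qs (x1, x2, z) * pU1c x1 t u1 * pU2c x2 t u2 * pYc u1 u2 z t y := by
  have hpoint : ∀ ω : X1 × X2 × Z × T × U1 × U2 × Y,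
      ((vT ω, vX1 ω, vX2 ω, vZ ω) = (t, x1, x2, z) ∧ vU1 ω = u1 ∧ vU2 ω = u2 ∧ vY ω = y) ↔
        (x1, x2, z, t, u1, u2, y) = ω := fun ω => by
    simp only [vT, vX1, vX2, vZ, vU1, vU2, vY, Prod.ext_iff]
    tauto
  rw [prob_congr hpoint]
  simp only [prob, avg]
  rw [sum_congr rfl fun ω _ => mul_comm (macLaw qs pT pU1c pU2c pYc ω) _, sum_ind_eq_mul]
  simp only [macLaw]
  ring

lemma lawOf_macLaw_src (hpU1 : ∀ x1 t, IsPMF (pU1c x1 t)) (hpU2 : ∀ x2 t, IsPMF (pU2c x2 t))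
    (hpY : ∀ u1 u2 z t, IsPMF (pYc u1 u2 z t)) :
    lawOf (macLaw qs pT pU1c pU2c pYc) (fun ω => (vT ω, vX1 ω, vX2 ω, vZ ω)) =
      fun ξ => pT ξ.1 * qs ξ.2 := by
  funext ⟨t, x1, x2, z⟩
  rw [lawOf, ← sum_prob_eq_and _ fun ω => (vU1 ω, vU2 ω, vY ω)]
  simp only [Fintype.sum_prod_type, Prod.mk.injEq (vU1 _), Prod.mk.injEq (vU2 _),
    and_comm (b := (vT _, _) = _), prob_macLaw_eq_and, ← mul_sum, (hpY _ _ _ _).2, (hpU1 _ _).2,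
    (hpU2 _ _).2, mul_one]

/-- The law `macLaw` as a simulation target. The time-sharing variable `T` is treated as a source
that all terminals observe. -/
def macTestLaw (hqs : IsPMF qs) (hpT : IsPMF pT) (hpU1 : ∀ x1 t, IsPMF (pU1c x1 t))
    (hpU2 : ∀ x2 t, IsPMF (pU2c x2 t)) (hpY : ∀ u1 u2 z t, IsPMF (pYc u1 u2 z t)) :
    TestLaw (X1 × X2 × Z × T × U1 × U2 × Y) (T × X1 × X2 × Z) (T × X1) (T × X2) (T × Z) U1 U2 Y
    where
  law := macLaw qs pT pU1c pU2c pYc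
  law_pmf := isPMF_macLaw hqs hpT hpU1 hpU2 hpY
  src ω := (vT ω, vX1 ω, vX2 ω, vZ ω)
  u₁ := vU1
  u₂ := vU2
  y := vY
  x₁ ξ := (ξ.1, ξ.2.1)
  x₂ ξ := (ξ.1, ξ.2.2.1)
  z ξ := (ξ.1, ξ.2.2.2)
  k₁ x := pU1c x.2 x.1
  k₂ x := pU2c x.2 x.1
  kY u1 u2 z := pYc u1 u2 z.2 z.1
  k₁_pmf x := hpU1 x.2 x.1
  k₂_pmf x := hpU2 x.2 x.1
  kY_pmf u1 u2 z := hpY u1 u2 z.2 z.1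
  prob_eq ξ u1 u2 y := by
    rw [prob_macLaw_eq_and]
    exact congrArg (· * _ * _ * _) (congrFun (lawOf_macLaw_src hpU1 hpU2 hpY) ξ).symm

variable (hqs : IsPMF qs) (hpT : IsPMF pT) (hpU1 : ∀ x1 t, IsPMF (pU1c x1 t))
  (hpU2 : ∀ x2 t, IsPMF (pU2c x2 t)) (hpY : ∀ u1 u2 z t, IsPMF (pYc u1 u2 z t))

lemma mul_channel_macTestLaw (t : T) (x1 : X1) (x2 : X2) (z : Z) (y : Y) :
    qs (x1, x2, z) * (macTestLaw hqs hpT hpU1 hpU2 hpY).channel (t, x1, x2, z) y =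
      ∑ u1, ∑ u2, qs (x1, x2, z) * pU1c x1 t u1 * pU2c x2 t u2 * pYc u1 u2 z t y := by
  simp only [TestLaw.channel, macTestLaw, avg, mul_sum, mul_assoc]

lemma rateBounds_entropies_macTestLaw [DecidableEq X1] [DecidableEq X2] [DecidableEq Z]
    [DecidableEq T] [DecidableEq U1] [DecidableEq U2] [DecidableEq Y] {p} {R1 R2 R01 R02 : ℝ}
    (hp : p = macLaw qs pT pU1c pU2c pYc)
    (h1 : cmi p vU1 vX1 (fun ω => (vU2 ω, vZ ω, vT ω)) ≤ R1)
    (h2 : cmi p vU2 vX2 (fun ω => (vU1 ω, vZ ω, vT ω)) ≤ R2)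
    (h3 : cmi p (fun ω => (vU1 ω, vU2 ω)) (fun ω => (vX1 ω, vX2 ω))
        (fun ω => (vZ ω, vT ω)) ≤ R1 + R2)
    (h4 : cmi p vU1 (fun ω => (vX1 ω, vX2 ω, vY ω)) (fun ω => (vZ ω, vT ω))
        - cmi p vU1 vU2 (fun ω => (vZ ω, vT ω)) ≤ R1 + R01)
    (h5 : cmi p vU2 (fun ω => (vX1 ω, vX2 ω, vY ω)) (fun ω => (vZ ω, vT ω))
        - cmi p vU1 vU2 (fun ω => (vZ ω, vT ω)) ≤ R2 + R02)
    (h6 : cmi p vU1 (fun ω => (vX1 ω, vX2 ω, vY ω)) (fun ω => (vZ ω, vT ω))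
        + cmi p vU2 vX2 (fun ω => (vU1 ω, vZ ω, vT ω)) ≤ R1 + R2 + R01)
    (h7 : cmi p vU2 (fun ω => (vX1 ω, vX2 ω, vY ω)) (fun ω => (vZ ω, vT ω))
        + cmi p vU1 vX1 (fun ω => (vU2 ω, vZ ω, vT ω)) ≤ R1 + R2 + R02)
    (h8 : cmi p (fun ω => (vU1 ω, vU2 ω)) (fun ω => (vX1 ω, vX2 ω, vY ω))
        (fun ω => (vZ ω, vT ω)) ≤ R1 + R2 + R01 + R02) :
    (macTestLaw hqs hpT hpU1 hpU2 hpY).entropies.RateBounds R1 R2 R01 R02 := by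
  subst hp
  set p := macLaw qs pT pU1c pU2c pYc
  have hp : IsPMF p := isPMF_macLaw hqs hpT hpU1 hpU2 hpY
  rw [cmi_comm p vU1 vU2] at h5
  simp only [cmi_eq_condEnt_sub] at h1 h2 h3 h4 h5 h6 h7 h8
  set H := (macTestLaw hqs hpT hpU1 hpU2 hpY).entropies
  have hdec₁ : H.dec₁ ≤ condEnt p vU1 fun ω => (vU2 ω, vZ ω, vT ω) :=
    hp.condEnt_le_condEnt_comp vU1 _ fun w : U2 × T × Z => (w.1, w.2.2, w.2.1)
  have hdec₂ : H.dec₂ ≤ condEnt p vU2 fun ω => (vU1 ω, vZ ω, vT ω) :=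
    hp.condEnt_le_condEnt_comp vU2 _ fun w : U1 × T × Z => (w.1, w.2.2, w.2.1)
  have hdec₁₂ : H.dec₁₂ ≤ condEnt p (fun ω => (vU1 ω, vU2 ω)) fun ω => (vZ ω, vT ω) :=
    hp.condEnt_le_condEnt_comp _ _ fun w : T × Z => (w.2, w.1)
  have henc₁ : condEnt p vU1 (fun ω => (vX1 ω, vU2 ω, vZ ω, vT ω)) ≤ H.enc₁ :=
    hp.condEnt_le_condEnt_comp vU1 _ fun w : X1 × U2 × Z × T => (w.2.2.2, w.1)
  have henc₂ : condEnt p vU2 (fun ω => (vX2 ω, vU1 ω, vZ ω, vT ω)) ≤ H.enc₂ :=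
    hp.condEnt_le_condEnt_comp vU2 _ fun w : X2 × U1 × Z × T => (w.2.2.2, w.1)
  have henc₁₂ : condEnt p (fun ω => (vU1 ω, vU2 ω)) (fun ω => ((vX1 ω, vX2 ω), vZ ω, vT ω)) ≤
      H.enc₁ + H.enc₂ := (hp.condEnt_prod_le vU1 vU2 _).trans <| add_le_add
    (hp.condEnt_le_condEnt_comp vU1 _ fun w : (X1 × X2) × Z × T => (w.2.2, w.1.1))
    (hp.condEnt_le_condEnt_comp vU2 _ fun w : (X1 × X2) × Z × T => (w.2.2, w.1.2))
  let σ (w : (X1 × X2 × Y) × Z × T) : (T × X1 × X2 × Z) × Y :=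
    ((w.2.2, w.1.1, w.1.2.1, w.2.1), w.1.2.2)
  have hout₁ : condEnt p vU1 (fun ω => ((vX1 ω, vX2 ω, vY ω), vZ ω, vT ω)) ≤ H.out₁ :=
    hp.condEnt_le_condEnt_comp vU1 _ σ
  have hout₂ : condEnt p vU2 (fun ω => ((vX1 ω, vX2 ω, vY ω), vZ ω, vT ω)) ≤ H.out₂ :=
    hp.condEnt_le_condEnt_comp vU2 _ σ
  have hout₁₂ : condEnt p (fun ω => (vU1 ω, vU2 ω))
      (fun ω => ((vX1 ω, vX2 ω, vY ω), vZ ω, vT ω)) ≤ H.out₁₂ :=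
    hp.condEnt_le_condEnt_comp _ _ σ
  have hchain := condEnt_prod p vU1 vU2 fun ω => (vZ ω, vT ω)
  have hchain' := condEnt_prod' p vU1 vU2 fun ω => (vZ ω, vT ω)
  constructor <;> linarith

end MACLaw

/-! ### Fixing the time-sharing sequence -/

section FixTimeSharing

variable {X1 X2 Z T Y : Type} [Fintype X1] [Fintype X2] [Fintype Z] [Fintype Y] {n : ℕ}
  {R1 R2 R01 R02 : ℝ}

/-- The code for the sources `X₁`, `X₂`, `Z` obtained from a code for `(T, X₁)`, `(T, X₂)`, `(T, Z)`
by agreeing on the time-sharing sequence `t` in advance. -/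
def Code.fixTimeSharing (C : Code (Fin (cnum n R01)) (Fin (cnum n R02)) (Fin (cnum n R1))
    (Fin (cnum n R2)) (Fin n → T × X1) (Fin n → T × X2) (Fin n → T × Z) (Fin n → Y))
    (t : Fin n → T) : MACCode X1 X2 Z Y n R1 R2 R01 R02 where
  enc1 s x := C.enc₁ s fun i => (t i, x i)
  enc2 s x := C.enc₂ s fun i => (t i, x i)
  dec s₁ s₂ m₁ m₂ z := C.dec s₁ s₂ m₁ m₂ fun i => (t i, z i)
  enc1_pmf s _ := C.enc₁_pmf s _
  enc2_pmf s _ := C.enc₂_pmf s _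
  dec_pmf s₁ s₂ m₁ m₂ _ := C.dec_pmf s₁ s₂ m₁ m₂ _

lemma inducedPMF_fixTimeSharing (C : Code (Fin (cnum n R01)) (Fin (cnum n R02)) (Fin (cnum n R1))
    (Fin (cnum n R2)) (Fin n → T × X1) (Fin n → T × X2) (Fin n → T × Z) (Fin n → Y))
    (t : Fin n → T) (qs : X1 × X2 × Z → ℝ) (x : Fin n → X1 × X2 × Z) (y : Fin n → Y) :
    inducedPMF qs (C.fixTimeSharing t)
        (fun i => (x i).1, fun i => (x i).2.1, fun i => (x i).2.2, y) =
      iid qs n x * C.channel (unif _) (unif _) (fun i => (t i, (x i).1)) (fun i => (t i, (x i).2.1))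
        (fun i => (t i, (x i).2.2)) y := by
  simp only [inducedPMF, Code.fixTimeSharing, Code.channel, avg, iid, unif, mul_sum,
    Fintype.card_fin]
  refine sum_congr rfl fun s₁ _ => sum_congr rfl fun s₂ _ => sum_congr rfl fun m₁ _ =>
    sum_congr rfl fun m₂ _ => ?_
  rw [mul_inv]
  ring

/-- Sequences of tuples as tuples of sequences. -/
def seqEquiv (X1 X2 Z Y : Type) (n : ℕ) : (Fin n → X1 × X2 × Z) × (Fin n → Y) ≃
    (Fin n → X1) × (Fin n → X2) × (Fin n → Z) × (Fin n → Y) where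
  toFun w := (fun i => (w.1 i).1, fun i => (w.1 i).2.1, fun i => (w.1 i).2.2, w.2)
  invFun w := (fun i => (w.1 i, w.2.1 i, w.2.2.1 i), w.2.2.2)
  left_inv _ := rfl
  right_inv _ := rfl

lemma tvDist_inducedPMF_fixTimeSharing (C : Code (Fin (cnum n R01)) (Fin (cnum n R02))
    (Fin (cnum n R1)) (Fin (cnum n R2)) (Fin n → T × X1) (Fin n → T × X2) (Fin n → T × Z)
    (Fin n → Y)) (t : Fin n → T) {qs : X1 × X2 × Z → ℝ} (hqs : ∀ x, 0 ≤ qs x)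
    {q : X1 × X2 × Z × Y → ℝ} {W : T × X1 × X2 × Z → Y → ℝ}
    (hq : ∀ t x y, q (x.1, x.2.1, x.2.2, y) = qs x * W (t, x) y) :
    tvDist (inducedPMF qs (C.fixTimeSharing t)) (iidPMF q n) =
      avg (iid qs n) fun x => tvDist
        (C.channel (unif _) (unif _) (fun i => (t i, (x i).1)) (fun i => (t i, (x i).2.1))
          (fun i => (t i, (x i).2.2)))
        (fun y => ∏ i, W (t i, x i) (y i)) := by
  rw [← tvDist_prod_left (q := iid qs n) (fun x => prod_nonneg fun i _ => hqs (x i)),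
    ← tvDist_comp_equiv (seqEquiv X1 X2 Z Y n)]
  refine congrArg₂ tvDist (funext fun w => inducedPMF_fixTimeSharing C t qs w.1 w.2)
    (funext fun w => ?_)
  simp only [iid, ← prod_mul_distrib, ← hq]
  rfl

lemma exists_tvDist_fixTimeSharing_le {U1 U2 : Type*} [Fintype T] [Fintype U1] [Fintype U2]
    {q : X1 × X2 × Z × Y → ℝ} {pT : T → ℝ} {pU1c : X1 → T → U1 → ℝ} {pU2c : X2 → T → U2 → ℝ}
    {pYc : U1 → U2 → Z → T → Y → ℝ} (hqs : IsPMF (margXXZ q)) (hpT : IsPMF pT)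
    (hpU1 : ∀ x1 t, IsPMF (pU1c x1 t)) (hpU2 : ∀ x2 t, IsPMF (pU2c x2 t))
    (hpY : ∀ u1 u2 z t, IsPMF (pYc u1 u2 z t))
    (hcons : ∀ t x1 x2 z y, (∑ u1, ∑ u2,
      margXXZ q (x1, x2, z) * pU1c x1 t u1 * pU2c x2 t u2 * pYc u1 u2 z t y) = q (x1, x2, z, y))
    (C : Code (Fin (cnum n R01)) (Fin (cnum n R02)) (Fin (cnum n R1)) (Fin (cnum n R2))
      (Fin n → T × X1) (Fin n → T × X2) (Fin n → T × Z) (Fin n → Y)) :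
    ∃ t, tvDist (inducedPMF (margXXZ q) (C.fixTimeSharing t)) (iidPMF q n) ≤
      ((macTestLaw hqs hpT hpU1 hpU2 hpY).pow n).simError C := by
  set N := macTestLaw hqs hpT hpU1 hpU2 hpY
  have hq : ∀ t x y, q (x.1, x.2.1, x.2.2, y) = margXXZ q x * N.channel (t, x) y :=
    fun t x y => (hcons t x.1 x.2.1 x.2.2 y).symm.trans
      (mul_channel_macTestLaw hqs hpT hpU1 hpU2 hpY t x.1 x.2.1 x.2.2 y).symm
  refine (isPMF_iid hpT n).exists_le_of_avg_le (le_of_eq ?_)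
  simp only [tvDist_inducedPMF_fixTimeSharing C _ hqs.1 hq]
  have hsrc : lawOf N.law N.src = fun ξ => pT ξ.1 * margXXZ q ξ.2 :=
    lawOf_macLaw_src hpU1 hpU2 hpY
  rw [TestLaw.simError, N.lawOf_pow_src, hsrc, avg_iid_prod]
  refine congrArg (avg _) (funext fun t => congrArg (avg _) (funext fun x => ?_))
  exact congrArg (tvDist _) (funext fun y => (N.channel_pow n _ y).symm)

lemma achievable_of_binRates {U1 U2 : Type*} [Fintype T] [Fintype U1] [Fintype U2]
    [DecidableEq X1] [DecidableEq X2] [DecidableEq Z] [DecidableEq Y] [DecidableEq T]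
    [DecidableEq U1] [DecidableEq U2] {q : X1 × X2 × Z × Y → ℝ} {pT : T → ℝ}
    {pU1c : X1 → T → U1 → ℝ} {pU2c : X2 → T → U2 → ℝ} {pYc : U1 → U2 → Z → T → Y → ℝ}
    (hqs : IsPMF (margXXZ q)) (hpT : IsPMF pT) (hpU1 : ∀ x1 t, IsPMF (pU1c x1 t))
    (hpU2 : ∀ x2 t, IsPMF (pU2c x2 t)) (hpY : ∀ u1 u2 z t, IsPMF (pYc u1 u2 z t))
    (hcons : ∀ t x1 x2 z y, (∑ u1, ∑ u2,
      margXXZ q (x1, x2, z) * pU1c x1 t u1 * pU2c x2 t u2 * pYc u1 u2 z t y) = q (x1, x2, z, y))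
    {δ s₁ f₁ s₂ f₂ : ℝ} (hδ : 0 < δ)
    (hr : (macTestLaw hqs hpT hpU1 hpU2 hpY).entropies.BinRates δ s₁ f₁ R1 s₂ f₂ R2)
    (h₁ : s₁ < R01) (h₂ : s₂ < R02) : Achievable q R1 R2 R01 R02 := by
  obtain ⟨C, hC⟩ := TestLaw.exists_tendsto_simError_pow_of_lt _ hδ hr h₁ h₂
  choose t ht using fun n => exists_tvDist_fixTimeSharing_le hqs hpT hpU1 hpU2 hpY hcons (C n)
  exact ⟨fun n => (C n).fixTimeSharing (t n), squeeze_zero (fun _ => tvDist_nonneg _ _) ht hC⟩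

end FixTimeSharing

lemma isPMF_margXXZ {X1 X2 Z Y : Type} [Fintype X1] [Fintype X2] [Fintype Z] [Fintype Y]
    {q : X1 × X2 × Z × Y → ℝ} (hq : IsPMF q) : IsPMF (margXXZ q) := by
  refine ⟨fun _ => sum_nonneg fun _ _ => hq.1 _, ?_⟩
  simpa only [margXXZ, Fintype.sum_prod_type] using hq.2

lemma mem_closure_of_add_eps {S : Set (ℝ × ℝ × ℝ × ℝ)} {a b c d : ℝ}
    (h : ∀ ε > 0, (a + ε, b + ε, c + ε, d + ε) ∈ S) : (a, b, c, d) ∈ closure S := by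
  have hc : Continuous fun ε : ℝ => (a + ε, b + ε, c + ε, d + ε) := by fun_prop
  have ht := (hc.tendsto' 0 (a, b, c, d) (by simp)).mono_left
    (nhdsWithin_le_nhds (s := Set.Ioi (0 : ℝ)))
  exact mem_closure_of_tendsto ht
    (Filter.eventually_of_mem self_mem_nhdsWithin fun ε hε => h ε hε)

/-- **Theorem 1 (Inner bound).**  If there are finite auxiliary alphabets `T, U₁, U₂` and a pmf
of the form `p(x₁,x₂,z,t,u₁,u₂,y) = q(x₁,x₂,z) p(t) p(u₁|x₁,t) p(u₂|x₂,t) p(y|u₁,u₂,z,t)`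
satisfying `∑_{u₁,u₂} p(x₁,x₂,z,u₁,u₂,y|t) = q(x₁,x₂,z,y)` for every `t` and the eight rate
inequalities, then `(R₁, R₂, R₀₁, R₀₂) ∈ R_MAC-coord`. -/
theorem mac_inner_bound
    {X1 X2 Z Y T U1 U2 : Type}
    [Fintype X1] [Fintype X2] [Fintype Z] [Fintype Y]
    [Fintype T] [Fintype U1] [Fintype U2]
    [DecidableEq X1] [DecidableEq X2] [DecidableEq Z] [DecidableEq Y]
    [DecidableEq T] [DecidableEq U1] [DecidableEq U2]
    (q : X1 × X2 × Z × Y → ℝ) (hq : IsPMF q)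
    (pT : T → ℝ) (pU1c : X1 → T → U1 → ℝ) (pU2c : X2 → T → U2 → ℝ)
    (pYc : U1 → U2 → Z → T → Y → ℝ)
    (hpT : IsPMF pT)
    (hpU1 : ∀ x1 t, IsPMF (pU1c x1 t))
    (hpU2 : ∀ x2 t, IsPMF (pU2c x2 t))
    (hpY : ∀ u1 u2 z t, IsPMF (pYc u1 u2 z t))
    (p : X1 × X2 × Z × T × U1 × U2 × Y → ℝ)
    (hpdef : ∀ x1 x2 z t u1 u2 y,
      p (x1, x2, z, t, u1, u2, y) =
        margXXZ q (x1, x2, z) * pT t * pU1c x1 t u1 * pU2c x2 t u2 * pYc u1 u2 z t y)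
    (hcons : ∀ t x1 x2 z y,
      (∑ u1 : U1, ∑ u2 : U2,
        margXXZ q (x1, x2, z) * pU1c x1 t u1 * pU2c x2 t u2 * pYc u1 u2 z t y)
        = q (x1, x2, z, y))
    (R1 R2 R01 R02 : ℝ)
    (h1 : cmi p vU1 vX1 (fun ω => (vU2 ω, vZ ω, vT ω)) ≤ R1)
    (h2 : cmi p vU2 vX2 (fun ω => (vU1 ω, vZ ω, vT ω)) ≤ R2)
    (h3 : cmi p (fun ω => (vU1 ω, vU2 ω)) (fun ω => (vX1 ω, vX2 ω))
        (fun ω => (vZ ω, vT ω)) ≤ R1 + R2)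
    (h4 : cmi p vU1 (fun ω => (vX1 ω, vX2 ω, vY ω)) (fun ω => (vZ ω, vT ω))
        - cmi p vU1 vU2 (fun ω => (vZ ω, vT ω)) ≤ R1 + R01)
    (h5 : cmi p vU2 (fun ω => (vX1 ω, vX2 ω, vY ω)) (fun ω => (vZ ω, vT ω))
        - cmi p vU1 vU2 (fun ω => (vZ ω, vT ω)) ≤ R2 + R02)
    (h6 : cmi p vU1 (fun ω => (vX1 ω, vX2 ω, vY ω)) (fun ω => (vZ ω, vT ω))
        + cmi p vU2 vX2 (fun ω => (vU1 ω, vZ ω, vT ω)) ≤ R1 + R2 + R01)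
    (h7 : cmi p vU2 (fun ω => (vX1 ω, vX2 ω, vY ω)) (fun ω => (vZ ω, vT ω))
        + cmi p vU1 vX1 (fun ω => (vU2 ω, vZ ω, vT ω)) ≤ R1 + R2 + R02)
    (h8 : cmi p (fun ω => (vU1 ω, vU2 ω)) (fun ω => (vX1 ω, vX2 ω, vY ω))
        (fun ω => (vZ ω, vT ω)) ≤ R1 + R2 + R01 + R02) :
    (R1, R2, R01, R02) ∈ RMACcoord q := by
  have hqs : IsPMF (margXXZ q) := isPMF_margXXZ hq
  have hp : p = macLaw (margXXZ q) pT pU1c pU2c pYc :=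
    funext fun ⟨x1, x2, z, t, u1, u2, y⟩ => hpdef x1 x2 z t u1 u2 y
  have hR := rateBounds_entropies_macTestLaw hqs hpT hpU1 hpU2 hpY hp h1 h2 h3 h4 h5 h6 h7 h8
  refine mem_closure_of_add_eps fun ε hε => ?_
  obtain ⟨δ, hδ, s₁, hs₁, s₂, hs₂, f₁, f₂, hr⟩ :=
    hR.exists_binRates (TestLaw.shannonIneqs_entropies _) hε
  exact achievable_of_binRates hqs hpT hpU1 hpU2 hpY hcons hδ hr hs₁ hs₂
end

section
/- Proposition 1. For the Example distribution q_{X₁X₂Y}, the set of pairs (R₁,R₂) of nonnegative reals for which there exist finite sets 𝒯,𝒰₁,𝒰₂ and a pmf p(x₁,x₂,t,u₁,u₂,y) = p(x₁) p(x₂) p(t) p(u₁|x₁,t) p(u₂|x₂,t) p(y|u₁,u₂,t), whose (X₁,X₂)-marginal is that of four i.i.d. uniform bits and which satisfies ∑_{u₁,u₂} p(x₁,x₂,u₁,u₂,y|t) = q(x₁,x₂,y) for every t, with R₁ ≥ I(U₁;X₁|T) and R₂ ≥ I(U₂;X₂|T), is exactly the set { (R₁,R₂) : R₁ ≥ 1,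 R₂ ≥ 1, R₁+R₂ ≥ 3 }. -/
/-!
With uniform inputs `I(Uᵢ; Xᵢ | T) = 2 - H(Xᵢ | Uᵢ, T)`, so the converse amounts to bounding, at
each value of `T`, both equivocations `H(Xᵢ | Uᵢ)` and their sum by `1`. Two inputs compatible
with the same letter agree in some bit, since against the input `01` of the other encoder the
output reveals the selected index. Hence a letter has at most two compatible inputs, and
`H(Xᵢ | Uᵢ)` is at most the probability that the letter is ambiguous, i.e. has exactly two. If the
inputs of an ambiguous letter share bit `j`, the output must be `(X₁ⱼ, X₂ⱼ)`, so the inputs of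
each letter of the other encoder share bit `j` as well. When both encoders have ambiguous letters,
a single `j` therefore serves all letters; against `01` the output is `(X₁ⱼ, X₂ⱼ)` only with
probability `1 / 2`, so either ambiguity has probability at most `1 / 2`. When one encoder has no
ambiguous letter, its equivocation vanishes.

Conversely, one encoder may send `(J, X_J)` and the other its whole input; exchanging the roles
for part of the time yields every point between the corners `(1, 2)` and `(2, 1)`.
-/

open Finset

/-- `bsel x j` is the `j`-th bit of the two-bit string `x`. -/
def bsel (x : Bool × Bool) (j : Fin 2) : Bool := if j = 0 then x.1 else x.2

/-- The Example distribution: `X₁ = (X₁₁, X₁₂)` and `X₂ = (X₂₁, X₂₂)` are four i.i.d.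
uniform bits, `J` is uniform on `{1,2}` independent of `(X₁, X₂)`, and
`Y = (X₁J, X₂J)`; `qEx` is the induced joint pmf of `(X₁, X₂, Y)`. -/
noncomputable def qEx : (Bool × Bool) × (Bool × Bool) × (Bool × Bool) → ℝ :=
  fun a => ∑ j : Fin 2,
    (1 / 32 : ℝ) * (if a.2.2 = (bsel a.1 j, bsel a.2.1 j) then 1 else 0)

open Real (negMulLog log logb)

section Entropy

variable {Ω Ω' β γ δ : Type*} [Fintype Ω] [Fintype Ω'] [Fintype β] [Fintype γ] [Fintype δ]
  [DecidableEq β] [DecidableEq γ] [DecidableEq δ]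

omit [DecidableEq β] in
lemma entPMF_eq_sum_negMulLog (r : β → ℝ) : entPMF r = (∑ b, negMulLog (r b)) / log 2 := by
  simp only [entPMF, logb, negMulLog, sum_div, ← sum_neg_distrib]
  exact sum_congr rfl fun b _ => by ring

omit [Fintype β] in
lemma marg_comp_equiv (e : Ω' ≃ Ω) (p : Ω → ℝ) (f : Ω → β) (b : β) :
    marg (p ∘ e) (f ∘ e) b = marg p f b :=
  e.sum_comp fun ω => if f ω = b then p ω else 0

lemma ent_comp_equiv (e : Ω' ≃ Ω) (p : Ω → ℝ) (f : Ω → β) : ent (p ∘ e) (f ∘ e) = ent p f := by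
  simp only [ent, marg_comp_equiv]

lemma cmi_comp_equiv (e : Ω' ≃ Ω) (p : Ω → ℝ) (f : Ω → β) (g : Ω → γ) (h : Ω → δ) :
    cmi (p ∘ e) (f ∘ e) (g ∘ e) (h ∘ e) = cmi p f g h := by
  simp only [cmi, ← ent_comp_equiv e p]
  rfl

lemma ent_equiv_comp (e : β ≃ γ) (p : Ω → ℝ) (f : Ω → β) : ent p (e ∘ f) = ent p f := by
  simp only [ent, entPMF, ← e.sum_comp, marg, Function.comp_apply, e.apply_eq_iff_eq]

omit [Fintype γ] in
lemma sum_marg_prod (p : Ω → ℝ) (f : Ω → β) (g : Ω → γ) (c : γ) :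
    ∑ b, marg p (fun ω => (f ω, g ω)) (b, c) = marg p g c := by
  unfold marg
  rw [sum_comm]
  simp [Prod.ext_iff, ite_and]

lemma cmi_eq_condEnt_sub_condEnt (p : Ω → ℝ) (f : Ω → β) (g : Ω → γ) (h : Ω → δ) :
    cmi p f g h = condEnt p g h - condEnt p g (fun ω => (f ω, h ω)) := by
  let e : β × γ × δ ≃ γ × β × δ :=
    ⟨fun x => (x.2.1, x.1, x.2.2), fun x => (x.2.1, x.1, x.2.2), fun _ => rfl, fun _ => rfl⟩
  have swap : ent p (fun ω => (g ω, f ω, h ω)) = ent p (fun ω => (f ω, g ω, h ω)) :=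
    ent_equiv_comp e p fun ω => (f ω, g ω, h ω)
  rw [cmi, condEnt, condEnt, swap]
  ring

end Entropy

section MassEntropy

variable {α : Type*} [Fintype α]

/-- The entropy in bits of the normalized weight `v / ∑ v`, multiplied by the total mass `∑ v`.
Summing it over the letters of a channel turns joint weights into a conditional entropy. -/
noncomputable def massEntropy (v : α → ℝ) : ℝ :=
  (∑ x, negMulLog (v x) - negMulLog (∑ x, v x)) / log 2

lemma massEntropy_of_sum_eq_one {v : α → ℝ} (hv : ∑ x, v x = 1) : massEntropy v = entPMF v := by
  rw [massEntropy, hv, Real.negMulLog_one, sub_zero, entPMF_eq_sum_negMulLog]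

lemma massEntropy_const_mul (c : ℝ) (v : α → ℝ) :
    massEntropy (fun x => c * v x) = c * massEntropy v := by
  simp only [massEntropy, ← mul_sum, Real.negMulLog_mul, sum_add_distrib, ← sum_mul]
  ring

lemma massEntropy_ite_mem [DecidableEq α] (s : Finset α) (c : ℝ) :
    massEntropy (fun x => if x ∈ s then c else 0) = #s * c * logb 2 #s := by
  simp only [massEntropy, apply_ite negMulLog, Real.negMulLog_zero, sum_ite_mem, univ_inter,
    sum_const, nsmul_eq_mul, Real.negMulLog_mul]
  simp only [negMulLog, logb]
  ring

lemma massEntropy_le_mul_logb_card {v : α → ℝ} {s : Finset α} (hv : ∀ x, 0 ≤ v x)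
    (hs : ∀ x ∉ s, v x = 0) : massEntropy v ≤ (∑ x, v x) * logb 2 #s := by
  have sum_eq : ∑ x, v x = ∑ x ∈ s, v x :=
    (sum_subset (subset_univ s) fun x _ => hs x).symm
  have sum_negMulLog_eq : ∑ x, negMulLog (v x) = ∑ x ∈ s, negMulLog (v x) :=
    (sum_subset (subset_univ s) fun x _ hx => by rw [hs x hx, Real.negMulLog_zero]).symm
  rw [massEntropy, sum_eq, sum_negMulLog_eq]
  rcases s.eq_empty_or_nonempty with rfl | hne
  · simp
  have hn : (0 : ℝ) < #s := by exact_mod_cast hne.card_pos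
  have jensen := Real.concaveOn_negMulLog.le_map_sum (t := s) (w := fun _ => (#s : ℝ)⁻¹) (p := v)
    (fun _ _ => by positivity) (by simp [hn.ne']) fun x _ => hv x
  simp only [smul_eq_mul, ← mul_sum, Real.negMulLog_mul] at jensen
  have key : ∑ x ∈ s, negMulLog (v x) - negMulLog (∑ x ∈ s, v x) ≤ (∑ x ∈ s, v x) * log #s := by
    rw [negMulLog, Real.log_inv, neg_mul_neg, ← sub_nonneg] at jensen
    refine sub_nonneg.1 (nonneg_of_mul_nonneg_right (jensen.trans_eq ?_) (inv_pos.2 hn))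
    ring
  rw [logb, ← mul_div_assoc]
  gcongr

lemma condEnt_eq_sum_massEntropy {Ω γ : Type*} [Fintype Ω] [Fintype γ] [DecidableEq α]
    [DecidableEq γ] (p : Ω → ℝ) (f : Ω → α) (g : Ω → γ) :
    condEnt p f g = ∑ c, massEntropy fun a => marg p (fun ω => (f ω, g ω)) (a, c) := by
  simp only [condEnt, ent, entPMF_eq_sum_negMulLog, massEntropy, sum_marg_prod, ← sum_div,
    sum_sub_distrib, sub_div, Fintype.sum_prod_type_right]

end MassEntropy

section Channel

variable {X U : Type*} [Fintype X] [Fintype U]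

/-- The equivocation `H(X | U)` of a channel `a x u = p(u | x)` with input law `π`. -/
noncomputable def equivocation (π : X → ℝ) (a : X → U → ℝ) : ℝ :=
  ∑ u, massEntropy fun x => π x * a x u

lemma cmi_eq_entPMF_sub_equivocation {Ω T : Type*} [Fintype Ω] [Fintype T] [DecidableEq X]
    [DecidableEq U] [DecidableEq T] {p : Ω → ℝ} {f : Ω → U} {g : Ω → X} {h : Ω → T}
    {π : X → ℝ} {pT : T → ℝ} {a : X → T → U → ℝ} (hπ : ∑ x, π x = 1) (hT : ∑ t, pT t = 1)
    (ha : ∀ x t, ∑ u, a x t u = 1)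
    (hp : ∀ u x t, marg p (fun ω => (f ω, g ω, h ω)) (u, x, t) = pT t * (π x * a x t u)) :
    cmi p f g h = entPMF π - ∑ t, pT t * equivocation π (fun x => a x t) := by
  have marg_input (x : X) (t : T) : marg p (fun ω => (g ω, h ω)) (x, t) = pT t * π x := by
    rw [← sum_marg_prod p f]
    simp only [hp, ← mul_sum, ha, mul_one]
  have marg_swap (u : U) (x : X) (t : T) :
      marg p (fun ω => (g ω, f ω, h ω)) (x, u, t) = pT t * (π x * a x t u) := by
    rw [← hp]
    exact sum_congr rfl fun ω _ => if_congr (by simp only [Prod.mk.injEq]; tauto) rfl rfl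
  have condEnt_input : condEnt p g h = entPMF π := by
    simp only [condEnt_eq_sum_massEntropy, marg_input, massEntropy_const_mul, ← sum_mul, hT,
      one_mul, massEntropy_of_sum_eq_one hπ]
  rw [cmi_eq_condEnt_sub_condEnt, condEnt_input]
  simp only [condEnt_eq_sum_massEntropy, marg_swap, massEntropy_const_mul, equivocation,
    Fintype.sum_prod_type_right, mul_sum]

/-- The inputs that the channel `a` sends to the letter `u` with positive probability. -/
noncomputable def compatible (a : X → U → ℝ) (u : U) : Finset X := {x | 0 < a x u}

omit [Fintype U] in
@[simp] lemma mem_compatible {a : X → U → ℝ} {u : U} {x : X} :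
    x ∈ compatible a u ↔ 0 < a x u := by
  simp [compatible]

open Classical in
/-- The probability that the letter sent for the input `x` fails to determine the input. -/
noncomputable def ambiguity (a : X → U → ℝ) (x : X) : ℝ :=
  ∑ u with (compatible a u).Nontrivial, a x u

lemma ambiguity_eq_zero {a : X → U → ℝ} (ha : ∀ u, ¬ (compatible a u).Nontrivial) (x : X) :
    ambiguity a x = 0 := by
  simp [ambiguity, ha]

lemma ambiguity_le_one {a : X → U → ℝ} {x : X} (ha : IsPMF (a x)) : ambiguity a x ≤ 1 :=
  (sum_le_univ_sum_of_nonneg ha.1).trans_eq ha.2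

lemma equivocation_le_sum_mul_ambiguity {π : X → ℝ} {a : X → U → ℝ} (hπ : ∀ x, 0 ≤ π x)
    (ha : ∀ x u, 0 ≤ a x u) (hcard : ∀ u, #(compatible a u) ≤ 2) :
    equivocation π a ≤ ∑ x, π x * ambiguity a x := by
  have letter_le (u : U) : massEntropy (fun x => π x * a x u) ≤
      if (compatible a u).Nontrivial then ∑ x, π x * a x u else 0 := by
    have hs (x : X) (hx : x ∉ compatible a u) : π x * a x u = 0 := by
      rw [(not_lt.1 (mem_compatible.not.1 hx)).antisymm (ha x u), mul_zero]
    refine (massEntropy_le_mul_logb_card (fun x => mul_nonneg (hπ x) (ha x u)) hs).trans_eq ?_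
    split_ifs with hu
    · have : #(compatible a u) = 2 := (hcard u).antisymm (one_lt_card_iff_nontrivial.2 hu)
      simp [this]
    · have : #(compatible a u) ≤ 1 := not_lt.1 (one_lt_card_iff_nontrivial.not.2 hu)
      interval_cases #(compatible a u) <;> simp
  calc equivocation π a ≤ ∑ u, if (compatible a u).Nontrivial then ∑ x, π x * a x u else 0 :=
        sum_le_sum fun u _ => letter_le u
    _ = ∑ x, π x * ambiguity a x := by
        simp only [ambiguity, mul_sum, ← sum_filter]
        exact sum_comm

end Channel

section JointPMF

variable {X₁ X₂ T U₁ U₂ Y : Type*} [Fintype X₁] [Fintype X₂] [Fintype T] [Fintype U₁] [Fintype U₂]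
  [Fintype Y]

/-- The law of `(X₁, X₂, T, U₁, U₂, Y)` for independent inputs and time-sharing variable with laws
`π₁`, `π₂`, `pT`, encoders `a x₁ t u₁ = p(u₁ | x₁, t)` and `b x₂ t u₂ = p(u₂ | x₂, t)`, and decoder
`d u₁ u₂ t y = p(y | u₁, u₂, t)`. -/
def jointPMF (π₁ : X₁ → ℝ) (π₂ : X₂ → ℝ) (pT : T → ℝ) (a : X₁ → T → U₁ → ℝ) (b : X₂ → T → U₂ → ℝ)
    (d : U₁ → U₂ → T → Y → ℝ) : X₁ × X₂ × T × U₁ × U₂ × Y → ℝ :=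
  fun (x₁, x₂, t, u₁, u₂, y) => π₁ x₁ * π₂ x₂ * pT t * a x₁ t u₁ * b x₂ t u₂ * d u₁ u₂ t y

variable {π₁ : X₁ → ℝ} {π₂ : X₂ → ℝ} {pT : T → ℝ} {a : X₁ → T → U₁ → ℝ} {b : X₂ → T → U₂ → ℝ}
  {d : U₁ → U₂ → T → Y → ℝ}

lemma marg_jointPMF_fst [DecidableEq X₁] [DecidableEq T] [DecidableEq U₁]
    (hπ₂ : IsPMF π₂) (hb : ∀ x t, IsPMF (b x t)) (hd : ∀ u v t, IsPMF (d u v t))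
    (u : U₁) (x : X₁) (t : T) :
    marg (jointPMF π₁ π₂ pT a b d) (fun ω => (ω.2.2.2.1, ω.1, ω.2.2.1)) (u, x, t) =
      pT t * (π₁ x * a x t u) := by
  calc marg (jointPMF π₁ π₂ pT a b d) (fun ω => (ω.2.2.2.1, ω.1, ω.2.2.1)) (u, x, t)
      = ∑ x₂, ∑ u₂, ∑ y, π₁ x * π₂ x₂ * pT t * a x t u * b x₂ t u₂ * d u u₂ t y := by
        simp [marg, jointPMF, Fintype.sum_prod_type, ite_and, sum_ite_irrel]
    _ = pT t * (π₁ x * a x t u) := by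
        simp only [← mul_sum, (hd _ _ _).2, (hb _ _).2, mul_one, ← sum_mul, hπ₂.2]
        ring

variable [DecidableEq X₁] [DecidableEq X₂] [DecidableEq T] [DecidableEq U₁] [DecidableEq U₂]

/-- The information `I(U₁; X₁ | T)` required of the first encoder, for a law `p` of
`(X₁, X₂, T, U₁, U₂, Y)`. -/
noncomputable def infoFst (p : X₁ × X₂ × T × U₁ × U₂ × Y → ℝ) : ℝ :=
  cmi p (fun ω => ω.2.2.2.1) (fun ω => ω.1) (fun ω => ω.2.2.1)

/-- The information `I(U₂; X₂ | T)` required of the second encoder, for a law `p` of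
`(X₁, X₂, T, U₁, U₂, Y)`. -/
noncomputable def infoSnd (p : X₁ × X₂ × T × U₁ × U₂ × Y → ℝ) : ℝ :=
  cmi p (fun ω => ω.2.2.2.2.1) (fun ω => ω.2.1) (fun ω => ω.2.2.1)

omit [DecidableEq X₂] [DecidableEq U₂] in
lemma infoFst_jointPMF (hπ₁ : IsPMF π₁) (hπ₂ : IsPMF π₂) (hT : IsPMF pT)
    (ha : ∀ x t, IsPMF (a x t)) (hb : ∀ x t, IsPMF (b x t)) (hd : ∀ u v t, IsPMF (d u v t)) :
    infoFst (jointPMF π₁ π₂ pT a b d) =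
      entPMF π₁ - ∑ t, pT t * equivocation π₁ (fun x => a x t) :=
  cmi_eq_entPMF_sub_equivocation hπ₁.2 hT.2 (fun x t => (ha x t).2)
    (marg_jointPMF_fst hπ₂ hb hd)

omit [DecidableEq X₁] [DecidableEq U₁] in
lemma infoSnd_jointPMF (hπ₁ : IsPMF π₁) (hπ₂ : IsPMF π₂) (hT : IsPMF pT)
    (ha : ∀ x t, IsPMF (a x t)) (hb : ∀ x t, IsPMF (b x t)) (hd : ∀ u v t, IsPMF (d u v t)) :
    infoSnd (jointPMF π₁ π₂ pT a b d) =
      entPMF π₂ - ∑ t, pT t * equivocation π₂ (fun x => b x t) := by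
  let e : X₁ × X₂ × T × U₁ × U₂ × Y ≃ X₂ × X₁ × T × U₂ × U₁ × Y :=
    ⟨fun (x₁, x₂, t, u₁, u₂, y) => (x₂, x₁, t, u₂, u₁, y),
      fun (x₂, x₁, t, u₂, u₁, y) => (x₁, x₂, t, u₁, u₂, y), fun _ => rfl, fun _ => rfl⟩
  have swap : jointPMF π₁ π₂ pT a b d = jointPMF π₂ π₁ pT b a (fun v u => d u v) ∘ e := by
    funext ⟨x₁, x₂, t, u₁, u₂, y⟩
    simp only [jointPMF, e, Function.comp_apply, Equiv.coe_fn_mk]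
    ring
  rw [swap, ← infoFst_jointPMF hπ₂ hπ₁ hT hb ha fun v u => hd u v]
  exact cmi_comp_equiv e _ (fun ω => ω.2.2.2.1) (fun ω => ω.1) (fun ω => ω.2.2.1)

end JointPMF

section Bits

lemma bsel_injective {z : Bool × Bool} (hz : z.1 ≠ z.2) : Function.Injective (bsel z) := by
  revert z
  decide

lemma eq_of_bsel_eq {x x' : Bool × Bool} {i j : Fin 2} (hij : i ≠ j)
    (hi : bsel x i = bsel x' i) (hj : bsel x j = bsel x' j) : x = x' := by
  revert x x' i j
  decide

/-- All inputs in `s` have the same bit `j`. -/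
abbrev BitConstOn (j : Fin 2) (s : Finset (Bool × Bool)) : Prop :=
  ∀ x ∈ s, ∀ x' ∈ s, bsel x j = bsel x' j

lemma BitConstOn.card_le_two {j : Fin 2} {s : Finset (Bool × Bool)} (hs : BitConstOn j s) :
    #s ≤ 2 := by
  revert j s
  decide

lemma exists_bitConstOn {s : Finset (Bool × Bool)}
    (hs : ∀ x ∈ s, ∀ x' ∈ s, ∃ j, bsel x j = bsel x' j) : ∃ j, BitConstOn j s := by
  revert s
  decide

lemma eq_bsel_pair_of_ne {x x' z y : Bool × Bool} {i j k : Fin 2} (hx : x ≠ x')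
    (hj : bsel x j = bsel x' j) (hy : y = (bsel x i, bsel z i))
    (hy' : y = (bsel x' k, bsel z k)) : y = (bsel x j, bsel z j) := by
  rcases eq_or_ne i j with rfl | hij
  · exact hy
  rcases eq_or_ne k j with rfl | hkj
  · rw [hy', hj]
  obtain rfl : i = k := by omega
  exact absurd (eq_of_bsel_eq hij (congrArg Prod.fst (hy.symm.trans hy')) hj) hx

lemma qEx_swap (x₁ x₂ y : Bool × Bool) : qEx (x₂, x₁, y.swap) = qEx (x₁, x₂, y) := by
  simp only [qEx, Prod.ext_iff, Prod.fst_swap, Prod.snd_swap, and_comm]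

lemma exists_bsel_of_qEx_pos {x₁ x₂ y : Bool × Bool} (h : 0 < qEx (x₁, x₂, y)) :
    ∃ j, y = (bsel x₁ j, bsel x₂ j) := by
  contrapose! h
  simp [qEx, h]

lemma qEx_of_fst_ne_snd (x₁ : Bool × Bool) {x₂ : Bool × Bool} (hx₂ : x₂.1 ≠ x₂.2) (j : Fin 2) :
    qEx (x₁, x₂, (bsel x₁ j, bsel x₂ j)) = 1 / 32 := by
  have h (i : Fin 2) : (bsel x₁ j, bsel x₂ j) = (bsel x₁ i, bsel x₂ i) ↔ i = j :=
    ⟨fun h => (bsel_injective hx₂ (congrArg Prod.snd h)).symm, fun h => by rw [h]⟩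
  simp [qEx, h]

end Bits

namespace IsPMF

variable {α : Type*} [Fintype α] {p : α → ℝ}

lemma exists_pos (hp : IsPMF p) : ∃ a, 0 < p a := by
  by_contra! h
  linarith [hp.2, sum_nonpos fun a (_ : a ∈ univ) => h a]

lemma eq_one_of_forall_pos_eq (hp : IsPMF p) {a₀ : α} (h : ∀ a, 0 < p a → a = a₀) : p a₀ = 1 := by
  rw [← hp.2, Fintype.sum_eq_single a₀]
  exact fun a ha => ((hp.1 a).eq_or_lt.resolve_right fun hpos => ha (h a hpos)).symm

lemma comp_equiv {β : Type*} [Fintype β] (hp : IsPMF p) (e : β ≃ α) : IsPMF (p ∘ e) :=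
  ⟨fun b => hp.1 (e b), (e.sum_comp p).trans hp.2⟩

lemma sum_mul_le {c : α → ℝ} {C : ℝ} (hp : IsPMF p) (hc : ∀ a, c a ≤ C) :
    ∑ a, p a * c a ≤ C := by
  calc ∑ a, p a * c a ≤ ∑ a, p a * C := by gcongr with a; exacts [hp.1 a, hc a]
    _ = C := by rw [← sum_mul, hp.2, one_mul]

end IsPMF

/-- Encoders `a x₁ u = p(u | x₁)`, `b x₂ v = p(v | x₂)` and a decoder `d u v y = p(y | u, v)`
reproduce the law `qEx` on uniform inputs; this is the scheme used at one value of the time-sharing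
variable. -/
structure Simulates {U V : Type*} [Fintype U] [Fintype V] (a : Bool × Bool → U → ℝ)
    (b : Bool × Bool → V → ℝ) (d : U → V → Bool × Bool → ℝ) : Prop where
  fst_isPMF : ∀ x, IsPMF (a x)
  snd_isPMF : ∀ x, IsPMF (b x)
  dec_isPMF : ∀ u v, IsPMF (d u v)
  sum_eq : ∀ x₁ x₂ y, ∑ u, ∑ v, (1 / 16 : ℝ) * a x₁ u * b x₂ v * d u v y = qEx (x₁, x₂, y)

namespace Simulates

variable {U V : Type*} [Fintype U] [Fintype V] {a : Bool × Bool → U → ℝ}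
  {b : Bool × Bool → V → ℝ} {d : U → V → Bool × Bool → ℝ}

lemma swap (S : Simulates a b d) : Simulates b a (fun v u => d u v ∘ Prod.swap) where
  fst_isPMF := S.snd_isPMF
  snd_isPMF := S.fst_isPMF
  dec_isPMF v u := (S.dec_isPMF u v).comp_equiv (Equiv.prodComm Bool Bool)
  sum_eq x₁ x₂ y := by
    rw [← qEx_swap, ← S.sum_eq, sum_comm]
    exact sum_congr rfl fun u _ => sum_congr rfl fun v _ => by simp only [Function.comp]; ring

lemma term_nonneg (S : Simulates a b d) (x₁ x₂ y : Bool × Bool) (u : U) (v : V) :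
    0 ≤ (1 / 16 : ℝ) * a x₁ u * b x₂ v * d u v y := by
  have := (S.fst_isPMF x₁).1 u
  have := (S.snd_isPMF x₂).1 v
  have := (S.dec_isPMF u v).1 y
  positivity

lemma exists_output_eq (S : Simulates a b d) {x₁ x₂ y : Bool × Bool} {u : U} {v : V}
    (hu : 0 < a x₁ u) (hv : 0 < b x₂ v) (hy : 0 < d u v y) : ∃ j, y = (bsel x₁ j, bsel x₂ j) := by
  apply exists_bsel_of_qEx_pos
  rw [← S.sum_eq]
  refine sum_pos' (fun u _ => sum_nonneg fun v _ => S.term_nonneg x₁ x₂ y u v) ⟨u, mem_univ u, ?_⟩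
  exact sum_pos' (fun v _ => S.term_nonneg x₁ x₂ y u v) ⟨v, mem_univ v, by positivity⟩

/-- Paired with the input `01` of the other encoder, the output reveals which bit was selected. -/
lemma exists_bsel_eq (S : Simulates a b d) {x x' : Bool × Bool} {u : U} (hx : 0 < a x u)
    (hx' : 0 < a x' u) : ∃ j, bsel x j = bsel x' j := by
  obtain ⟨v, hv⟩ := (S.snd_isPMF (false, true)).exists_pos
  obtain ⟨y, hy⟩ := (S.dec_isPMF u v).exists_pos
  obtain ⟨i, hi⟩ := S.exists_output_eq hx hv hy
  obtain ⟨j, hj⟩ := S.exists_output_eq hx' hv hy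
  obtain ⟨hfst, hsnd⟩ := Prod.ext_iff.1 (hi.symm.trans hj)
  obtain rfl : i = j := bsel_injective (by decide) hsnd
  exact ⟨i, hfst⟩

lemma exists_bitConstOn_compatible (S : Simulates a b d) (u : U) :
    ∃ j, BitConstOn j (compatible a u) :=
  exists_bitConstOn fun _ hx _ hx' =>
    S.exists_bsel_eq (mem_compatible.1 hx) (mem_compatible.1 hx')

lemma card_compatible_le_two (S : Simulates a b d) (u : U) : #(compatible a u) ≤ 2 :=
  let ⟨_, hj⟩ := S.exists_bitConstOn_compatible u
  hj.card_le_two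

section Nontrivial

variable {j : Fin 2} {u : U} {v : V}

lemma output_eq_of_nontrivial (S : Simulates a b d) {x₁ x₂ y : Bool × Bool}
    (hu : (compatible a u).Nontrivial) (hj : BitConstOn j (compatible a u)) (hx₁ : 0 < a x₁ u)
    (hx₂ : 0 < b x₂ v) (hy : 0 < d u v y) : y = (bsel x₁ j, bsel x₂ j) := by
  obtain ⟨x₁', hx₁', hne⟩ := hu.exists_ne x₁
  obtain ⟨i, hi⟩ := S.exists_output_eq hx₁ hx₂ hy
  obtain ⟨k, hk⟩ := S.exists_output_eq (mem_compatible.1 hx₁') hx₂ hy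
  exact eq_bsel_pair_of_ne hne.symm (hj x₁ (mem_compatible.2 hx₁) x₁' hx₁') hi hk

lemma bitConstOn_compatible_of_nontrivial (S : Simulates a b d)
    (hu : (compatible a u).Nontrivial) (hj : BitConstOn j (compatible a u)) (v : V) :
    BitConstOn j (compatible b v) := by
  intro z hz z' hz'
  obtain ⟨x, hx⟩ := hu.nonempty
  obtain ⟨y, hy⟩ := (S.dec_isPMF u v).exists_pos
  have hyz := S.output_eq_of_nontrivial hu hj (mem_compatible.1 hx) (mem_compatible.1 hz) hy
  have hyz' := S.output_eq_of_nontrivial hu hj (mem_compatible.1 hx) (mem_compatible.1 hz') hy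
  exact congrArg Prod.snd (hyz.symm.trans hyz')

lemma sum_eq_of_nontrivial (S : Simulates a b d) (hu : (compatible a u).Nontrivial)
    (hj : BitConstOn j (compatible a u)) (x₁ x₂ : Bool × Bool) :
    ∑ v, (1 / 16 : ℝ) * a x₁ u * b x₂ v * d u v (bsel x₁ j, bsel x₂ j) = 1 / 16 * a x₁ u := by
  have term_eq (v : V) : (1 / 16 : ℝ) * a x₁ u * b x₂ v * d u v (bsel x₁ j, bsel x₂ j) =
      1 / 16 * a x₁ u * b x₂ v := by
    rcases ((S.fst_isPMF x₁).1 u).eq_or_lt with hx₁ | hx₁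
    · simp [← hx₁]
    rcases ((S.snd_isPMF x₂).1 v).eq_or_lt with hx₂ | hx₂
    · simp [← hx₂]
    rw [(S.dec_isPMF u v).eq_one_of_forall_pos_eq fun y hy =>
      S.output_eq_of_nontrivial hu hj hx₁ hx₂ hy, mul_one]
  simp only [term_eq, ← mul_sum, (S.snd_isPMF x₂).2, mul_one]

end Nontrivial

/-- Against the input `01`, an ambiguous letter makes the output be `(X₁ⱼ, X₂ⱼ)` with this one `j`,
an event of probability `1 / 2`. -/
lemma ambiguity_le_half (S : Simulates a b d) {j : Fin 2}
    (hj : ∀ u, BitConstOn j (compatible a u)) (x : Bool × Bool) : ambiguity a x ≤ 1 / 2 := by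
  classical
  let z : Bool × Bool := (false, true)
  let w (u : U) : ℝ := ∑ v, (1 / 16 : ℝ) * a x u * b z v * d u v (bsel x j, bsel z j)
  have bound : 1 / 16 * ambiguity a x ≤ 1 / 32 :=
    calc 1 / 16 * ambiguity a x = ∑ u with (compatible a u).Nontrivial, w u := by
          rw [ambiguity, mul_sum]
          refine sum_congr (by congr) fun u hu => ?_
          exact (S.sum_eq_of_nontrivial (mem_filter.1 hu).2 (hj u) x z).symm
      _ ≤ ∑ u, w u := sum_le_univ_sum_of_nonneg fun u => sum_nonneg fun v _ =>
          S.term_nonneg x z (bsel x j, bsel z j) u v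
      _ = 1 / 32 := by rw [S.sum_eq, qEx_of_fst_ne_snd x (by decide) j]
  linarith

lemma ambiguity_add_ambiguity_le_one (S : Simulates a b d) (x₁ x₂ : Bool × Bool) :
    ambiguity a x₁ + ambiguity b x₂ ≤ 1 := by
  by_cases ha : ∃ u, (compatible a u).Nontrivial
  swap
  · rw [ambiguity_eq_zero (not_exists.1 ha), zero_add]
    exact ambiguity_le_one (S.snd_isPMF x₂)
  by_cases hb : ∃ v, (compatible b v).Nontrivial
  swap
  · rw [ambiguity_eq_zero (not_exists.1 hb), add_zero]
    exact ambiguity_le_one (S.fst_isPMF x₁)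
  obtain ⟨u, hu⟩ := ha
  obtain ⟨v, hv⟩ := hb
  obtain ⟨j, hj⟩ := S.exists_bitConstOn_compatible u
  have hbj := S.bitConstOn_compatible_of_nontrivial hu hj
  have haj := S.swap.bitConstOn_compatible_of_nontrivial hv (hbj v)
  linarith [S.ambiguity_le_half haj x₁, S.swap.ambiguity_le_half hbj x₂]

lemma equivocation_le_sum_mul_ambiguity (S : Simulates a b d) {π : Bool × Bool → ℝ}
    (hπ : IsPMF π) : equivocation π a ≤ ∑ x, π x * ambiguity a x :=
  _root_.equivocation_le_sum_mul_ambiguity hπ.1 (fun x => (S.fst_isPMF x).1)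
    S.card_compatible_le_two

lemma equivocation_le_one (S : Simulates a b d) {π : Bool × Bool → ℝ} (hπ : IsPMF π) :
    equivocation π a ≤ 1 :=
  (S.equivocation_le_sum_mul_ambiguity hπ).trans
    (hπ.sum_mul_le fun x => ambiguity_le_one (S.fst_isPMF x))

lemma equivocation_add_equivocation_le_one (S : Simulates a b d) {π₁ π₂ : Bool × Bool → ℝ}
    (hπ₁ : IsPMF π₁) (hπ₂ : IsPMF π₂) : equivocation π₁ a + equivocation π₂ b ≤ 1 := by
  have key (x₁ : Bool × Bool) : ambiguity a x₁ ≤ 1 - equivocation π₂ b := by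
    have : ∑ x₂, π₂ x₂ * ambiguity b x₂ ≤ 1 - ambiguity a x₁ :=
      hπ₂.sum_mul_le fun x₂ => by linarith [S.ambiguity_add_ambiguity_le_one x₁ x₂]
    linarith [S.swap.equivocation_le_sum_mul_ambiguity hπ₂]
  linarith [S.equivocation_le_sum_mul_ambiguity hπ₁, hπ₁.sum_mul_le key]

end Simulates

section Corner

/-- The law of two independent uniform bits. -/
noncomputable def uniformBits : Bool × Bool → ℝ := fun _ => 1 / 4

lemma uniformBits_isPMF : IsPMF uniformBits :=
  ⟨fun _ => by norm_num [uniformBits], by simp [uniformBits]⟩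

lemma entPMF_uniformBits : entPMF uniformBits = 2 := by
  have eq_ite : uniformBits = fun x => if x ∈ (univ : Finset (Bool × Bool)) then 1 / 4 else 0 := by
    funext x
    simp [uniformBits]
  have logb_four : logb 2 4 = 2 := by
    rw [show (4 : ℝ) = 2 ^ 2 by norm_num, Real.logb_pow, Real.logb_self_eq_one one_lt_two]
    norm_num
  rw [← massEntropy_of_sum_eq_one uniformBits_isPMF.2, eq_ite, massEntropy_ite_mem]
  simp [logb_four]

/-- The encoder sending `(J, X_J)` for a uniform `J`, where the first bit of the letter encodes
`J`: `false` for the first input bit, `true` for the second. -/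
noncomputable def selectEnc (x u : Bool × Bool) : ℝ :=
  if u.2 = bsel x (finTwoEquiv.symm u.1) then 1 / 2 else 0

/-- The encoder sending its whole input. -/
def fullEnc (x u : Bool × Bool) : ℝ := if x = u then 1 else 0

/-- The decoder for `selectEnc` and `fullEnc`: it outputs the received bit `X₁J` and the bit of the
received `X₂` selected by the received `J`. -/
def cornerDec (u v y : Bool × Bool) : ℝ :=
  if y = (u.2, bsel v (finTwoEquiv.symm u.1)) then 1 else 0

lemma simulates_corner : Simulates selectEnc fullEnc cornerDec where
  fst_isPMF x := ⟨fun u => by unfold selectEnc; positivity, by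
    simp [selectEnc, Fintype.sum_prod_type]⟩
  snd_isPMF x := ⟨fun u => by unfold fullEnc; positivity, by simp [fullEnc]⟩
  dec_isPMF u v := ⟨fun y => by unfold cornerDec; positivity, by simp [cornerDec]⟩
  sum_eq x₁ x₂ y := by
    have sum_second (u : Bool × Bool) :
        ∑ v, (1 / 16 : ℝ) * selectEnc x₁ u * fullEnc x₂ v * cornerDec u v y =
          1 / 16 * selectEnc x₁ u * cornerDec u x₂ y := by
      simp [fullEnc]
    simp only [sum_second, Fintype.sum_prod_type (α₁ := Bool), qEx, ← finTwoEquiv.symm.sum_comp]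
    refine sum_congr rfl fun i _ => ?_
    rw [Fintype.sum_eq_single (bsel x₁ (finTwoEquiv.symm i)) fun c hc => by simp [selectEnc, hc]]
    norm_num [selectEnc, cornerDec]

lemma equivocation_fullEnc : equivocation uniformBits fullEnc = 0 := by
  have letter (u : Bool × Bool) :
      massEntropy (fun x => uniformBits x * fullEnc x u) = 0 := by
    have := massEntropy_ite_mem {u} (1 / 4)
    simpa [uniformBits, fullEnc] using this
  simp only [equivocation, letter, sum_const_zero]

lemma equivocation_selectEnc : equivocation uniformBits selectEnc = 1 := by
  have letter (u : Bool × Bool) :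
      massEntropy (fun x => uniformBits x * selectEnc x u) = 1 / 4 := by
    let s : Finset (Bool × Bool) := {x | u.2 = bsel x (finTwoEquiv.symm u.1)}
    have card_s : #s = 2 := by
      revert u
      decide
    have eq_ite : (fun x => uniformBits x * selectEnc x u) =
        fun x => if x ∈ s then 1 / 8 else 0 := by
      funext x
      simp only [uniformBits, selectEnc, s, mem_filter_univ]
      split_ifs <;> norm_num
    rw [eq_ite, massEntropy_ite_mem, card_s]
    norm_num
  simp [equivocation, letter]

end Corner

section TimeSharing

lemma jointPMF_uniformBits {T U₁ U₂ Y : Type*} (pT : T → ℝ) (a : Bool × Bool → T → U₁ → ℝ)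
    (b : Bool × Bool → T → U₂ → ℝ) (d : U₁ → U₂ → T → Y → ℝ) (x₁ x₂ : Bool × Bool) (t : T)
    (u₁ : U₁) (u₂ : U₂) (y : Y) :
    jointPMF uniformBits uniformBits pT a b d (x₁, x₂, t, u₁, u₂, y) =
      (1 / 16 : ℝ) * pT t * a x₁ t u₁ * b x₂ t u₂ * d u₁ u₂ t y := by
  norm_num [jointPMF, uniformBits]

lemma info_bounds_of_simulates {T U₁ U₂ : Type*} [Fintype T] [Fintype U₁] [Fintype U₂]
    [DecidableEq T] [DecidableEq U₁] [DecidableEq U₂] {pT : T → ℝ} {a : Bool × Bool → T → U₁ → ℝ}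
    {b : Bool × Bool → T → U₂ → ℝ} {d : U₁ → U₂ → T → Bool × Bool → ℝ} (hT : IsPMF pT)
    (S : ∀ t, Simulates (fun x => a x t) (fun x => b x t) (fun u v => d u v t)) :
    1 ≤ infoFst (jointPMF uniformBits uniformBits pT a b d) ∧
      1 ≤ infoSnd (jointPMF uniformBits uniformBits pT a b d) ∧
      3 ≤ infoFst (jointPMF uniformBits uniformBits pT a b d) +
        infoSnd (jointPMF uniformBits uniformBits pT a b d) := by
  have hπ := uniformBits_isPMF
  have ha x t := (S t).fst_isPMF x
  have hb x t := (S t).snd_isPMF x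
  have hd u v t := (S t).dec_isPMF u v
  rw [infoFst_jointPMF hπ hπ hT ha hb hd, infoSnd_jointPMF hπ hπ hT ha hb hd, entPMF_uniformBits]
  have le₁ := hT.sum_mul_le fun t => (S t).equivocation_le_one hπ
  have le₂ := hT.sum_mul_le fun t => (S t).swap.equivocation_le_one hπ
  have add_le := hT.sum_mul_le fun t => (S t).equivocation_add_equivocation_le_one hπ hπ
  simp only [mul_add, sum_add_distrib] at add_le
  refine ⟨?_, ?_, ?_⟩ <;> linarith

/-- The first encoder is `selectEnc` for a fraction `l` of the time, with the roles of the encoders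
exchanged otherwise. -/
lemma exists_simulates_info_eq {l : ℝ} (hl₀ : 0 ≤ l) (hl₁ : l ≤ 1) :
    ∃ (pT : Bool → ℝ) (a b : Bool × Bool → Bool → Bool × Bool → ℝ)
      (d : Bool × Bool → Bool × Bool → Bool → Bool × Bool → ℝ),
      IsPMF pT ∧
      (∀ t, Simulates (fun x => a x t) (fun x => b x t) (fun u v => d u v t)) ∧
      infoFst (jointPMF uniformBits uniformBits pT a b d) = 2 - l ∧
      infoSnd (jointPMF uniformBits uniformBits pT a b d) = 1 + l := by
  let pT (t : Bool) : ℝ := bif t then l else 1 - l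
  let a (x : Bool × Bool) (t : Bool) := bif t then selectEnc x else fullEnc x
  let b (x : Bool × Bool) (t : Bool) := bif t then fullEnc x else selectEnc x
  let d (u v : Bool × Bool) (t : Bool) := bif t then cornerDec u v else cornerDec v u ∘ Prod.swap
  have hT : IsPMF pT := ⟨Bool.forall_bool.2 ⟨sub_nonneg.2 hl₁, hl₀⟩, by simp [pT]⟩
  have S : ∀ t, Simulates (fun x => a x t) (fun x => b x t) (fun u v => d u v t) :=
    Bool.forall_bool.2 ⟨simulates_corner.swap, simulates_corner⟩
  have hπ := uniformBits_isPMF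
  have ha x t := (S t).fst_isPMF x
  have hb x t := (S t).snd_isPMF x
  have hd u v t := (S t).dec_isPMF u v
  refine ⟨pT, a, b, d, hT, S, ?_, ?_⟩
  · rw [infoFst_jointPMF hπ hπ hT ha hb hd, entPMF_uniformBits]
    simp [pT, a, equivocation_selectEnc, equivocation_fullEnc]
  · rw [infoSnd_jointPMF hπ hπ hT ha hb hd, entPMF_uniformBits]
    simp [pT, b, equivocation_selectEnc, equivocation_fullEnc]
    ring

end TimeSharing

/-- **Proposition 1.**  For the Example distribution `qEx`, the set of nonnegative rate
pairs `(R₁, R₂)` admitting finite auxiliary alphabets `T, U₁, U₂` and a pmf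
`p(x₁,x₂,t,u₁,u₂,y) = p(x₁) p(x₂) p(t) p(u₁|x₁,t) p(u₂|x₂,t) p(y|u₁,u₂,t)` (with
`(X₁,X₂)`-marginal four i.i.d. uniform bits) satisfying
`∑_{u₁,u₂} p(x₁,x₂,u₁,u₂,y|t) = q(x₁,x₂,y)` for every `t`, with `R₁ ≥ I(U₁;X₁|T)` and
`R₂ ≥ I(U₂;X₂|T)`, is exactly `{(R₁,R₂) : R₁ ≥ 1, R₂ ≥ 1, R₁+R₂ ≥ 3}`. -/
theorem example_communication_rate_region :
    {r : ℝ × ℝ | 0 ≤ r.1 ∧ 0 ≤ r.2 ∧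
      ∃ (T U1 U2 : Type) (_ : Fintype T) (_ : Fintype U1) (_ : Fintype U2)
        (_ : DecidableEq T) (_ : DecidableEq U1) (_ : DecidableEq U2)
        (pT : T → ℝ) (pU1c : Bool × Bool → T → U1 → ℝ)
        (pU2c : Bool × Bool → T → U2 → ℝ)
        (pYc : U1 → U2 → T → Bool × Bool → ℝ)
        (p : (Bool × Bool) × (Bool × Bool) × T × U1 × U2 × (Bool × Bool) → ℝ),
        IsPMF pT ∧
        (∀ x1 t, IsPMF (pU1c x1 t)) ∧
        (∀ x2 t, IsPMF (pU2c x2 t)) ∧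
        (∀ u1 u2 t, IsPMF (pYc u1 u2 t)) ∧
        (∀ x1 x2 t u1 u2 y,
          p (x1, x2, t, u1, u2, y) =
            (1 / 16 : ℝ) * pT t * pU1c x1 t u1 * pU2c x2 t u2 * pYc u1 u2 t y) ∧
        (∀ t x1 x2 y,
          (∑ u1 : U1, ∑ u2 : U2,
            (1 / 16 : ℝ) * pU1c x1 t u1 * pU2c x2 t u2 * pYc u1 u2 t y)
            = qEx (x1, x2, y)) ∧
        cmi p (fun ω => ω.2.2.2.1) (fun ω => ω.1) (fun ω => ω.2.2.1) ≤ r.1 ∧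
        cmi p (fun ω => ω.2.2.2.2.1) (fun ω => ω.2.1) (fun ω => ω.2.2.1) ≤ r.2}
    = {r : ℝ × ℝ | 1 ≤ r.1 ∧ 1 ≤ r.2 ∧ 3 ≤ r.1 + r.2} := by
  ext ⟨R₁, R₂⟩
  constructor
  · rintro ⟨-, -, T, U₁, U₂, _, _, _, _, _, _, pT, a, b, d, p, hT, ha, hb, hd, hp, hq, h₁, h₂⟩
    obtain rfl : p = jointPMF uniformBits uniformBits pT a b d := by
      funext ⟨x₁, x₂, t, u₁, u₂, y⟩
      rw [hp, jointPMF_uniformBits]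
    have S (t : T) : Simulates (fun x => a x t) (fun x => b x t) (fun u v => d u v t) :=
      ⟨(ha · t), (hb · t), (hd · · t), hq t⟩
    obtain ⟨le₁, le₂, le_add⟩ := info_bounds_of_simulates hT S
    exact ⟨le₁.trans h₁, le₂.trans h₂, le_add.trans (add_le_add h₁ h₂)⟩
  · rintro ⟨h₁, h₂, h₁₂⟩
    dsimp only at h₁ h₂ h₁₂
    obtain ⟨l, hl₀, hl₁, hR₁, hR₂⟩ : ∃ l : ℝ, 0 ≤ l ∧ l ≤ 1 ∧ 2 - l ≤ R₁ ∧ 1 + l ≤ R₂ :=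
      ⟨max 0 (2 - R₁), by grind⟩
    obtain ⟨pT, a, b, d, hT, S, info₁, info₂⟩ := exists_simulates_info_eq hl₀ hl₁
    exact ⟨by positivity, by positivity, Bool, Bool × Bool, Bool × Bool, inferInstance,
      inferInstance, inferInstance, inferInstance, inferInstance, inferInstance, pT, a, b, d,
      jointPMF uniformBits uniformBits pT a b d, hT, fun x t => (S t).fst_isPMF x,
      fun x t => (S t).snd_isPMF x, fun u v t => (S t).dec_isPMF u v,
      jointPMF_uniformBits pT a b d, fun t => (S t).sum_eq, info₁.trans_le hR₁, info₂.trans_le hR₂⟩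
end
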